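/- Let s be a positive integer, M a positive integer, and let H₁,…,H_M be mutually independent random s×s matrices, each with i.i.d. standard Gaussian N(0,1) entries. Then the expected condition number of the horizontal block matrix (H₁ | … | H_M) ∈ ℝ^{s×Ms} satisfies E[cond((H₁ | … | H_M))] ≤ (√(Ms) + √s)/(√(Ms) − √s), provided M ≥ 2 (so that the denominator is positive). -/

import Mathlib

/-!
Write `X` for the block matrix, an `s × n` standard Gaussian matrix with `n = M s`, and let
`r = (√n + √s) / (√n - √s) = (√M + 1) / (√M - 1)`. The bound `E cond X ≤ r` is proved separately
for `s = 1`, for `2 ≤ s ≤ 7` and for `s ≥ 8`.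

* `s = 1`: there is one singular value, so `cond X ≤ 1 ≤ r`.

* `2 ≤ s ≤ 7` (`lintegral_condNum_small`). With `W = X Xᵀ`, the Cauchy–Schwarz inequality, with the
  two extreme singular values interchanged in one factor, gives
  `(cond X + 1 / cond X + s - 2)² ≤ tr W tr W⁻¹` (`cond_sq_le`). Stein's identity for the field
  `tr(W) W⁻¹ X` gives `(n - s - 1) E[tr W tr W⁻¹] ≤ s² n`; it is applied to `(W + ε)⁻¹` in place of
  `W⁻¹` (`integral_trace_resol_le`), followed by monotone convergence. The left-hand side of the
  first inequality is bounded below by its tangent line at `cond X = r`, and the resulting bound is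
  at most `r` by `small_numeric`.

* `s ≥ 8` (`lintegral_condNum_large`). The Gaussian comparison inequalities of Slepian and Gordon,
  proved for a smoothed min-max functional by interpolation (`gaussian_comparison`), bound
  `E exp (l σ_max)` and `E exp (-l σ_min)` by products of `E exp (± l |g|)` for standard Gaussian
  vectors `g` of dimensions `n` and `s`, with a factor `exp (-l² / 2)` gained from the auxiliary
  scalar variable (`gordon_max`, `gordon_min`). The moment generating function `f` of `|g|` solves
  `f'' = x f' + d f` in dimension `d`, and comparison with `exp (x² / 4 + ∫ √(c + t² / 4))` for
  suitable `c` bounds it (`mgf_pos_le`, `mgf_neg_le`); the quadratic terms then cancel the factor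
  `exp (-l² / 2)`. Finally `σ_max / σ_min = ∫ σ_max exp (-l σ_min) dl` with
  `σ_max ≤ b exp (σ_max / b - 1)`, and Young's inequality with exponents `4` and `4/3` separates the
  two singular values (`lintegral_div_le`). The remaining integral over `l` is explicit, and the
  result is at most `r` by `numeric_bound`.
-/

open Matrix MeasureTheory ProbabilityTheory Real

/-- The singular values of a real matrix `X` (indexed by the row type),
defined as the square roots of the eigenvalues of `X * Xᵀ`. -/
noncomputable def sVals {m n : Type*} [Fintype m] [DecidableEq m] [Fintype n]
    (X : Matrix m n ℝ) (i : m) : ℝ :=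
  Real.sqrt ((Matrix.isHermitian_mul_conjTranspose_self X).eigenvalues i)

/-- The largest singular value of `X`. -/
noncomputable def sMax {m n : Type*} [Fintype m] [DecidableEq m] [Fintype n]
    (X : Matrix m n ℝ) : ℝ :=
  sSup (Set.range (sVals X))

/-- The smallest singular value of `X`. -/
noncomputable def sMin {m n : Type*} [Fintype m] [DecidableEq m] [Fintype n]
    (X : Matrix m n ℝ) : ℝ :=
  sInf (Set.range (sVals X))

/-- The condition number of `X`: the ratio of its largest to smallest singular value. -/
noncomputable def condNum {m n : Type*} [Fintype m] [DecidableEq m] [Fintype n]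
    (X : Matrix m n ℝ) : ℝ :=
  sMax X / sMin X

/-- The singular values of a matrix with rows indexed by `Fin s`, arranged in
nonincreasing order: `svdSorted X 0` is the largest, `svdSorted X (s-1)` the smallest. -/
noncomputable def svdSorted {s : ℕ} {n : Type*} [Fintype n]
    (X : Matrix (Fin s) n ℝ) (i : Fin s) : ℝ :=
  sVals X (Tuple.sort (sVals X) i.rev)

/-- The multiset of singular values of `X` (with multiplicities). -/
noncomputable def svMultiset {m n : Type*} [Fintype m] [DecidableEq m] [Fintype n]
    (X : Matrix m n ℝ) : Multiset ℝ :=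
  Finset.univ.val.map (sVals X)

/-- Horizontal block concatenation `(C 0 | C 1 | … | C (M-1))` of `M` matrices
with the same number of rows. -/
def blockRow {s d : Type*} (M : ℕ) (C : Fin M → Matrix s d ℝ) :
    Matrix s (Fin M × d) ℝ :=
  Matrix.of fun i p => C p.1 i p.2

/-- The `s × d` matrix with ones on the main diagonal and zeros elsewhere. -/
def Isd (s d : ℕ) : Matrix (Fin s) (Fin d) ℝ :=
  Matrix.of fun i j => if (i : ℕ) = (j : ℕ) then (1 : ℝ) else 0

/-- The chi-squared distribution with `n` degrees of freedom, i.e. the Gamma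
distribution with shape `n/2` and rate `1/2`. -/
noncomputable def chiSqMeasure (n : ℕ) : Measure ℝ :=
  gammaMeasure ((n : ℝ) / 2) (1 / 2)

set_option linter.unusedSectionVars false

/-! ### Gaussian integration by parts -/

/-- The standard Gaussian measure on `ι → ℝ`. -/
noncomputable abbrev stdG (ι : Type*) [Fintype ι] : Measure (ι → ℝ) :=
  Measure.pi fun _ : ι => gaussianReal 0 1

/-- `f` has at most exponential growth in the `ℓ¹` norm. -/
def ExpBdd {ι : Type*} [Fintype ι] (f : (ι → ℝ) → ℝ) : Prop :=
  ∃ C c : ℝ, 0 ≤ C ∧ 0 ≤ c ∧ ∀ x, |f x| ≤ C * Real.exp (c * ∑ a, |x a|)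

namespace ExpBdd

variable {ι : Type*} [Fintype ι] {f g : (ι → ℝ) → ℝ}

lemma sum_abs_nonneg (x : ι → ℝ) : 0 ≤ ∑ a, |x a| :=
  Finset.sum_nonneg fun _ _ => abs_nonneg _

lemma mono (hg : ExpBdd g) (h : ∀ x, |f x| ≤ |g x|) : ExpBdd f := by
  obtain ⟨C, c, hC, hc, H⟩ := hg
  exact ⟨C, c, hC, hc, fun x => (h x).trans (H x)⟩

lemma const (k : ℝ) : ExpBdd (fun _ : ι → ℝ => k) :=
  ⟨|k|, 0, abs_nonneg _, le_rfl, fun x => by simp⟩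

lemma add (hf : ExpBdd f) (hg : ExpBdd g) : ExpBdd (fun x => f x + g x) := by
  obtain ⟨C, c, hC, hc, H⟩ := hf
  obtain ⟨C', c', hC', hc', H'⟩ := hg
  refine ⟨C + C', max c c', by positivity, le_max_of_le_left hc, fun x => ?_⟩
  have h0 := sum_abs_nonneg x
  calc |f x + g x| ≤ |f x| + |g x| := abs_add_le _ _
    _ ≤ C * Real.exp (c * ∑ a, |x a|) + C' * Real.exp (c' * ∑ a, |x a|) := add_le_add (H x) (H' x)
    _ ≤ C * Real.exp (max c c' * ∑ a, |x a|) + C' * Real.exp (max c c' * ∑ a, |x a|) := by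
        gcongr
        · exact le_max_left _ _
        · exact le_max_right _ _
    _ = _ := by ring

lemma mul (hf : ExpBdd f) (hg : ExpBdd g) : ExpBdd (fun x => f x * g x) := by
  obtain ⟨C, c, hC, hc, H⟩ := hf
  obtain ⟨C', c', hC', hc', H'⟩ := hg
  refine ⟨C * C', c + c', by positivity, by positivity, fun x => ?_⟩
  calc |f x * g x| = |f x| * |g x| := abs_mul _ _
    _ ≤ (C * Real.exp (c * ∑ a, |x a|)) * (C' * Real.exp (c' * ∑ a, |x a|)) :=
        mul_le_mul (H x) (H' x) (abs_nonneg _) (by positivity)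
    _ = _ := by rw [add_mul, Real.exp_add]; ring

lemma neg (hf : ExpBdd f) : ExpBdd (fun x => - f x) := hf.mono fun x => by simp

lemma sub (hf : ExpBdd f) (hg : ExpBdd g) : ExpBdd (fun x => f x - g x) := by
  simpa [sub_eq_add_neg] using hf.add hg.neg

lemma sum {κ : Type*} (s : Finset κ) {F : κ → (ι → ℝ) → ℝ} (h : ∀ k ∈ s, ExpBdd (F k)) :
    ExpBdd (fun x => ∑ k ∈ s, F k x) := by
  classical
  induction s using Finset.induction_on with
  | empty => simpa using const (ι := ι) 0
  | insert a s ha ih =>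
    simp only [Finset.sum_insert ha]
    exact (h a (by simp)).add (ih fun k hk => h k (by simp [hk]))

lemma abs_le_exp_sum (x : ι → ℝ) (a : ι) : |x a| ≤ Real.exp (∑ a, |x a|) := by
  have h1 : |x a| ≤ ∑ a, |x a| :=
    Finset.single_le_sum (f := fun a => |x a|) (fun _ _ => abs_nonneg _) (Finset.mem_univ a)
  linarith [Real.add_one_le_exp (∑ a, |x a|)]

lemma coord (a : ι) : ExpBdd (fun x : ι → ℝ => x a) :=
  ⟨1, 1, by simp, by simp, fun x => by simpa using abs_le_exp_sum x a⟩

lemma abs_lin_le (w x : ι → ℝ) : |∑ a, x a * w a| ≤ (∑ a, |w a|) * ∑ a, |x a| := by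
  calc |∑ a, x a * w a| ≤ ∑ a, |x a * w a| := Finset.abs_sum_le_sum_abs _ _
    _ = ∑ a, |x a| * |w a| := by simp [abs_mul]
    _ ≤ ∑ a, |x a| * ∑ b, |w b| := by
        gcongr with a
        exact Finset.single_le_sum (f := fun a => |w a|) (fun _ _ => abs_nonneg _)
          (Finset.mem_univ a)
    _ = _ := by rw [← Finset.sum_mul, mul_comm]

lemma lin (w : ι → ℝ) : ExpBdd (fun x : ι → ℝ => ∑ a, x a * w a) :=
  sum _ fun a _ => (coord a).mul (const _)

lemma exp_of_le {c : ℝ} (hc : 0 ≤ c) (h : ∀ x, f x ≤ c * ∑ a, |x a|) :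
    ExpBdd (fun x => Real.exp (f x)) :=
  ⟨1, c, by simp, hc, fun x => by
    rw [abs_of_pos (Real.exp_pos _), one_mul]; exact Real.exp_le_exp.2 (h x)⟩

lemma exp_lin (k : ℝ) (w : ι → ℝ) :
    ExpBdd (fun x : ι → ℝ => Real.exp (k * ∑ a, x a * w a)) := by
  refine exp_of_le (c := |k| * ∑ a, |w a|) (mul_nonneg (abs_nonneg _) (sum_abs_nonneg _))
    fun x => ?_
  calc k * ∑ a, x a * w a ≤ |k * ∑ a, x a * w a| := le_abs_self _
    _ = |k| * |∑ a, x a * w a| := abs_mul _ _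
    _ ≤ |k| * ((∑ a, |w a|) * ∑ a, |x a|) := by gcongr; exact abs_lin_le w x
    _ = _ := by ring

lemma integrable_exp_abs (c : ℝ) : Integrable (fun t : ℝ => Real.exp (c * |t|))
    (gaussianReal 0 1) := by
  have h := integrable_exp_mul_abs (X := id) (μ := gaussianReal 0 1) (t := c)
    (by simpa using integrable_exp_mul_gaussianReal (μ := 0) (v := 1) c)
    (by simpa using integrable_exp_mul_gaussianReal (μ := 0) (v := 1) (-c))
  simpa using h

lemma integrable_exp_sum (c : ℝ) :
    Integrable (fun x : ι → ℝ => Real.exp (c * ∑ a, |x a|)) (stdG ι) := by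
  have := Integrable.fintype_prod (ι := ι) (𝕜 := ℝ) (μ := fun _ : ι => gaussianReal 0 1)
    (f := fun _ t => Real.exp (c * |t|)) (fun _ => integrable_exp_abs c)
  refine this.congr (Filter.Eventually.of_forall fun x => ?_)
  simp [Finset.mul_sum, Real.exp_sum]

lemma integrable (hf : ExpBdd f) (hm : Measurable f) : Integrable f (stdG ι) := by
  obtain ⟨C, c, hC, hc, H⟩ := hf
  exact ((integrable_exp_sum c).const_mul C).mono' hm.aestronglyMeasurable
    (Filter.Eventually.of_forall fun x => by simpa using H x)

end ExpBdd

/-- Resampling one coordinate preserves a product of probability measures. -/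
lemma measurePreserving_update {ι : Type*} [Fintype ι] [DecidableEq ι] (a : ι) :
    MeasurePreserving (fun p : ℝ × (ι → ℝ) => Function.update p.2 a p.1)
      ((gaussianReal 0 1).prod (stdG ι)) (stdG ι) := by
  have hm : Measurable (fun p : ℝ × (ι → ℝ) => Function.update p.2 a p.1) := by
    refine measurable_pi_iff.2 fun i => ?_
    by_cases h : i = a
    · subst h; simpa using measurable_fst
    · simp only [Function.update_of_ne h]
      exact (measurable_pi_apply i).comp measurable_snd
  refine ⟨hm, ?_⟩
  symm
  refine Measure.pi_eq fun s hs => ?_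
  rw [Measure.map_apply hm (MeasurableSet.univ_pi hs)]
  have : (fun p : ℝ × (ι → ℝ) => Function.update p.2 a p.1) ⁻¹' (Set.univ.pi s)
      = s a ×ˢ (Set.univ.pi (Function.update s a Set.univ)) := by
    ext ⟨t, x⟩
    simp only [Set.mem_preimage, Set.mem_pi, Set.mem_univ, true_imp_iff, Set.mem_prod]
    constructor
    · intro h
      refine ⟨by simpa using h a, fun i => ?_⟩
      by_cases hi : i = a
      · subst hi; simp
      · simpa [Function.update_of_ne hi] using h i
    · rintro ⟨h1, h2⟩ i
      by_cases hi : i = a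
      · subst hi; simpa using h1
      · simpa [Function.update_of_ne hi] using h2 i
  rw [this, Measure.prod_prod, Measure.pi_pi]
  rw [← Finset.mul_prod_erase _ _ (Finset.mem_univ a), ← Finset.mul_prod_erase _ (fun i => gaussianReal 0 1 (s i)) (Finset.mem_univ a)]
  simp only [Function.update_self, measure_univ, one_mul]
  congr 1
  refine Finset.prod_congr rfl fun i hi => ?_
  rw [Function.update_of_ne (Finset.ne_of_mem_erase hi)]

/-- One-dimensional Gaussian integration by parts. -/
lemma gaussian_ibp_one {f f' : ℝ → ℝ} (hd : ∀ t, HasDerivAt f (f' t) t)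
    (h0 : Integrable f (gaussianReal 0 1)) (h1 : Integrable f' (gaussianReal 0 1))
    (h2 : Integrable (fun t => t * f t) (gaussianReal 0 1)) :
    ∫ t, t * f t ∂(gaussianReal 0 1) = ∫ t, f' t ∂(gaussianReal 0 1) := by
  have conv : ∀ {F : ℝ → ℝ}, Integrable F (gaussianReal 0 1) →
      Integrable (fun t => F t * gaussianPDFReal 0 1 t) := by
    intro F hF
    rw [gaussianReal_of_var_ne_zero _ one_ne_zero] at hF
    have := (integrable_withDensity_iff_integrable_smul' (measurable_gaussianPDF 0 1)
      (Filter.Eventually.of_forall fun _ => gaussianPDF_lt_top)).1 hF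
    refine this.congr (Filter.Eventually.of_forall fun x => ?_)
    simp [mul_comm]
  have hg : ∀ t, HasDerivAt (gaussianPDFReal 0 1) (-t * gaussianPDFReal 0 1 t) t := by
    intro t
    have : HasDerivAt (fun x : ℝ => (√(2 * π * 1))⁻¹ * Real.exp (- (x - 0) ^ 2 / (2 * 1)))
        ((√(2 * π * 1))⁻¹ * (Real.exp (- (t - 0) ^ 2 / (2 * 1)) *
          (-(((2:ℕ):ℝ) * (t - 0) ^ (2-1) * 1) / (2*1)))) t := by
      exact (((((hasDerivAt_id t).sub_const 0).pow 2).neg.div_const _).exp).const_mul _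
    rw [gaussianPDFReal_def]
    simp only [NNReal.coe_one]
    convert this using 1
    simp only [Nat.cast_ofNat, Nat.add_one_sub_one, pow_one]
    ring
  rw [integral_gaussianReal_eq_integral_smul one_ne_zero,
    integral_gaussianReal_eq_integral_smul one_ne_zero]
  have := integral_mul_deriv_eq_deriv_mul_of_integrable (u := f) (u' := f')
    (v := gaussianPDFReal 0 1) (v' := fun t => -t * gaussianPDFReal 0 1 t)
    (fun x _ => hd x) (fun x _ => hg x)
    ((conv h2).neg.congr (Filter.Eventually.of_forall fun x => by simp; ring))
    (conv h1) (conv h0)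
  simp only [smul_eq_mul]
  calc _ = - ∫ x, f x * (-x * gaussianPDFReal 0 1 x) := by
        rw [← integral_neg]; congr 1; ext x; ring
    _ = _ := by rw [this, neg_neg]; congr 1; ext x; ring

/-- Gaussian integration by parts in one coordinate of a standard Gaussian vector. -/
lemma gaussian_ibp {ι : Type*} [Fintype ι] [DecidableEq ι] (a : ι) {f f' : (ι → ℝ) → ℝ}
    (hm : Measurable f) (hm' : Measurable f') (hf : ExpBdd f) (hf' : ExpBdd f')
    (hd : ∀ x, HasDerivAt (fun t => f (Function.update x a t)) (f' x) (x a)) :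
    ∫ x, x a * f x ∂(stdG ι) = ∫ x, f' x ∂(stdG ι) := by
  have mp := measurePreserving_update (ι := ι) a
  have hma : Measurable (fun x : ι → ℝ => x a * f x) := (measurable_pi_apply a).mul hm
  have i0 := mp.integrable_comp_of_integrable (hf.integrable hm)
  have i1 := mp.integrable_comp_of_integrable (hf'.integrable hm')
  have i2 := mp.integrable_comp_of_integrable (((ExpBdd.coord a).mul hf).integrable hma)
  simp only [Function.comp_def] at i0 i1 i2
  rw [← mp.map_eq, integral_map mp.measurable.aemeasurable hma.aestronglyMeasurable,
    integral_map mp.measurable.aemeasurable hm'.aestronglyMeasurable,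
    integral_prod_symm _ i2, integral_prod_symm _ i1]
  refine integral_congr_ae ?_
  filter_upwards [i0.prod_left_ae, i1.prod_left_ae, i2.prod_left_ae] with x h0 h1 h2
  simp only [Function.update_self] at h0 h1 h2 ⊢
  refine gaussian_ibp_one (fun t => ?_) h0 h1 h2
  have := hd (Function.update x a t)
  simpa using this

/-! ### The smoothed min-max functional -/

section Comparison

variable {I J : Type*} [Fintype I] [Fintype J] [Nonempty I] [Nonempty J]

/-- The partition function `∑ⱼ exp (β xᵢⱼ)` of row `i`. -/
noncomputable def rowS (β : ℝ) (x : I → J → ℝ) (i : I) : ℝ := ∑ j, Real.exp (β * x i j)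

/-- The sum over rows of the `r`-th powers of the row partition functions. -/
noncomputable def rowG (β r : ℝ) (x : I → J → ℝ) : ℝ := ∑ i, (rowS β x i) ^ r

/-- The smoothed min-max functional `(∑ᵢ (∑ⱼ exp (β xᵢⱼ)) ^ r) ^ p`. With `p = l / β` and `β` large
it is close to `exp (l * maxᵢ maxⱼ xᵢⱼ)` for `r = 1`, and to `exp (-l * minᵢ maxⱼ xᵢⱼ)` for
`r = -1`. -/
noncomputable def softF (β p r : ℝ) (x : I → J → ℝ) : ℝ := (rowG β r x) ^ p

/-- The partial derivative of `softF` in `xᵢⱼ`, divided by `p * r * β`. -/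
noncomputable def softPhi (β p r : ℝ) (x : I → J → ℝ) (i : I) (j : J) : ℝ :=
  (rowG β r x) ^ (p - 1) * ((rowS β x i) ^ (r - 1) * Real.exp (β * x i j))

/-- The derivative of `softPhi` in the direction `c`. -/
noncomputable def softDPhi (β p r : ℝ) (x : I → J → ℝ) (i : I) (j : J) (c : I → J → ℝ) : ℝ :=
  softPhi β p r x i j *
    ((p - 1) * (r * (β * ∑ i', ∑ j',
        (rowS β x i') ^ (r - 1) * Real.exp (β * x i' j') / rowG β r x * c i' j'))
      + (r - 1) * (β * ∑ j', Real.exp (β * x i j') / rowS β x i * c i j') + β * c i j)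

lemma rowS_pos (β : ℝ) (x : I → J → ℝ) (i : I) : 0 < rowS β x i :=
  Finset.sum_pos (fun _ _ => Real.exp_pos _) Finset.univ_nonempty

lemma rowG_pos (β r : ℝ) (x : I → J → ℝ) : 0 < rowG β r x :=
  Finset.sum_pos (fun i _ => Real.rpow_pos_of_pos (rowS_pos β x i) _) Finset.univ_nonempty

lemma softPhi_pos (β p r : ℝ) (x : I → J → ℝ) (i : I) (j : J) : 0 < softPhi β p r x i j :=
  mul_pos (Real.rpow_pos_of_pos (rowG_pos β r x) _)
    (mul_pos (Real.rpow_pos_of_pos (rowS_pos β x i) _) (Real.exp_pos _))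

variable {β p r : ℝ} {x : ℝ → I → J → ℝ} {c : I → J → ℝ} {t : ℝ}

lemma hasDerivAt_rowS (h : ∀ i j, HasDerivAt (fun s => x s i j) (c i j) t) (i : I) :
    HasDerivAt (fun s => rowS β (x s) i) (β * ∑ j, Real.exp (β * x t i j) * c i j) t := by
  unfold rowS
  have := HasDerivAt.fun_sum (u := Finset.univ) fun j _ => ((h i j).const_mul β).exp
  refine this.congr_deriv ?_
  rw [Finset.mul_sum]
  exact Finset.sum_congr rfl fun j _ => by ring

lemma hasDerivAt_rowG (h : ∀ i j, HasDerivAt (fun s => x s i j) (c i j) t) :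
    HasDerivAt (fun s => rowG β r (x s)) (r * (β * ∑ i, ∑ j,
      (rowS β (x t) i) ^ (r - 1) * Real.exp (β * x t i j) * c i j)) t := by
  unfold rowG
  have := HasDerivAt.fun_sum (u := Finset.univ) fun i _ =>
    (hasDerivAt_rowS (β := β) h i).rpow_const (p := r) (Or.inl (rowS_pos β (x t) i).ne')
  refine this.congr_deriv ?_
  simp only [Finset.mul_sum, Finset.sum_mul]
  exact Finset.sum_congr rfl fun i _ => Finset.sum_congr rfl fun j _ => by ring

lemma hasDerivAt_softF (h : ∀ i j, HasDerivAt (fun s => x s i j) (c i j) t) :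
    HasDerivAt (fun s => softF β p r (x s))
      (p * r * β * ∑ i, ∑ j, softPhi β p r (x t) i j * c i j) t := by
  unfold softF
  have := (hasDerivAt_rowG (β := β) (r := r) h).rpow_const (p := p)
    (Or.inl (rowG_pos β r (x t)).ne')
  refine this.congr_deriv ?_
  simp only [Finset.mul_sum, Finset.sum_mul, softPhi]
  exact Finset.sum_congr rfl fun i _ => Finset.sum_congr rfl fun j _ => by ring

lemma hasDerivAt_softPhi (h : ∀ i j, HasDerivAt (fun s => x s i j) (c i j) t) (i : I) (j : J) :
    HasDerivAt (fun s => softPhi β p r (x s) i j) (softDPhi β p r (x t) i j c) t := by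
  have hG := rowG_pos β r (x t)
  have hS := rowS_pos β (x t) i
  have h1 := (hasDerivAt_rowG (β := β) (r := r) h).rpow_const (p := p - 1) (Or.inl hG.ne')
  have h2 := (hasDerivAt_rowS (β := β) h i).rpow_const (p := r - 1) (Or.inl hS.ne')
  have h3 := ((h i j).const_mul β).exp
  have := h1.mul (h2.mul h3)
  unfold softPhi
  refine this.congr_deriv ?_
  simp only [softDPhi, softPhi]
  have e1 : (rowG β r (x t)) ^ (p - 1 - 1) = (rowG β r (x t)) ^ (p - 1) / rowG β r (x t) := by
    rw [Real.rpow_sub_one hG.ne']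
  have e2 : (rowS β (x t) i) ^ (r - 1 - 1) = (rowS β (x t) i) ^ (r - 1) / rowS β (x t) i := by
    rw [Real.rpow_sub_one hS.ne']
  have e3 : (∑ i', ∑ j', (rowS β (x t) i') ^ (r - 1) * Real.exp (β * x t i' j') /
      rowG β r (x t) * c i' j') = (∑ i', ∑ j',
      (rowS β (x t) i') ^ (r - 1) * Real.exp (β * x t i' j') * c i' j') / rowG β r (x t) := by
    simp only [Finset.sum_div]
    exact Finset.sum_congr rfl fun i _ => Finset.sum_congr rfl fun j _ => by ring
  have e4 : (∑ j', Real.exp (β * x t i j') / rowS β (x t) i * c i j')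
      = (∑ j', Real.exp (β * x t i j') * c i j') / rowS β (x t) i := by
    simp only [Finset.sum_div]
    exact Finset.sum_congr rfl fun j _ => by ring
  rw [e1, e2, e3, e4]
  simp only [Pi.mul_apply]
  ring

lemma exp_le_rowS (β : ℝ) (x : I → J → ℝ) (i : I) (j : J) : Real.exp (β * x i j) ≤ rowS β x i :=
  Finset.single_le_sum (f := fun j => Real.exp (β * x i j)) (fun _ _ => (Real.exp_pos _).le)
    (Finset.mem_univ j)

lemma rpow_le_rowG (β r : ℝ) (x : I → J → ℝ) (i : I) : (rowS β x i) ^ r ≤ rowG β r x :=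
  Finset.single_le_sum (f := fun i => (rowS β x i) ^ r)
    (fun i _ => (Real.rpow_pos_of_pos (rowS_pos β x i) _).le) (Finset.mem_univ i)

lemma weight_le (β r : ℝ) (x : I → J → ℝ) (i : I) (j : J) :
    (rowS β x i) ^ (r - 1) * Real.exp (β * x i j) ≤ rowG β r x := by
  have hS := rowS_pos β x i
  calc (rowS β x i) ^ (r - 1) * Real.exp (β * x i j) ≤ (rowS β x i) ^ (r - 1) * rowS β x i := by
        gcongr; exact exp_le_rowS β x i j
    _ = (rowS β x i) ^ r := by rw [Real.rpow_sub_one hS.ne']; field_simp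
    _ ≤ _ := rpow_le_rowG β r x i

lemma softPhi_le (β p r : ℝ) (x : I → J → ℝ) (i : I) (j : J) :
    softPhi β p r x i j ≤ softF β p r x := by
  have hG := rowG_pos β r x
  calc softPhi β p r x i j ≤ (rowG β r x) ^ (p - 1) * rowG β r x := by
        unfold softPhi; gcongr; exact weight_le β r x i j
    _ = _ := by rw [softF, Real.rpow_sub_one hG.ne']; field_simp

lemma softF_le (hp0 : 0 ≤ p) (hp : p ≤ 1) (x : I → J → ℝ) : softF β p r x ≤ 1 + rowG β r x := by
  have hG := rowG_pos β r x
  unfold softF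
  rcases le_total 1 (rowG β r x) with h | h
  · calc _ ≤ (rowG β r x) ^ (1 : ℝ) := Real.rpow_le_rpow_of_exponent_le h hp
      _ ≤ _ := by simp
  · have := Real.rpow_le_one hG.le h hp0
    linarith

lemma abs_softDPhi_le (β p r : ℝ) (x : I → J → ℝ) (i : I) (j : J) (c : I → J → ℝ) :
    |softDPhi β p r x i j c| ≤ softPhi β p r x i j *
      (|p - 1| * (|r| * (|β| * ∑ i', ∑ j', |c i' j'|)) + |r - 1| * (|β| * ∑ j', |c i j'|)
        + |β| * |c i j|) := by
  have hG := rowG_pos β r x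
  unfold softDPhi
  rw [abs_mul, abs_of_pos (softPhi_pos β p r x i j)]
  refine mul_le_mul_of_nonneg_left ?_ (softPhi_pos β p r x i j).le
  refine (abs_add_le _ _).trans (add_le_add ((abs_add_le _ _).trans (add_le_add ?_ ?_)) ?_)
  · rw [abs_mul, abs_mul, abs_mul]
    gcongr
    refine (Finset.abs_sum_le_sum_abs _ _).trans (Finset.sum_le_sum fun i' _ => ?_)
    refine (Finset.abs_sum_le_sum_abs _ _).trans (Finset.sum_le_sum fun j' _ => ?_)
    have h0 : 0 < (rowS β x i') ^ (r - 1) * Real.exp (β * x i' j') / rowG β r x :=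
      div_pos (mul_pos (Real.rpow_pos_of_pos (rowS_pos β x i') _) (Real.exp_pos _)) hG
    rw [abs_mul, abs_of_pos h0]
    exact mul_le_of_le_one_left (abs_nonneg _) ((div_le_one hG).2 (weight_le β r x i' j'))
  · rw [abs_mul, abs_mul]
    gcongr
    refine (Finset.abs_sum_le_sum_abs _ _).trans (Finset.sum_le_sum fun j' _ => ?_)
    have h0 : 0 < Real.exp (β * x i j') / rowS β x i := div_pos (Real.exp_pos _) (rowS_pos β x i)
    rw [abs_mul, abs_of_pos h0]
    exact mul_le_of_le_one_left (abs_nonneg _)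
      ((div_le_one (rowS_pos β x i)).2 (exp_le_rowS β x i j'))
  · rw [abs_mul]

lemma softDPhi_sum {κ : Type*} [Fintype κ] (β p r : ℝ) (x : I → J → ℝ) (i : I) (j : J)
    (d : κ → ℝ) (c : κ → I → J → ℝ) :
    ∑ k, d k * softDPhi β p r x i j (c k) =
      softDPhi β p r x i j (fun i' j' => ∑ k, d k * c k i' j') := by
  unfold softDPhi
  simp only [mul_add, Finset.sum_add_distrib, Finset.mul_sum]
  congr 1
  · congr 1
    · rw [Finset.sum_comm]
      refine Finset.sum_congr rfl fun i' _ => ?_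
      rw [Finset.sum_comm]
      exact Finset.sum_congr rfl fun j' _ => Finset.sum_congr rfl fun k _ => by ring
    · rw [Finset.sum_comm]
      exact Finset.sum_congr rfl fun j' _ => Finset.sum_congr rfl fun k _ => by ring
  · exact Finset.sum_congr rfl fun k _ => by ring

/-- The sign that drives the comparison: directions `c ≥ 0` that do not move row `i` decrease
the partial derivatives in row `i`, because `p ≤ 1`. -/
lemma softDPhi_nonpos (hβ : 0 ≤ β) (hp : p ≤ 1) (x : I → J → ℝ) (i : I) (j : J)
    (c : I → J → ℝ) (hc : ∀ i' j', 0 ≤ c i' j') (hci : ∀ j', c i j' = 0) :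
    r * softDPhi β p r x i j c ≤ 0 := by
  unfold softDPhi
  have hG := rowG_pos β r x
  simp only [hci, mul_zero, Finset.sum_const_zero, add_zero]
  have h1 : 0 ≤ ∑ i', ∑ j', (rowS β x i') ^ (r - 1) * Real.exp (β * x i' j') / rowG β r x *
      c i' j' := by
    refine Finset.sum_nonneg fun i' _ => Finset.sum_nonneg fun j' _ => ?_
    exact mul_nonneg (div_pos (mul_pos (Real.rpow_pos_of_pos (rowS_pos β x i') _)
      (Real.exp_pos _)) hG).le (hc _ _)
  have h2 := softPhi_pos β p r x i j
  have h3 : 0 ≤ (1 - p) * (r ^ 2 * (β * (softPhi β p r x i j *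
      ∑ i', ∑ j', (rowS β x i') ^ (r - 1) * Real.exp (β * x i' j') / rowG β r x *
      c i' j'))) := by
    have : 0 ≤ 1 - p := by linarith
    positivity
  nlinarith [h3]

end Comparison

/-! ### Gaussian comparison -/

section Comparison2

variable {I J : Type*} [Fintype I] [Fintype J] [Nonempty I] [Nonempty J]
  {ι : Type*} [Fintype ι] {β p r : ℝ}

/-- The Gaussian process `ξ ↦ ⟨ξ, eᵢⱼ⟩` with coefficient vectors `eᵢⱼ`. -/
def procX (e : I → J → ι → ℝ) (ξ : ι → ℝ) (i : I) (j : J) : ℝ := ∑ k, ξ k * e i j k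

/-- Crude bound used only for integrability. -/
lemma rowG_le (hr : r = 1 ∨ r = -1) (hβ : 0 ≤ β) {x : I → J → ℝ} {y : ℝ}
    (h : ∀ i j, |x i j| ≤ y) :
    rowG β r x ≤ Fintype.card I * (Fintype.card J * Real.exp (β * y)) := by
  have key : ∀ i, (rowS β x i) ^ r ≤ Fintype.card J * Real.exp (β * y) := by
    intro i
    rcases hr with rfl | rfl
    · rw [Real.rpow_one]
      calc rowS β x i ≤ ∑ _j : J, Real.exp (β * y) := by
            refine Finset.sum_le_sum fun j _ => Real.exp_le_exp.2 ?_
            exact mul_le_mul_of_nonneg_left ((le_abs_self _).trans (h i j)) hβ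
        _ = _ := by simp
    · rw [Real.rpow_neg_one]
      obtain ⟨j⟩ := ‹Nonempty J›
      have h1 : Real.exp (-(β * y)) ≤ rowS β x i := by
        refine le_trans (Real.exp_le_exp.2 ?_) (exp_le_rowS β x i j)
        nlinarith [(abs_le.1 (h i j)).1]
      calc (rowS β x i)⁻¹ ≤ (Real.exp (-(β * y)))⁻¹ := inv_anti₀ (Real.exp_pos _) h1
        _ = 1 * Real.exp (β * y) := by rw [Real.exp_neg, inv_inv, one_mul]
        _ ≤ _ := by
          gcongr
          exact_mod_cast Fintype.card_pos
  calc rowG β r x ≤ ∑ _i : I, Fintype.card J * Real.exp (β * y) :=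
        Finset.sum_le_sum fun i _ => key i
    _ = _ := by simp

lemma continuous_procX (e : I → J → ι → ℝ) (i : I) (j : J) :
    Continuous fun ξ => procX e ξ i j := by
  unfold procX; fun_prop

lemma continuous_rowS {T : Type*} [TopologicalSpace T] {x : T → I → J → ℝ}
    (h : ∀ i j, Continuous fun s => x s i j) (i : I) : Continuous fun s => rowS β (x s) i := by
  unfold rowS
  exact continuous_finsetSum _ fun j _ => Real.continuous_exp.comp (continuous_const.mul (h i j))

lemma continuous_rowG {T : Type*} [TopologicalSpace T] {x : T → I → J → ℝ}
    (h : ∀ i j, Continuous fun s => x s i j) : Continuous fun s => rowG β r (x s) := by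
  unfold rowG
  exact continuous_finsetSum _ fun i _ => (continuous_rowS h i).rpow_const
    fun s => Or.inl (rowS_pos β (x s) i).ne'

lemma continuous_softF {T : Type*} [TopologicalSpace T] {x : T → I → J → ℝ}
    (h : ∀ i j, Continuous fun s => x s i j) : Continuous fun s => softF β p r (x s) := by
  unfold softF
  exact (continuous_rowG h).rpow_const fun s => Or.inl (rowG_pos β r (x s)).ne'

lemma continuous_softPhi {T : Type*} [TopologicalSpace T] {x : T → I → J → ℝ}
    (h : ∀ i j, Continuous fun s => x s i j) (i : I) (j : J) :
    Continuous fun s => softPhi β p r (x s) i j := by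
  unfold softPhi
  exact ((continuous_rowG h).rpow_const fun s => Or.inl (rowG_pos β r (x s)).ne').mul
    (((continuous_rowS h i).rpow_const fun s => Or.inl (rowS_pos β (x s) i).ne').mul
      (Real.continuous_exp.comp (continuous_const.mul (h i j))))

lemma continuous_softDPhi {T : Type*} [TopologicalSpace T] {x : T → I → J → ℝ}
    (h : ∀ i j, Continuous fun s => x s i j) (i : I) (j : J) (c : I → J → ℝ) :
    Continuous fun s => softDPhi β p r (x s) i j c := by
  unfold softDPhi
  refine (continuous_softPhi h i j).mul (((continuous_const.mul (continuous_const.mul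
    (continuous_const.mul (continuous_finsetSum _ fun i' _ => continuous_finsetSum _ fun j' _ =>
      ((((((continuous_rowS h i').rpow_const fun s => Or.inl (rowS_pos β (x s) i').ne').mul
        (Real.continuous_exp.comp (continuous_const.mul (h i' j')))).div (continuous_rowG h)
          fun s => (rowG_pos β r (x s)).ne').mul continuous_const)))))).add
    (continuous_const.mul (continuous_const.mul (continuous_finsetSum _ fun j' _ =>
      (((Real.continuous_exp.comp (continuous_const.mul (h i j'))).div (continuous_rowS h i)
          fun s => (rowS_pos β (x s) i).ne').mul continuous_const))))).add continuous_const)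

lemma abs_procX_le {e : I → J → ι → ℝ} {L : ℝ} (hL : ∀ i j, ∑ k, |e i j k| ≤ L) (ξ : ι → ℝ)
    (i : I) (j : J) : |procX e ξ i j| ≤ L * ∑ k, |ξ k| :=
  (ExpBdd.abs_lin_le (e i j) ξ).trans
    (mul_le_mul_of_nonneg_right (hL i j) (ExpBdd.sum_abs_nonneg ξ))

lemma softF_procX_le (hr : r = 1 ∨ r = -1) (hβ : 0 ≤ β) (hp0 : 0 ≤ p) (hp : p ≤ 1)
    {e : I → J → ι → ℝ} {L : ℝ} (hL : ∀ i j, ∑ k, |e i j k| ≤ L) (ξ : ι → ℝ) :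
    softF β p r (procX e ξ) ≤
      1 + Fintype.card I * (Fintype.card J * Real.exp (β * (L * ∑ k, |ξ k|))) :=
  (softF_le hp0 hp _).trans (add_le_add_right (rowG_le hr hβ (abs_procX_le hL ξ)) _)

lemma expBdd_bound (hβ : 0 ≤ β) {L : ℝ} (hL : 0 ≤ L) : ExpBdd fun ξ : ι → ℝ =>
    1 + Fintype.card I * (Fintype.card J * Real.exp (β * (L * ∑ k, |ξ k|))) :=
  (ExpBdd.const 1).add ((ExpBdd.const _).mul ((ExpBdd.const _).mul
    (ExpBdd.exp_of_le (c := β * L) (mul_nonneg hβ hL) fun x => le_of_eq (by ring))))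

lemma exists_L (e : I → J → ι → ℝ) : ∃ L, 0 ≤ L ∧ ∀ i j, ∑ k, |e i j k| ≤ L := by
  refine ⟨∑ i, ∑ j, ∑ k, |e i j k|, by positivity, fun i j => ?_⟩
  refine le_trans ?_ (Finset.single_le_sum (f := fun i => ∑ j, ∑ k, |e i j k|)
    (fun i _ => by positivity) (Finset.mem_univ i))
  exact Finset.single_le_sum (f := fun j => ∑ k, |e i j k|)
    (fun i _ => by positivity) (Finset.mem_univ j)

lemma expBdd_softF (hr : r = 1 ∨ r = -1) (hβ : 0 ≤ β) (hp0 : 0 ≤ p) (hp : p ≤ 1)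
    (e : I → J → ι → ℝ) : ExpBdd fun ξ => softF β p r (procX e ξ) := by
  obtain ⟨L, hL0, hL⟩ := exists_L e
  refine (expBdd_bound (I := I) (J := J) hβ hL0).mono fun ξ => ?_
  have h : 0 < softF β p r (procX e ξ) := Real.rpow_pos_of_pos (rowG_pos β r _) _
  rw [abs_of_pos h]
  exact (softF_procX_le hr hβ hp0 hp hL ξ).trans (le_abs_self _)

lemma expBdd_softPhi (hr : r = 1 ∨ r = -1) (hβ : 0 ≤ β) (hp0 : 0 ≤ p) (hp : p ≤ 1)
    (e : I → J → ι → ℝ) (i : I) (j : J) : ExpBdd fun ξ => softPhi β p r (procX e ξ) i j :=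
  (expBdd_softF hr hβ hp0 hp e).mono fun ξ => by
    rw [abs_of_pos (softPhi_pos β p r _ i j)]
    exact (softPhi_le β p r _ i j).trans (le_abs_self _)

lemma expBdd_softDPhi (hr : r = 1 ∨ r = -1) (hβ : 0 ≤ β) (hp0 : 0 ≤ p) (hp : p ≤ 1)
    (e : I → J → ι → ℝ) (i : I) (j : J) (c : I → J → ℝ) :
    ExpBdd fun ξ => softDPhi β p r (procX e ξ) i j c :=
  ((expBdd_softPhi hr hβ hp0 hp e i j).mul (ExpBdd.const _)).mono fun ξ =>
    (abs_softDPhi_le β p r _ i j c).trans (le_abs_self _)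

/-- Gaussian comparison (Gordon, Slepian) for the smoothed min-max functional: if the covariances
of the process `a` dominate those of the process `b`, with equality inside each row, then the
expectation of `softF` along `a` is at most that along `b`. -/
theorem gaussian_comparison [DecidableEq ι] (hr : r = 1 ∨ r = -1) (hβ : 0 ≤ β) (hp0 : 0 ≤ p)
    (hp : p ≤ 1) (a b : I → J → ι → ℝ) (hab : ∀ i j i' j', ∑ k, a i j k * b i' j' k = 0)
    (hK : ∀ i j i' j', ∑ k, b i j k * b i' j' k ≤ ∑ k, a i j k * a i' j' k)
    (hK0 : ∀ i j j', ∑ k, b i j k * b i j' k = ∑ k, a i j k * a i j' k) :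
    ∫ ξ, softF β p r (procX a ξ) ∂(stdG ι) ≤ ∫ ξ, softF β p r (procX b ξ) ∂(stdG ι) := by
  let e : ℝ → I → J → ι → ℝ := fun θ i j k => Real.cos θ * b i j k + Real.sin θ * a i j k
  let d : ℝ → I → J → ι → ℝ := fun θ i j k => -Real.sin θ * b i j k + Real.cos θ * a i j k
  obtain ⟨La, hLa0, hLa⟩ := exists_L a
  obtain ⟨Lb, hLb0, hLb⟩ := exists_L b
  have hLe : ∀ θ i j, ∑ k, |e θ i j k| ≤ Lb + La := by
    intro θ i j
    calc ∑ k, |e θ i j k| ≤ ∑ k, (|b i j k| + |a i j k|) := by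
          refine Finset.sum_le_sum fun k _ => (abs_add_le _ _).trans (add_le_add ?_ ?_)
          · rw [abs_mul]; exact mul_le_of_le_one_left (abs_nonneg _) (Real.abs_cos_le_one θ)
          · rw [abs_mul]; exact mul_le_of_le_one_left (abs_nonneg _) (Real.abs_sin_le_one θ)
      _ ≤ _ := by rw [Finset.sum_add_distrib]; exact add_le_add (hLb i j) (hLa i j)
  have hLd : ∀ θ i j, ∑ k, |d θ i j k| ≤ Lb + La := by
    intro θ i j
    calc ∑ k, |d θ i j k| ≤ ∑ k, (|b i j k| + |a i j k|) := by
          refine Finset.sum_le_sum fun k _ => (abs_add_le _ _).trans (add_le_add ?_ ?_)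
          · rw [abs_mul, abs_neg]
            exact mul_le_of_le_one_left (abs_nonneg _) (Real.abs_sin_le_one θ)
          · rw [abs_mul]; exact mul_le_of_le_one_left (abs_nonneg _) (Real.abs_cos_le_one θ)
      _ ≤ _ := by rw [Finset.sum_add_distrib]; exact add_le_add (hLb i j) (hLa i j)
  have hL0 : 0 ≤ Lb + La := by positivity
  let H : ℝ → ℝ := fun θ => ∫ ξ, softF β p r (procX (e θ) ξ) ∂(stdG ι)
  let H' : ℝ → ℝ := fun θ => ∫ ξ, p * r * β * ∑ i, ∑ j,
    softPhi β p r (procX (e θ) ξ) i j * procX (d θ) ξ i j ∂(stdG ι)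
  let bd : (ι → ℝ) → ℝ := fun ξ =>
    1 + Fintype.card I * (Fintype.card J * Real.exp (β * ((Lb + La) * ∑ k, |ξ k|)))
  have hbd : ExpBdd bd := expBdd_bound hβ hL0
  have hbdm : Measurable bd := by
    have : Continuous bd := by fun_prop
    exact this.measurable
  have hder : ∀ θ, HasDerivAt H (H' θ) θ := by
    intro θ
    refine (hasDerivAt_integral_of_dominated_loc_of_deriv_le (μ := stdG ι)
      (F := fun θ ξ => softF β p r (procX (e θ) ξ))
      (F' := fun θ ξ => p * r * β * ∑ i, ∑ j,
        softPhi β p r (procX (e θ) ξ) i j * procX (d θ) ξ i j)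
      (bound := fun ξ => |p * r * β| * ∑ _i : I, ∑ _j : J,
        bd ξ * ((Lb + La) * ∑ k, |ξ k|)) (s := Set.univ) Filter.univ_mem ?_ ?_ ?_ ?_ ?_ ?_).2
    · exact Filter.Eventually.of_forall fun θ =>
        (continuous_softF fun i j => continuous_procX _ i j).aestronglyMeasurable
    · exact (expBdd_softF hr hβ hp0 hp _).integrable
        (continuous_softF fun i j => continuous_procX _ i j).measurable
    · refine Continuous.aestronglyMeasurable ?_
      exact continuous_const.mul (continuous_finsetSum _ fun i _ => continuous_finsetSum _
        fun j _ => (continuous_softPhi (fun i j => continuous_procX _ i j) i j).mul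
          (continuous_procX _ i j))
    · refine Filter.Eventually.of_forall fun ξ θ _ => ?_
      rw [Real.norm_eq_abs, abs_mul]
      gcongr
      refine (Finset.abs_sum_le_sum_abs _ _).trans (Finset.sum_le_sum fun i _ => ?_)
      refine (Finset.abs_sum_le_sum_abs _ _).trans (Finset.sum_le_sum fun j _ => ?_)
      rw [abs_mul, abs_of_pos (softPhi_pos β p r _ i j)]
      exact mul_le_mul ((softPhi_le β p r _ i j).trans (softF_procX_le hr hβ hp0 hp (hLe θ) ξ))
        (abs_procX_le (hLd θ) ξ i j) (abs_nonneg _) (by positivity)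
    · refine ExpBdd.integrable ?_ ?_
      · refine (ExpBdd.const _).mul (ExpBdd.sum _ fun i _ => ExpBdd.sum _ fun j _ =>
          hbd.mul ((ExpBdd.const _).mul (ExpBdd.sum _ fun k _ =>
            (ExpBdd.coord k).mono fun x => by simp)))
      · have : Continuous bd := by fun_prop
        fun_prop
    · refine Filter.Eventually.of_forall fun ξ θ _ => ?_
      refine hasDerivAt_softF fun i j => ?_
      unfold procX
      refine HasDerivAt.fun_sum fun k _ => HasDerivAt.const_mul _ ?_
      exact ((Real.hasDerivAt_cos θ).mul_const _).add ((Real.hasDerivAt_sin θ).mul_const _)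
  have hH' : ∀ θ ∈ Set.Icc 0 (π / 2), H' θ ≤ 0 := by
    intro θ hθ
    have hcs : 0 ≤ Real.cos θ * Real.sin θ :=
      mul_nonneg (Real.cos_nonneg_of_mem_Icc ⟨by linarith [hθ.1, Real.pi_pos], hθ.2⟩)
        (Real.sin_nonneg_of_mem_Icc ⟨hθ.1, by linarith [hθ.2, Real.pi_pos]⟩)
    have mPhi : ∀ i j, Measurable fun ξ => softPhi β p r (procX (e θ) ξ) i j := fun i j =>
      (continuous_softPhi (fun i j => continuous_procX _ i j) i j).measurable
    have mD : ∀ i j c, Measurable fun ξ => softDPhi β p r (procX (e θ) ξ) i j c := fun i j c =>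
      (continuous_softDPhi (fun i j => continuous_procX _ i j) i j c).measurable
    have iPhi : ∀ i j k, Integrable (fun ξ : ι → ℝ => ξ k * softPhi β p r (procX (e θ) ξ) i j)
        (stdG ι) := fun i j k =>
      ((ExpBdd.coord k).mul (expBdd_softPhi hr hβ hp0 hp _ i j)).integrable
        ((measurable_pi_apply k).mul (mPhi i j))
    have iD : ∀ i j c, Integrable (fun ξ : ι → ℝ => softDPhi β p r (procX (e θ) ξ) i j c)
        (stdG ι) := fun i j c =>
      (expBdd_softDPhi hr hβ hp0 hp _ i j c).integrable (mD i j c)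
    have ibp : ∀ i j, ∫ ξ, softPhi β p r (procX (e θ) ξ) i j * procX (d θ) ξ i j ∂(stdG ι) =
        ∫ ξ, softDPhi β p r (procX (e θ) ξ) i j
          (fun i' j' => ∑ k, d θ i j k * e θ i' j' k) ∂(stdG ι) := by
      intro i j
      have h1 : ∀ ξ, softPhi β p r (procX (e θ) ξ) i j * procX (d θ) ξ i j =
          ∑ k, d θ i j k * (ξ k * softPhi β p r (procX (e θ) ξ) i j) := by
        intro ξ
        simp only [procX, Finset.mul_sum]
        exact Finset.sum_congr rfl fun k _ => by ring
      simp only [h1, ← softDPhi_sum β p r _ i j (d θ i j) (fun k i' j' => e θ i' j' k)]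
      rw [integral_finsetSum _ fun k _ => (iPhi i j k).const_mul _,
        integral_finsetSum _ fun k _ => (iD i j _).const_mul _]
      refine Finset.sum_congr rfl fun k _ => ?_
      rw [integral_const_mul, integral_const_mul]
      congr 1
      refine gaussian_ibp k (mPhi i j) (mD i j _) (expBdd_softPhi hr hβ hp0 hp _ i j)
        (expBdd_softDPhi hr hβ hp0 hp _ i j _) fun ξ => ?_
      have := hasDerivAt_softPhi (β := β) (p := p) (r := r) (t := ξ k)
        (x := fun t => procX (e θ) (Function.update ξ k t))
        (c := fun i' j' => e θ i' j' k) (fun i' j' => ?_) i j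
      · simpa using this
      · unfold procX
        have h2 : ∀ l ∈ (Finset.univ : Finset ι), HasDerivAt
            (fun t => Function.update ξ k t l * e θ i' j' l)
            (if l = k then e θ i' j' l else 0) (ξ k) := by
          intro l _
          by_cases hl : l = k
          · subst hl
            simpa using (hasDerivAt_id (ξ l)).mul_const (e θ i' j' l)
          · simpa [hl, Function.update_of_ne hl] using
              hasDerivAt_const (ξ k) (ξ l * e θ i' j' l)
        have := HasDerivAt.fun_sum h2
        simpa using this
    have iPD : ∀ i j, Integrable (fun ξ => softPhi β p r (procX (e θ) ξ) i j *
        procX (d θ) ξ i j) (stdG ι) := fun i j =>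
      ((expBdd_softPhi hr hβ hp0 hp _ i j).mul (ExpBdd.lin _)).integrable
        ((mPhi i j).mul (continuous_procX _ i j).measurable)
    have hcov : ∀ i j i' j', ∑ k, d θ i j k * e θ i' j' k = Real.cos θ * Real.sin θ *
        (∑ k, a i j k * a i' j' k - ∑ k, b i j k * b i' j' k) := by
      intro i j i' j'
      have h1 : ∀ k, d θ i j k * e θ i' j' k =
          Real.cos θ * Real.sin θ * (a i j k * a i' j' k)
          - Real.cos θ * Real.sin θ * (b i j k * b i' j' k)
          + Real.cos θ ^ 2 * (a i j k * b i' j' k) - Real.sin θ ^ 2 * (a i' j' k * b i j k) := by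
        intro k; simp only [d, e]; ring
      simp only [h1, Finset.sum_add_distrib, Finset.sum_sub_distrib, ← Finset.mul_sum, hab]
      ring
    have hsum : H' θ = ∑ i, ∑ j, p * β * ∫ ξ, r * softDPhi β p r (procX (e θ) ξ) i j
          (fun i' j' => ∑ k, d θ i j k * e θ i' j' k) ∂(stdG ι) := by
      simp only [H']
      rw [integral_const_mul, integral_finsetSum _ fun i _ => integrable_finsetSum _
        fun j _ => iPD i j, Finset.mul_sum]
      refine Finset.sum_congr rfl fun i _ => ?_
      rw [integral_finsetSum _ fun j _ => iPD i j, Finset.mul_sum]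
      refine Finset.sum_congr rfl fun j _ => ?_
      rw [ibp, integral_const_mul]
      ring
    rw [hsum]
    refine Finset.sum_nonpos fun i _ => Finset.sum_nonpos fun j _ => ?_
    refine mul_nonpos_of_nonneg_of_nonpos (mul_nonneg hp0 hβ) (integral_nonpos fun ξ => ?_)
    simp only [hcov]
    refine softDPhi_nonpos hβ hp _ i j _ (fun i' j' => ?_) (fun j' => ?_)
    · exact mul_nonneg hcs (sub_nonneg.2 (hK i j i' j'))
    · rw [hK0 i j j', sub_self, mul_zero]
  have hanti : AntitoneOn H (Set.Icc 0 (π / 2)) := by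
    refine antitoneOn_of_deriv_nonpos (convex_Icc _ _)
      (fun θ _ => (hder θ).continuousAt.continuousWithinAt)
      (fun θ _ => (hder θ).differentiableAt.differentiableWithinAt) fun θ hθ => ?_
    rw [(hder θ).deriv]
    exact hH' θ (interior_subset hθ)
  have hfin := hanti (Set.left_mem_Icc.2 (by positivity)) (Set.right_mem_Icc.2 (by positivity))
    (by positivity : (0:ℝ) ≤ π / 2)
  simpa [H, e] using hfin

end Comparison2

/-! ### Comparison for the bilinear process `uᵀ X v` -/

/-- The Euclidean norm of a finite real family. -/
noncomputable def l2 {N : Type*} [Fintype N] (x : N → ℝ) : ℝ := √(∑ a, x a ^ 2)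

section l2

variable {N : Type*} [Fintype N]

lemma l2_nonneg (x : N → ℝ) : 0 ≤ l2 x := Real.sqrt_nonneg _

lemma l2_sq (x : N → ℝ) : l2 x ^ 2 = ∑ a, x a ^ 2 :=
  Real.sq_sqrt (Finset.sum_nonneg fun _ _ => sq_nonneg _)

@[fun_prop]
lemma continuous_l2 : Continuous (l2 : (N → ℝ) → ℝ) := by unfold l2; fun_prop

lemma l2_le_sum_abs (x : N → ℝ) : l2 x ≤ ∑ a, |x a| := by
  refine Real.sqrt_le_iff.2 ⟨by positivity, ?_⟩
  have h := Finset.sum_sq_le_sq_sum_of_nonneg (s := Finset.univ) (f := fun a => |x a|)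
    (fun _ _ => abs_nonneg _)
  simpa using h

lemma abs_dot_le (x v : N → ℝ) (hv : ∑ a, v a ^ 2 = 1) : |∑ a, x a * v a| ≤ l2 x := by
  refine Real.abs_le_sqrt ?_
  have := Finset.sum_mul_sq_le_sq_mul_sq Finset.univ x v
  rwa [hv, mul_one] at this

lemma dot_le (x v : N → ℝ) (hv : ∑ a, v a ^ 2 = 1) : ∑ a, x a * v a ≤ l2 x :=
  (le_abs_self _).trans (abs_dot_le x v hv)

lemma l2_eq_dot [Nonempty N] (x : N → ℝ) : ∃ w : N → ℝ, ∑ a, w a ^ 2 = 1 ∧ ∑ a, x a * w a = l2 x := by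
  classical
  by_cases h : l2 x = 0
  · obtain ⟨a⟩ := ‹Nonempty N›
    refine ⟨Pi.single a 1, ?_, ?_⟩
    · simp [Pi.single_apply]
    · have h2 := l2_sq x
      rw [h] at h2
      have := (Finset.sum_eq_zero_iff_of_nonneg (fun a _ => sq_nonneg (x a))).1
        (h2.symm.trans (by norm_num)) a (Finset.mem_univ a)
      simp [Pi.single_apply, h, pow_eq_zero_iff] at this ⊢
      exact this
  · refine ⟨fun a => x a / l2 x, ?_, ?_⟩
    · simp_rw [div_pow]
      rw [← Finset.sum_div, ← l2_sq, div_self (pow_ne_zero 2 h)]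
    · have : ∀ a, x a * (x a / l2 x) = x a ^ 2 / l2 x := fun a => by ring
      simp_rw [this]
      rw [← Finset.sum_div, ← l2_sq, sq, mul_div_assoc, div_self h, mul_one]

lemma expBdd_exp_l2 (c : ℝ) : ExpBdd fun x : N → ℝ => Real.exp (c * l2 x) :=
  ExpBdd.exp_of_le (abs_nonneg c) fun x =>
    (mul_le_mul_of_nonneg_right (le_abs_self c) (l2_nonneg x)).trans
      (mul_le_mul_of_nonneg_left (l2_le_sum_abs x) (abs_nonneg c))

/-- A dense sequence in the unit sphere. -/
lemma exists_dense_sphere (N : Type*) [Fintype N] [Nonempty N] :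
    ∃ v : ℕ → N → ℝ, (∀ j, ∑ a, v j a ^ 2 = 1) ∧
      ∀ w : N → ℝ, ∑ a, w a ^ 2 = 1 → ∀ U : Set (N → ℝ), IsOpen U → w ∈ U → ∃ j, v j ∈ U := by
  obtain ⟨w0, hw0, -⟩ := l2_eq_dot (0 : N → ℝ)
  have : Nonempty {w : N → ℝ // ∑ a, w a ^ 2 = 1} := ⟨⟨w0, hw0⟩⟩
  refine ⟨fun j => (TopologicalSpace.denseSeq {w : N → ℝ // ∑ a, w a ^ 2 = 1} j).1,
    fun j => (TopologicalSpace.denseSeq {w : N → ℝ // ∑ a, w a ^ 2 = 1} j).2, ?_⟩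
  intro w hw U hU hwU
  obtain ⟨j, hj⟩ := (TopologicalSpace.denseRange_denseSeq
    {w : N → ℝ // ∑ a, w a ^ 2 = 1}).exists_mem_open
    (hU.preimage continuous_subtype_val) ⟨⟨w, hw⟩, hwU⟩
  exact ⟨j, hj⟩

end l2

section Gordon

lemma integral_stdG_sum {A B : Type*} [Fintype A] [Fintype B] (f : (A → ℝ) → ℝ)
    (g : (B → ℝ) → ℝ) :
    ∫ ξ, f (fun a => ξ (Sum.inl a)) * g (fun b => ξ (Sum.inr b)) ∂(stdG (A ⊕ B)) =
      (∫ x, f x ∂(stdG A)) * ∫ y, g y ∂(stdG B) := by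
  have h := measurePreserving_sumPiEquivProdPi (fun _ : A ⊕ B => gaussianReal 0 1)
  rw [← integral_prod_mul, ← h.integral_comp' (fun z : (A → ℝ) × (B → ℝ) => f z.1 * g z.2)]
  rfl

lemma integral_exp_unit (l : ℝ) :
    ∫ x : Unit → ℝ, Real.exp (l * x ()) ∂(stdG Unit) = Real.exp (l ^ 2 / 2) := by
  have h := measurePreserving_eval (fun _ : Unit => gaussianReal 0 1) ()
  have h2 := h.integral_comp (f := fun x : Unit → ℝ => x ()) 
    (MeasurableEquiv.funUnique Unit ℝ).measurableEmbedding (fun t => Real.exp (l * t))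
  have h3 := mgf_gaussianReal (p := gaussianReal 0 1) (X := id) (μ := 0) (v := 1)
    (Measure.map_id) l
  simp [mgf] at h3
  rw [← h3, ← h2]

variable {I J S N : Type*} [Fintype I] [Fintype J] [Fintype S] [Fintype N]
  [Nonempty I] [Nonempty J]

lemma softF_add {β p r l : ℝ} (h : β * p = l) (x : I → J → ℝ) (c : ℝ) :
    softF β p r (fun i j => x i j + c) = softF β p r x * Real.exp (r * l * c) := by
  have h1 : ∀ i, rowS β (fun i j => x i j + c) i = rowS β x i * Real.exp (β * c) := by
    intro i
    simp only [rowS, mul_add, Real.exp_add, Finset.sum_mul]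
  have h2 : rowG β r (fun i j => x i j + c) = rowG β r x * Real.exp (β * c) ^ r := by
    simp only [rowG, h1, Finset.sum_mul]
    exact Finset.sum_congr rfl fun i _ => Real.mul_rpow (rowS_pos _ _ _).le (Real.exp_pos _).le
  unfold softF
  rw [h2, Real.mul_rpow (rowG_pos _ _ _).le (by positivity), ← Real.exp_mul, ← Real.exp_mul, ← h]
  congr 2; ring

/-- The matrix process `uᵢᵀ X vⱼ`. -/
def bil (u : I → S → ℝ) (v : J → N → ℝ) (X : S × N → ℝ) (i : I) (j : J) : ℝ :=
  ∑ q, X q * (u i q.1 * v j q.2)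

/-- Comparison of the process `uᵢᵀ X vⱼ + γ` with the decoupled process `⟨g, vⱼ⟩ + ⟨h, uᵢ⟩`. -/
lemma gordon_soft {β p r l : ℝ} (hr : r = 1 ∨ r = -1) (hβ : 0 ≤ β) (hp0 : 0 ≤ p)
    (hp : p ≤ 1) (hl : β * p = l) (u : I → S → ℝ) (v : J → N → ℝ)
    (hu : ∀ i, ∑ a, u i a ^ 2 = 1) (hv : ∀ j, ∑ a, v j a ^ 2 = 1)
    {F : (N → ℝ) → ℝ} {G : (S → ℝ) → ℝ} (hF : ExpBdd F) (hG : ExpBdd G)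
    (hFm : Measurable F) (hGm : Measurable G)
    (hFG : ∀ g h, softF β p r (fun i j => (∑ a, g a * v j a) + ∑ a, h a * u i a) ≤ F g * G h) :
    ∫ X, softF β p r (bil u v X) ∂(stdG (S × N)) ≤
      Real.exp (-(l ^ 2 / 2)) * ((∫ g, F g ∂(stdG N)) * ∫ h, G h ∂(stdG S)) := by
  classical
  let a : I → J → ((S × N) ⊕ Unit) ⊕ (N ⊕ S) → ℝ := fun i j =>
    Sum.elim (Sum.elim (fun q => u i q.1 * v j q.2) (fun _ => 1)) (fun _ => 0)
  let b : I → J → ((S × N) ⊕ Unit) ⊕ (N ⊕ S) → ℝ := fun i j =>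
    Sum.elim (fun _ => 0) (Sum.elim (v j) (u i))
  have haa : ∀ i j i' j', ∑ k, a i j k * a i' j' k =
      (∑ k, u i k * u i' k) * (∑ k, v j k * v j' k) + 1 := by
    intro i j i' j'
    simp only [a, Fintype.sum_sum_type, Sum.elim_inl, Sum.elim_inr, Fintype.sum_prod_type,
      Finset.sum_mul_sum]
    simp only [mul_mul_mul_comm]
    simp
  have hbb : ∀ i j i' j', ∑ k, b i j k * b i' j' k =
      (∑ k, v j k * v j' k) + ∑ k, u i k * u i' k := by
    intro i j i' j'
    simp [b, Fintype.sum_sum_type]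
  have hu1 : ∀ i i', ∑ k, u i k * u i' k ≤ 1 := fun i i' => by
    have := dot_le (u i) (u i') (hu i')
    rwa [l2, hu, Real.sqrt_one] at this
  have hv1 : ∀ i i', ∑ k, v i k * v i' k ≤ 1 := fun i i' => by
    have := dot_le (v i) (v i') (hv i')
    rwa [l2, hv, Real.sqrt_one] at this
  have key := gaussian_comparison hr hβ hp0 hp a b
    (by intro i j i' j'; simp [a, b, Fintype.sum_sum_type])
    (by intro i j i' j'; rw [haa, hbb]; nlinarith [hu1 i i', hv1 j j'])
    (by
      intro i j j'; rw [haa, hbb]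
      have : ∑ k, u i k * u i k = 1 := by rw [← hu i]; exact Finset.sum_congr rfl fun _ _ => by ring
      rw [this]; ring)
  have hl1 : ∀ ξ, softF β p r (procX a ξ) =
      (softF β p r (bil u v fun q => ξ (Sum.inl (Sum.inl q))) *
        Real.exp (r * l * ξ (Sum.inl (Sum.inr ())))) * 1 := by
    intro ξ
    rw [mul_one, ← softF_add hl]
    congr 1
    ext i j
    simp [procX, a, bil, Fintype.sum_sum_type]
  have hr1 : ∀ ξ, softF β p r (procX b ξ) ≤
      1 * (F (fun k => ξ (Sum.inr (Sum.inl k))) * G fun k => ξ (Sum.inr (Sum.inr k))) := by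
    intro ξ
    rw [one_mul]
    refine le_trans (le_of_eq ?_) (hFG _ _)
    congr 1
    ext i j
    simp [procX, b, Fintype.sum_sum_type]
  have hL : ∫ ξ, softF β p r (procX a ξ) ∂(stdG (((S × N) ⊕ Unit) ⊕ (N ⊕ S))) =
      (∫ X, softF β p r (bil u v X) ∂(stdG (S × N))) * Real.exp (l ^ 2 / 2) := by
    simp_rw [hl1]
    rw [integral_stdG_sum (fun z : (S × N) ⊕ Unit → ℝ =>
      softF β p r (bil u v fun q => z (Sum.inl q)) * Real.exp (r * l * z (Sum.inr ())))
      (fun _ : N ⊕ S → ℝ => 1),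
      integral_stdG_sum (fun z : S × N → ℝ => softF β p r (bil u v z))
        (fun z : Unit → ℝ => Real.exp (r * l * z ())), integral_exp_unit]
    have : (r * l) ^ 2 = l ^ 2 := by rcases hr with rfl | rfl <;> ring
    simp [this]
  have hFGint : Integrable (fun ξ : ((S × N) ⊕ Unit) ⊕ (N ⊕ S) → ℝ =>
      1 * (F (fun k => ξ (Sum.inr (Sum.inl k))) * G fun k => ξ (Sum.inr (Sum.inr k))))
      (stdG (((S × N) ⊕ Unit) ⊕ (N ⊕ S))) := by
    refine ExpBdd.integrable ((ExpBdd.const 1).mul (ExpBdd.mul ?_ ?_)) ?_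
    · obtain ⟨C, c, hC, hc, h⟩ := hF
      refine ⟨C, c, hC, hc, fun x => (h _).trans ?_⟩
      gcongr
      rw [Fintype.sum_sum_type, Fintype.sum_sum_type (fun y => |x (Sum.inr y)|)]
      have : 0 ≤ ∑ a₁ : (S × N) ⊕ Unit, |x (Sum.inl a₁)| := by positivity
      have : 0 ≤ ∑ a₁ : S, |x (Sum.inr (Sum.inr a₁))| := by positivity
      linarith
    · obtain ⟨C, c, hC, hc, h⟩ := hG
      refine ⟨C, c, hC, hc, fun x => (h _).trans ?_⟩
      gcongr
      rw [Fintype.sum_sum_type, Fintype.sum_sum_type (fun y => |x (Sum.inr y)|)]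
      have : 0 ≤ ∑ a₁ : (S × N) ⊕ Unit, |x (Sum.inl a₁)| := by positivity
      have : 0 ≤ ∑ a₁ : N, |x (Sum.inr (Sum.inl a₁))| := by positivity
      linarith
    · exact measurable_const.mul ((hFm.comp (measurable_pi_lambda _ fun _ => measurable_pi_apply _)).mul
        (hGm.comp (measurable_pi_lambda _ fun _ => measurable_pi_apply _)))
  have hR : ∫ ξ, softF β p r (procX b ξ) ∂(stdG (((S × N) ⊕ Unit) ⊕ (N ⊕ S))) ≤
      (∫ g, F g ∂(stdG N)) * ∫ h, G h ∂(stdG S) := by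
    calc _ ≤ ∫ ξ, 1 * (F (fun k => ξ (Sum.inr (Sum.inl k))) * G fun k => ξ (Sum.inr (Sum.inr k)))
            ∂(stdG (((S × N) ⊕ Unit) ⊕ (N ⊕ S))) := by
          refine integral_mono ?_ hFGint hr1
          exact (expBdd_softF hr hβ hp0 hp b).integrable
            (continuous_softF fun i j => continuous_procX b i j).measurable
      _ = _ := by
          rw [integral_stdG_sum (fun _ : (S × N) ⊕ Unit → ℝ => 1) (fun z : N ⊕ S → ℝ =>
            F (fun k => z (Sum.inl k)) * G fun k => z (Sum.inr k)), integral_stdG_sum F G]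
          simp
  rw [hL] at key
  rw [Real.exp_neg, ← div_eq_inv_mul, le_div_iff₀ (Real.exp_pos _)]
  exact key.trans hR

end Gordon

/-! ### Exponential moments of the extreme singular values -/

open Filter Topology

section GordonLimit

variable {S N : Type*} [Fintype S] [Fintype N]

/-- The vector `Xᵀ u`. -/
def tmul (X : S × N → ℝ) (u : S → ℝ) (b : N) : ℝ := ∑ a, X (a, b) * u a

lemma bil_eq {I J : Type*} (u : I → S → ℝ) (v : J → N → ℝ) (X : S × N → ℝ) (i : I) (j : J) :
    bil u v X i j = ∑ b, tmul X (u i) b * v j b := by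
  simp only [bil, tmul, Fintype.sum_prod_type, Finset.sum_mul]
  rw [Finset.sum_comm]
  exact Finset.sum_congr rfl fun _ _ => Finset.sum_congr rfl fun _ _ => by ring

lemma integrable_softF_bil {I J : Type*} [Fintype I] [Fintype J] [Nonempty I] [Nonempty J]
    {β p r : ℝ} (hr : r = 1 ∨ r = -1) (hβ : 0 ≤ β) (hp0 : 0 ≤ p) (hp : p ≤ 1)
    (u : I → S → ℝ) (v : J → N → ℝ) :
    Integrable (fun X => softF β p r (bil u v X)) (stdG (S × N)) :=
  (expBdd_softF hr hβ hp0 hp (fun i j (q : S × N) => u i q.1 * v j q.2)).integrable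
    (continuous_softF fun i j => continuous_procX _ i j).measurable

lemma ofReal_tendsto_le {x : ENNReal} {f : ℝ → ℝ} {y : ℝ}
    (hf : ContinuousAt f 0) (h0 : f 0 = y) (h : ∀ p, 0 < p → p ≤ 1 → x ≤ ENNReal.ofReal (f p)) :
    x ≤ ENNReal.ofReal y := by
  have ht : Tendsto f (𝓝[>] 0) (𝓝 y) := by
    rw [← h0]; exact hf.tendsto.mono_left nhdsWithin_le_nhds
  refine ge_of_tendsto (ENNReal.tendsto_ofReal ht) ?_
  have : Set.Ioc (0 : ℝ) 1 ∈ 𝓝[>] (0 : ℝ) := Ioc_mem_nhdsGT one_pos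
  filter_upwards [this] with p hp using h p hp.1 hp.2

/-- Slepian-type bound for finite families, obtained from `gordon_soft` as `β → ∞`. -/
lemma gordon_max_fin {I J : Type*} [Fintype I] [Fintype J] [Nonempty I] [Nonempty J]
    {l : ℝ} (hl : 0 < l) (u : I → S → ℝ) (v : J → N → ℝ)
    (hu : ∀ i, ∑ a, u i a ^ 2 = 1) (hv : ∀ j, ∑ a, v j a ^ 2 = 1) :
    ∫⁻ X, ⨆ i, ⨆ j, ENNReal.ofReal (Real.exp (l * bil u v X i j)) ∂(stdG (S × N)) ≤
      ENNReal.ofReal (Real.exp (-(l ^ 2 / 2)) *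
        ((∫ g, Real.exp (l * l2 g) ∂(stdG N)) * ∫ h, Real.exp (l * l2 h) ∂(stdG S))) := by
  set E1 := ∫ g, Real.exp (l * l2 g) ∂(stdG N)
  set E2 := ∫ h, Real.exp (l * l2 h) ∂(stdG S)
  set K : ℝ := Fintype.card I * Fintype.card J
  have hK : 0 < K := by
    have : 0 < Fintype.card I := Fintype.card_pos
    have : 0 < Fintype.card J := Fintype.card_pos
    positivity
  refine ofReal_tendsto_le (f := fun p => Real.exp (-(l ^ 2 / 2)) * ((K ^ p * E1) * E2)) ?_
    (by simp) ?_
  · have : ContinuousAt (fun p : ℝ => K ^ p) 0 := Real.continuousAt_const_rpow hK.ne'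
    fun_prop
  intro p hp0 hp
  set β := l / p with hβ
  have hβ0 : 0 < β := by positivity
  have hβp : β * p = l := by rw [hβ]; field_simp
  have key := gordon_soft (r := 1) (Or.inl rfl) hβ0.le hp0.le hp hβp u v hu hv
    (F := fun g => K ^ p * Real.exp (l * l2 g)) (G := fun h => Real.exp (l * l2 h))
    ((ExpBdd.const _).mul (expBdd_exp_l2 l)) (expBdd_exp_l2 l) (by fun_prop) (by fun_prop)
    (by
      intro g h
      have h1 : rowG β 1 (fun i j => (∑ a, g a * v j a) + ∑ a, h a * u i a) ≤
          K * Real.exp (β * (l2 g + l2 h)) := by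
        calc rowG β 1 (fun i j => (∑ a, g a * v j a) + ∑ a, h a * u i a)
            ≤ ∑ i : I, ∑ j : J, Real.exp (β * (l2 g + l2 h)) := by
              unfold rowG rowS
              simp only [Real.rpow_one]
              refine Finset.sum_le_sum fun i _ => Finset.sum_le_sum fun j _ => ?_
              have := dot_le g (v j) (hv j)
              have := dot_le h (u i) (hu i)
              gcongr
          _ = _ := by simp [K, mul_assoc]
      calc softF β p 1 (fun i j => (∑ a, g a * v j a) + ∑ a, h a * u i a)
          ≤ (K * Real.exp (β * (l2 g + l2 h))) ^ p :=
            Real.rpow_le_rpow (rowG_pos _ _ _).le h1 hp0.le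
        _ = K ^ p * Real.exp (l * l2 g) * Real.exp (l * l2 h) := by
            rw [Real.mul_rpow hK.le (Real.exp_pos _).le, ← Real.exp_mul, mul_assoc (K ^ p),
              ← Real.exp_add, ← hβp]
            congr 2; ring)
  rw [integral_const_mul] at key
  refine le_trans ?_ (ENNReal.ofReal_le_ofReal key)
  rw [ofReal_integral_eq_lintegral_ofReal
    (integrable_softF_bil (Or.inl rfl) hβ0.le hp0.le hp u v)
    (Eventually.of_forall fun X => (Real.rpow_pos_of_pos (rowG_pos _ _ _) _).le)]
  refine lintegral_mono fun X => iSup_le fun i => iSup_le fun j => ENNReal.ofReal_le_ofReal ?_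
  have h2 : Real.exp (β * bil u v X i j) ≤ rowG β 1 (bil u v X) := by
    refine (exp_le_rowS β (bil u v X) i j).trans ?_
    simpa using rpow_le_rowG β 1 (bil u v X) i
  calc Real.exp (l * bil u v X i j) = Real.exp (β * bil u v X i j) ^ p := by
        rw [← Real.exp_mul, ← hβp]; congr 1; ring
    _ ≤ _ := Real.rpow_le_rpow (Real.exp_pos _).le h2 hp0.le

/-- Gordon-type bound for finite families, obtained from `gordon_soft` as `β → ∞`. -/
lemma gordon_min_fin {I J : Type*} [Fintype I] [Fintype J] [Nonempty I] [Nonempty J]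
    {l : ℝ} (hl : 0 < l) (u : I → S → ℝ) (v : J → N → ℝ)
    (hu : ∀ i, ∑ a, u i a ^ 2 = 1) (hv : ∀ j, ∑ a, v j a ^ 2 = 1) :
    ∫⁻ X, ⨆ i, ENNReal.ofReal (Real.exp (-(l * l2 (tmul X (u i))))) ∂(stdG (S × N)) ≤
      ENNReal.ofReal (Real.exp (-(l ^ 2 / 2)) *
        ((∫ g, Real.exp (-(l * ⨆ j, ∑ a, g a * v j a)) ∂(stdG N)) *
          ∫ h, Real.exp (l * l2 h) ∂(stdG S))) := by
  set E1 := ∫ g, Real.exp (-(l * ⨆ j, ∑ a, g a * v j a)) ∂(stdG N)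
  set E2 := ∫ h, Real.exp (l * l2 h) ∂(stdG S)
  set K : ℝ := (Fintype.card I : ℝ)
  set K' : ℝ := (Fintype.card J : ℝ)
  have hK : 0 < K := by
    have : 0 < Fintype.card I := Fintype.card_pos
    positivity
  have hK' : 0 < K' := by
    have : 0 < Fintype.card J := Fintype.card_pos
    positivity
  have hbdd : ∀ f : J → ℝ, BddAbove (Set.range f) := fun f => (Set.finite_range f).bddAbove
  refine ofReal_tendsto_le
    (f := fun p => K' ^ p * (Real.exp (-(l ^ 2 / 2)) * (E1 * (K ^ p * E2)))) ?_
    (by simp) ?_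
  · have : ContinuousAt (fun p : ℝ => K ^ p) 0 := Real.continuousAt_const_rpow hK.ne'
    have : ContinuousAt (fun p : ℝ => K' ^ p) 0 := Real.continuousAt_const_rpow hK'.ne'
    fun_prop
  intro p hp0 hp
  set β := l / p with hβ
  have hβ0 : 0 < β := by positivity
  have hβp : β * p = l := by rw [hβ]; field_simp
  have hsupm : Measurable fun g : N → ℝ => ⨆ j, ∑ a, g a * v j a := by
    refine Measurable.iSup fun j => ?_
    fun_prop
  have key := gordon_soft (r := -1) (Or.inr rfl) hβ0.le hp0.le hp hβp u v hu hv
    (F := fun g => Real.exp (-(l * ⨆ j, ∑ a, g a * v j a)))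
    (G := fun h => K ^ p * Real.exp (l * l2 h))
    (by
      refine (expBdd_exp_l2 l).mono fun g => ?_
      rw [Real.abs_exp, Real.abs_exp, Real.exp_le_exp, ← mul_neg]
      obtain ⟨j⟩ := ‹Nonempty J›
      have h1 := (abs_le.1 (abs_dot_le g (v j) (hv j))).1
      have h2 := le_ciSup (hbdd fun j => ∑ a, g a * v j a) j
      have : -(⨆ j, ∑ a, g a * v j a) ≤ l2 g := by linarith
      exact mul_le_mul_of_nonneg_left this hl.le)
    ((ExpBdd.const _).mul (expBdd_exp_l2 l)) (by fun_prop) (by fun_prop)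
    (by
      intro g h
      obtain ⟨j0, hj0⟩ := exists_eq_ciSup_of_finite (f := fun j => ∑ a, g a * v j a)
      rw [← hj0]
      have h1 : rowG β (-1) (fun i j => (∑ a, g a * v j a) + ∑ a, h a * u i a) ≤
          K * Real.exp (β * (-(∑ a, g a * v j0 a) + l2 h)) := by
        calc rowG β (-1) (fun i j => (∑ a, g a * v j a) + ∑ a, h a * u i a)
            ≤ ∑ i : I, Real.exp (β * (-(∑ a, g a * v j0 a) + l2 h)) := by
              refine Finset.sum_le_sum fun i _ => ?_
              rw [Real.rpow_neg_one]
              refine inv_le_of_inv_le₀ (Real.exp_pos _) (le_trans ?_ (exp_le_rowS _ _ _ j0))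
              rw [← Real.exp_neg, Real.exp_le_exp]
              have := (abs_le.1 (abs_dot_le h (u i) (hu i))).1
              rw [← mul_neg]
              refine mul_le_mul_of_nonneg_left ?_ hβ0.le
              linarith
          _ = _ := by simp [K]
      calc softF β p (-1) (fun i j => (∑ a, g a * v j a) + ∑ a, h a * u i a)
          ≤ (K * Real.exp (β * (-(∑ a, g a * v j0 a) + l2 h))) ^ p :=
            Real.rpow_le_rpow (rowG_pos _ _ _).le h1 hp0.le
        _ = Real.exp (-(l * ∑ a, g a * v j0 a)) * (K ^ p * Real.exp (l * l2 h)) := by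
            rw [Real.mul_rpow hK.le (Real.exp_pos _).le, ← Real.exp_mul, mul_left_comm,
              ← Real.exp_add, ← hβp]
            congr 2; ring)
  rw [integral_const_mul] at key
  refine le_trans ?_ (ENNReal.ofReal_le_ofReal
    (mul_le_mul_of_nonneg_left key (Real.rpow_nonneg hK'.le p)))
  rw [← integral_const_mul, ofReal_integral_eq_lintegral_ofReal
    ((integrable_softF_bil (Or.inr rfl) hβ0.le hp0.le hp u v).const_mul _)
    (Eventually.of_forall fun X => mul_nonneg (Real.rpow_nonneg hK'.le p)
      (Real.rpow_pos_of_pos (rowG_pos _ _ _) _).le)]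
  refine lintegral_mono fun X => iSup_le fun i => ENNReal.ofReal_le_ofReal ?_
  have h1 : rowS β (bil u v X) i ≤ K' * Real.exp (β * l2 (tmul X (u i))) := by
    calc rowS β (bil u v X) i ≤ ∑ j : J, Real.exp (β * l2 (tmul X (u i))) := by
          refine Finset.sum_le_sum fun j _ => ?_
          rw [bil_eq]
          have := dot_le (tmul X (u i)) (v j) (hv j)
          gcongr
      _ = _ := by simp [K']
  have h2 : (K' * Real.exp (β * l2 (tmul X (u i))))⁻¹ ≤ rowG β (-1) (bil u v X) := by
    refine le_trans ?_ (rpow_le_rowG β (-1) (bil u v X) i)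
    rw [Real.rpow_neg_one]
    exact inv_anti₀ (rowS_pos _ _ _) h1
  calc Real.exp (-(l * l2 (tmul X (u i))))
      = K' ^ p * (K' * Real.exp (β * l2 (tmul X (u i))))⁻¹ ^ p := by
        rw [← Real.mul_rpow hK'.le (by positivity), mul_inv, mul_inv_cancel_left₀ hK'.ne',
          ← Real.exp_neg, ← Real.exp_mul, ← hβp]
        congr 1; ring
    _ ≤ _ := mul_le_mul_of_nonneg_left (Real.rpow_le_rpow (by positivity) h2 hp0.le)
        (Real.rpow_nonneg hK'.le p)

lemma iSup_fin_eq {f : ℕ → ENNReal} : ⨆ n : ℕ, ⨆ i : Fin (n + 1), f i = ⨆ n, f n := by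
  refine le_antisymm (iSup_le fun n => iSup_le fun i => le_iSup f i) (iSup_le fun n => ?_)
  exact le_iSup_of_le n (le_iSup_of_le (Fin.last n) (by simp))

lemma mono_fin {f : ℕ → ENNReal} : Monotone fun n : ℕ => ⨆ i : Fin (n + 1), f i := by
  intro a b hab
  refine iSup_le fun i => ?_
  exact le_iSup (fun i : Fin (b + 1) => f i) ⟨i, by omega⟩

lemma lintegral_iSup_fin_le {α : Type*} [MeasurableSpace α] {μ : Measure α} {f : ℕ → α → ENNReal}
    (hf : ∀ n, Measurable (f n)) {B : ENNReal} (h : ∀ n, ∫⁻ x, ⨆ i : Fin (n + 1), f i x ∂μ ≤ B) :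
    ∫⁻ x, ⨆ n, f n x ∂μ ≤ B := by
  have h1 : ∀ x, ⨆ n, f n x = ⨆ n : ℕ, ⨆ i : Fin (n + 1), f i x :=
    fun x => (iSup_fin_eq (f := fun n => f n x)).symm
  simp_rw [h1]
  have h2 : Monotone fun (n : ℕ) (x : α) => ⨆ i : Fin (n + 1), f i x :=
    fun a b hab x => mono_fin (f := fun n => f n x) hab
  rw [lintegral_iSup (fun n => Measurable.iSup fun i : Fin (n + 1) => hf i) h2]
  exact iSup_le h

@[fun_prop]
lemma continuous_tmul (u : S → ℝ) : Continuous fun X : S × N → ℝ => tmul X u := by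
  unfold tmul; fun_prop

variable [Nonempty N] [Nonempty S]

/-- Bound for the exponential moments of `sup uᵢᵀ X vⱼ` over sequences of unit vectors; for dense
sequences the supremum is the largest singular value of `X`. -/
lemma gordon_max {l : ℝ} (hl : 0 < l) (u : ℕ → S → ℝ) (v : ℕ → N → ℝ)
    (hu : ∀ i, ∑ a, u i a ^ 2 = 1) (hv : ∀ j, ∑ a, v j a ^ 2 = 1) :
    ∫⁻ X, ⨆ i, ⨆ j, ENNReal.ofReal (Real.exp (l * bil u v X i j)) ∂(stdG (S × N)) ≤
      ENNReal.ofReal (Real.exp (-(l ^ 2 / 2)) *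
        ((∫ g, Real.exp (l * l2 g) ∂(stdG N)) * ∫ h, Real.exp (l * l2 h) ∂(stdG S))) := by
  have hm : ∀ i j, Measurable fun X : S × N → ℝ =>
      ENNReal.ofReal (Real.exp (l * bil u v X i j)) := by
    intro i j
    unfold bil
    fun_prop
  refine lintegral_iSup_fin_le (fun i => Measurable.iSup fun j => hm i j) fun n => ?_
  have h1 : ∀ X : S × N → ℝ, ⨆ i : Fin (n + 1), ⨆ j,
      ENNReal.ofReal (Real.exp (l * bil u v X i j)) = ⨆ j, ⨆ i : Fin (n + 1),
      ENNReal.ofReal (Real.exp (l * bil u v X i j)) := fun X => iSup_comm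
  simp_rw [h1]
  refine lintegral_iSup_fin_le (fun j => Measurable.iSup fun i : Fin (n + 1) => hm i j) fun m => ?_
  refine le_trans (lintegral_mono fun X => ?_)
    (gordon_max_fin hl (fun i : Fin (n + 1) => u i) (fun j : Fin (m + 1) => v j)
      (fun i => hu i) (fun j => hv j))
  rw [iSup_comm]
  exact le_rfl

/-- Bound for the negative exponential moments of `inf |Xᵀ uᵢ|` over a sequence of unit vectors; for
a dense sequence the infimum is the smallest singular value of `X`. -/
lemma gordon_min {l : ℝ} (hl : 0 < l) (u : ℕ → S → ℝ)
    (hu : ∀ i, ∑ a, u i a ^ 2 = 1) :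
    ∫⁻ X, ⨆ i, ENNReal.ofReal (Real.exp (-(l * l2 (tmul X (u i))))) ∂(stdG (S × N)) ≤
      ENNReal.ofReal (Real.exp (-(l ^ 2 / 2)) *
        ((∫ g, Real.exp (-(l * l2 g)) ∂(stdG N)) * ∫ h, Real.exp (l * l2 h) ∂(stdG S))) := by
  obtain ⟨v, hv, hd⟩ := exists_dense_sphere N
  refine lintegral_iSup_fin_le (fun i => by fun_prop) fun n => ?_
  have hbdd : ∀ (k : ℕ) (f : Fin (k + 1) → ℝ), BddAbove (Set.range f) :=
    fun k f => (Set.finite_range f).bddAbove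
  have hlow : ∀ (k : ℕ) (g : N → ℝ), -l2 g ≤ ⨆ j : Fin (k + 1), ∑ a, g a * v j a := fun k g =>
    (abs_le.1 (abs_dot_le g (v 0) (hv 0))).1.trans
      (le_ciSup (hbdd k fun j => ∑ a, g a * v j a) 0)
  have htend : Tendsto (fun k : ℕ => ∫ g, Real.exp (-(l * ⨆ j : Fin (k + 1), ∑ a, g a * v j a))
      ∂(stdG N)) atTop (𝓝 (∫ g, Real.exp (-(l * l2 g)) ∂(stdG N))) := by
    refine tendsto_integral_of_dominated_convergence (fun g => Real.exp (l * l2 g)) ?_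
      ((expBdd_exp_l2 l).integrable (by fun_prop)) ?_ ?_
    · intro k
      have : Measurable fun g : N → ℝ => ⨆ j : Fin (k + 1), ∑ a, g a * v j a :=
        Measurable.iSup fun j => by fun_prop
      exact Measurable.aestronglyMeasurable (by fun_prop)
    · intro k
      refine Eventually.of_forall fun g => ?_
      rw [Real.norm_eq_abs, Real.abs_exp, Real.exp_le_exp, ← mul_neg]
      exact mul_le_mul_of_nonneg_left (by linarith [hlow k g]) hl.le
    · refine Eventually.of_forall fun g => ?_
      suffices h : Tendsto (fun k : ℕ => ⨆ j : Fin (k + 1), ∑ a, g a * v j a) atTop (𝓝 (l2 g)) from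
        (Real.continuous_exp.tendsto _).comp ((h.const_mul l).neg)
      obtain ⟨w, hw, hgw⟩ := l2_eq_dot g
      refine tendsto_order.2 ⟨fun a ha => ?_, fun a ha => ?_⟩
      · obtain ⟨j, hj⟩ := hd w hw {y | a < ∑ b, g b * y b}
          (isOpen_lt continuous_const (by fun_prop)) (by simpa [hgw] using ha)
        filter_upwards [eventually_ge_atTop j] with k hk
        exact lt_of_lt_of_le hj
          (le_ciSup (hbdd k fun j => ∑ a, g a * v j a) ⟨j, by omega⟩)
      · exact Eventually.of_forall fun k => lt_of_le_of_lt (ciSup_le fun j => dot_le g _ (hv j)) ha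
  refine ge_of_tendsto' (ENNReal.tendsto_ofReal ((htend.mul_const _).const_mul _)) fun k => ?_
  exact gordon_min_fin hl (fun i : Fin (n + 1) => u i) (fun j : Fin (k + 1) => v j)
      (fun i => hu i) (fun j => hv j)

end GordonLimit

/-! ### Exponential moments of the norm of a Gaussian vector -/

section ODE

lemma mono_Iic {f f' : ℝ → ℝ} {b : ℝ} (h : ∀ t, HasDerivAt f (f' t) t) (h0 : ∀ t < b, 0 ≤ f' t) :
    MonotoneOn f (Set.Iic b) :=
  monotoneOn_of_hasDerivWithinAt_nonneg (convex_Iic b)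
    (fun t _ => (h t).continuousAt.continuousWithinAt) (fun t _ => (h t).hasDerivWithinAt)
    (fun t ht => h0 t (by simpa using ht))

lemma anti_Ici {f f' : ℝ → ℝ} {b : ℝ} (h : ∀ t, HasDerivAt f (f' t) t) (h0 : ∀ t > b, f' t ≤ 0) :
    AntitoneOn f (Set.Ici b) :=
  antitoneOn_of_hasDerivWithinAt_nonpos (convex_Ici b)
    (fun t _ => (h t).continuousAt.continuousWithinAt) (fun t _ => (h t).hasDerivWithinAt)
    (fun t ht => h0 t (by simpa using ht))

/-- The primitive of `√(c + t² / 4)` vanishing at `0`. -/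
noncomputable def qInt (c x : ℝ) : ℝ := ∫ t in (0 : ℝ)..x, √(c + t ^ 2 / 4)

@[simp] lemma qInt_zero (c : ℝ) : qInt c 0 = 0 := by simp [qInt]

lemma hasDerivAt_qInt (c x : ℝ) : HasDerivAt (qInt c) (√(c + x ^ 2 / 4)) x := by
  have hc : Continuous fun t : ℝ => √(c + t ^ 2 / 4) := by fun_prop
  exact intervalIntegral.integral_hasDerivAt_right (hc.intervalIntegrable _ _)
    (hc.stronglyMeasurableAtFilter _ _) hc.continuousAt

lemma qInt_neg (c x : ℝ) : qInt c (-x) = -qInt c x := by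
  have h := intervalIntegral.integral_comp_neg (a := 0) (b := x) fun t : ℝ => √(c + t ^ 2 / 4)
  simp only [even_two.neg_pow, neg_zero] at h
  rw [qInt, qInt, h, intervalIntegral.integral_symm]

/-- The positive root `m` of `m ^ 2 = x * m + c`. -/
noncomputable def mRoot (c x : ℝ) : ℝ := x / 2 + √(c + x ^ 2 / 4)

lemma hasDerivAt_mRoot {c : ℝ} (hc : 0 < c) (x : ℝ) :
    HasDerivAt (mRoot c) (1 / 2 + x / 4 / √(c + x ^ 2 / 4)) x := by
  have h1 : HasDerivAt (fun t : ℝ => c + t ^ 2 / 4) (x / 2) x := by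
    refine (((hasDerivAt_pow 2 x).div_const 4).const_add c).congr_deriv ?_
    norm_num; ring
  have h2 := h1.sqrt (by positivity : c + x ^ 2 / 4 ≠ 0)
  refine (((hasDerivAt_id x).div_const 2).add h2).congr_deriv ?_
  field_simp
  ring

lemma mRoot_sq {c : ℝ} (hc : 0 < c) (x : ℝ) : mRoot c x ^ 2 = x * mRoot c x + c := by
  have := Real.sq_sqrt (by positivity : 0 ≤ c + x ^ 2 / 4)
  unfold mRoot
  nlinarith

/-- The function `exp (x² / 4 + qInt c x)` has logarithmic derivative `mRoot c`; this differentiates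
the quotient of `f` by it. -/
lemma hasDerivAt_ratio {c : ℝ} {f f1 : ℝ → ℝ} (x : ℝ)
    (hf : HasDerivAt f (f1 x) x) :
    HasDerivAt (fun t => f t * Real.exp (-(t ^ 2 / 4 + qInt c t)))
      (Real.exp (-(x ^ 2 / 4 + qInt c x)) * (f1 x - mRoot c x * f x)) x := by
  have h1 : HasDerivAt (fun t : ℝ => -(t ^ 2 / 4 + qInt c t)) (-mRoot c x) x := by
    refine ((((hasDerivAt_pow 2 x).div_const 4).add (hasDerivAt_qInt c x)).neg).congr_deriv ?_
    unfold mRoot; norm_num; ring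
  refine (hf.mul h1.exp).congr_deriv ?_
  ring

/-- Derivative of the comparison Wronskian for `f'' = x f' + ν f`. -/
lemma hasDerivAt_wronskian {c ν : ℝ} (hc : 0 < c) {f f1 : ℝ → ℝ} (x : ℝ)
    (hf : HasDerivAt f (f1 x) x) (hf1 : HasDerivAt f1 (x * f1 x + ν * f x) x) :
    HasDerivAt (fun t => Real.exp (qInt c t - t ^ 2 / 4) * (f1 t - mRoot c t * f t))
      (Real.exp (qInt c x - x ^ 2 / 4) *
        ((ν - c - (1 / 2 + x / 4 / √(c + x ^ 2 / 4))) * f x)) x := by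
  have h1 : HasDerivAt (fun t : ℝ => qInt c t - t ^ 2 / 4) (mRoot c x - x) x := by
    refine ((hasDerivAt_qInt c x).sub ((hasDerivAt_pow 2 x).div_const 4)).congr_deriv ?_
    unfold mRoot; norm_num; ring
  refine (h1.exp.mul (hf1.sub ((hasDerivAt_mRoot hc x).mul hf))).congr_deriv ?_
  have := mRoot_sq hc x
  simp only [Pi.sub_apply, Pi.mul_apply]
  linear_combination (-Real.exp (qInt c x - x ^ 2 / 4) * f x) * this

/-- A nonnegative increasing solution of `f'' = x f' + ν f` that is bounded on the negative axis has
logarithmic derivative at least `mRoot c` there, where `c = ν - 1/2`; integrating this bounds `f` by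
`f 0 * exp (x² / 4 + qInt c x)`. -/
lemma ode_neg {c ν C : ℝ} (hc : 0 < c) (hν : c + 1 / 2 = ν) {f f1 : ℝ → ℝ}
    (hf : ∀ x, HasDerivAt f (f1 x) x) (hf1 : ∀ x, HasDerivAt f1 (x * f1 x + ν * f x) x)
    (h0 : ∀ x, 0 ≤ f x) (hC : ∀ x ≤ 0, f x ≤ C) (h10 : ∀ x ≤ 0, 0 ≤ f1 x) :
    √c * f 0 ≤ f1 0 ∧ ∀ x ≤ 0, f x ≤ f 0 * Real.exp (x ^ 2 / 4 + qInt c x) := by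
  have hsc : 0 < √c := Real.sqrt_pos.2 hc
  have hm : ∀ x ≤ 0, mRoot c x ≤ √c := by
    intro x hx
    have : √(c + x ^ 2 / 4) ≤ √c - x / 2 := by
      refine Real.sqrt_le_iff.2 ⟨by linarith, ?_⟩
      nlinarith [Real.sq_sqrt hc.le]
    unfold mRoot; linarith
  have hE : ∀ x ≤ 0, qInt c x - x ^ 2 / 4 ≤ √c * x := by
    have hmono := mono_Iic (b := 0) (f := fun x => qInt c x - x ^ 2 / 4 - √c * x)
      (f' := fun x => √(c + x ^ 2 / 4) - x / 2 - √c) (fun x => by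
        refine (((hasDerivAt_qInt c x).sub ((hasDerivAt_pow 2 x).div_const 4)).sub
          ((hasDerivAt_id x).const_mul √c)).congr_deriv ?_
        norm_num; ring) (fun x hx => by
        have : √c ≤ √(c + x ^ 2 / 4) := Real.sqrt_le_sqrt (by nlinarith [sq_nonneg x])
        linarith)
    intro x hx
    have := hmono (Set.mem_Iic.2 hx) (Set.mem_Iic.2 le_rfl) hx
    simp at this
    linarith
  set K := fun t => Real.exp (qInt c t - t ^ 2 / 4) * (f1 t - mRoot c t * f t)
  have hKmono : MonotoneOn K (Set.Iic 0) :=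
    mono_Iic (fun x => hasDerivAt_wronskian (ν := ν) hc x (hf x) (hf1 x)) (fun x hx => by
      refine mul_nonneg (Real.exp_pos _).le (mul_nonneg ?_ (h0 x))
      have : x / 4 / √(c + x ^ 2 / 4) ≤ 0 :=
        div_nonpos_of_nonpos_of_nonneg (by linarith) (Real.sqrt_nonneg _)
      linarith)
  have hC0 : 0 ≤ C := (h0 0).trans (hC 0 le_rfl)
  have hKlow : ∀ x ≤ 0, -(√c * C) * Real.exp (√c * x) ≤ K x := by
    intro x hx
    have h1 : -(√c * C) ≤ f1 x - mRoot c x * f x := by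
      have := h10 x hx
      have h3 : mRoot c x * f x ≤ √c * C :=
        (mul_le_mul_of_nonneg_right (hm x hx) (h0 x)).trans
          (mul_le_mul_of_nonneg_left (hC x hx) hsc.le)
      linarith
    calc -(√c * C) * Real.exp (√c * x) ≤ -(√c * C) * Real.exp (qInt c x - x ^ 2 / 4) := by
          have := Real.exp_le_exp.2 (hE x hx)
          have h4 : 0 ≤ √c * C := by positivity
          nlinarith
      _ ≤ K x := by
          simp only [K]
          nlinarith [Real.exp_pos (qInt c x - x ^ 2 / 4)]
  have hK0 : ∀ x ≤ 0, 0 ≤ K x := by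
    intro x hx
    have ht : Tendsto (fun y : ℝ => -(√c * C) * Real.exp (√c * y)) atBot (𝓝 (-(√c * C) * 0)) :=
      (Real.tendsto_exp_atBot.comp (tendsto_id.const_mul_atBot hsc)).const_mul _
    rw [mul_zero] at ht
    refine le_of_tendsto ht ?_
    filter_upwards [eventually_le_atBot x] with y hy
    exact (hKlow y (hy.trans hx)).trans
      (hKmono (Set.mem_Iic.2 (hy.trans hx)) (Set.mem_Iic.2 hx) hy)
  have hD : ∀ x ≤ 0, 0 ≤ f1 x - mRoot c x * f x := fun x hx =>
    nonneg_of_mul_nonneg_right (hK0 x hx) (Real.exp_pos _)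
  refine ⟨?_, fun x hx => ?_⟩
  · have := hD 0 le_rfl
    simp [mRoot] at this
    exact this
  · have hr := mono_Iic (b := 0) (fun x => hasDerivAt_ratio (c := c) x (hf x))
      (fun x hx => mul_nonneg (Real.exp_pos _).le (hD x hx.le))
    have := hr (Set.mem_Iic.2 hx) (Set.mem_Iic.2 le_rfl) hx
    simp only [qInt_zero] at this
    rw [Real.exp_neg, ← div_eq_mul_inv, div_le_iff₀ (Real.exp_pos _)] at this
    simpa using this

/-- On the positive axis the logarithmic derivative stays below `mRoot c` once it starts below it,
provided `ν ≤ c + 1/2`. -/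
lemma ode_pos {c ν : ℝ} (hc : 0 < c) (hν : ν ≤ c + 1 / 2) {f f1 : ℝ → ℝ}
    (hf : ∀ x, HasDerivAt f (f1 x) x) (hf1 : ∀ x, HasDerivAt f1 (x * f1 x + ν * f x) x)
    (h0 : ∀ x, 0 ≤ f x) (h1 : f1 0 ≤ √c * f 0) (x : ℝ) (hx : 0 ≤ x) :
    f x ≤ f 0 * Real.exp (x ^ 2 / 4 + qInt c x) := by
  set K := fun t => Real.exp (qInt c t - t ^ 2 / 4) * (f1 t - mRoot c t * f t) with hK
  have hKanti : AntitoneOn K (Set.Ici 0) :=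
    anti_Ici (fun x => hasDerivAt_wronskian (ν := ν) hc x (hf x) (hf1 x)) (fun x hx => by
      refine mul_nonpos_of_nonneg_of_nonpos (Real.exp_pos _).le
        (mul_nonpos_of_nonpos_of_nonneg ?_ (h0 x))
      have : 0 ≤ x / 4 / √(c + x ^ 2 / 4) := by
        have : 0 < x := hx
        positivity
      linarith)
  have hD : ∀ x, 0 ≤ x → f1 x - mRoot c x * f x ≤ 0 := fun y hy => by
    have h2 := hKanti (Set.mem_Ici.2 le_rfl) (Set.mem_Ici.2 hy) hy
    have h3 : K 0 ≤ 0 := by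
      simp [hK, mRoot]; linarith
    exact nonpos_of_mul_nonpos_right (h2.trans h3) (Real.exp_pos _)
  have hr := anti_Ici (b := 0) (fun x => hasDerivAt_ratio (c := c) x (hf x))
      (fun x hx => mul_nonpos_of_nonneg_of_nonpos (Real.exp_pos _).le (hD x hx.le))
  have := hr (Set.mem_Ici.2 le_rfl) (Set.mem_Ici.2 hx) hx
  simp only [qInt_zero] at this
  rw [Real.exp_neg, ← div_eq_mul_inv, div_le_iff₀ (Real.exp_pos _)] at this
  simpa using this

end ODE

section MGF

variable {N : Type*} [Fintype N]

/-- The moments `E |g|^k exp (x |g|)` for a standard Gaussian vector `g`. -/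
noncomputable def chiM (N : Type*) [Fintype N] (k : ℕ) (x : ℝ) : ℝ :=
  ∫ g, l2 g ^ k * Real.exp (x * l2 g) ∂(stdG N)

lemma chiM_zero_eq (x : ℝ) : chiM N 0 x = ∫ g, Real.exp (x * l2 g) ∂(stdG N) := by
  simp [chiM]

lemma hasDerivAt_chiM (k : ℕ) (x : ℝ) : HasDerivAt (chiM N k) (chiM N (k + 1) x) x := by
  have h : integrableExpSet (l2 : (N → ℝ) → ℝ) (stdG N) = Set.univ :=
    Set.eq_univ_of_forall fun t => (expBdd_exp_l2 t).integrable (by fun_prop)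
  exact hasDerivAt_integral_pow_mul_exp_real (by rw [h]; simp) k

lemma chiM_nonneg (k : ℕ) (x : ℝ) : 0 ≤ chiM N k x :=
  integral_nonneg fun g => mul_nonneg (pow_nonneg (l2_nonneg g) k) (Real.exp_pos _).le

lemma expBdd_l2 : ExpBdd (l2 : (N → ℝ) → ℝ) :=
  (expBdd_exp_l2 1).mono fun x => by
    rw [Real.abs_exp, abs_of_nonneg (l2_nonneg x), one_mul]
    linarith [Real.add_one_le_exp (l2 x)]

lemma expBdd_l2_pow (k : ℕ) (x : ℝ) : ExpBdd fun g : N → ℝ => l2 g ^ k * Real.exp (x * l2 g) := by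
  refine ExpBdd.mul ?_ (expBdd_exp_l2 x)
  induction k with
  | zero => simpa using ExpBdd.const 1
  | succ k ih => simpa only [pow_succ] using ih.mul expBdd_l2

lemma chiM_mono (k : ℕ) {x y : ℝ} (h : x ≤ y) : chiM N k x ≤ chiM N k y := by
  refine integral_mono ((expBdd_l2_pow k x).integrable (by fun_prop))
    ((expBdd_l2_pow k y).integrable (by fun_prop)) fun g => ?_
  exact mul_le_mul_of_nonneg_left (Real.exp_le_exp.2
    (mul_le_mul_of_nonneg_right h (l2_nonneg g))) (pow_nonneg (l2_nonneg g) k)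

lemma hasDerivAt_mul_exp_sqrt (l : ℝ) {c : ℝ} (hc : 0 ≤ c) (t : ℝ) :
    HasDerivAt (fun t : ℝ => t * Real.exp (l * √(t ^ 2 + c)))
      (Real.exp (l * √(t ^ 2 + c)) + l * (t ^ 2 / √(t ^ 2 + c) * Real.exp (l * √(t ^ 2 + c)))) t := by
  by_cases h : t ^ 2 + c = 0
  · have ht : t = 0 := by
      have := sq_nonneg t
      exact pow_eq_zero_iff (two_ne_zero) |>.1 (by linarith)
    subst ht
    have hcont : Continuous fun t : ℝ => Real.exp (l * √(t ^ 2 + c)) := by fun_prop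
    rw [hasDerivAt_iff_tendsto_slope_zero]
    have : Tendsto (fun t : ℝ => Real.exp (l * √(t ^ 2 + c))) (𝓝[≠] 0)
        (𝓝 (Real.exp (l * √(0 ^ 2 + c)))) :=
      (hcont.tendsto 0).mono_left nhdsWithin_le_nhds
    simp only [h, Real.sqrt_zero, div_zero, zero_mul, mul_zero, add_zero] at this ⊢
    refine this.congr' ?_
    filter_upwards [self_mem_nhdsWithin] with s hs
    have hs : s ≠ 0 := hs
    simp [hs]
  · have h1 : HasDerivAt (fun t : ℝ => t ^ 2 + c) (2 * t) t := by
      simpa using (hasDerivAt_pow 2 t).add_const c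
    have h2 := ((h1.sqrt h).const_mul l).exp
    refine ((hasDerivAt_id t).mul h2).congr_deriv ?_
    have h3 : √(t ^ 2 + c) ≠ 0 := (Real.sqrt_ne_zero (by positivity)).2 h
    simp only [id]
    field_simp

/-- Gaussian integration by parts, applied to the radial field: `chiM N 0` solves
`f'' = x f' + n f` with `n` the dimension. -/
lemma chiM_ode (x : ℝ) : chiM N 2 x = x * chiM N 1 x + Fintype.card N * chiM N 0 x := by
  classical
  have hibp : ∀ i : N, ∫ g, g i * (g i * Real.exp (x * l2 g)) ∂(stdG N) =
      ∫ g, (Real.exp (x * l2 g) + x * (g i ^ 2 / l2 g * Real.exp (x * l2 g))) ∂(stdG N) := by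
    intro i
    refine gaussian_ibp i (by fun_prop) (by fun_prop) ((ExpBdd.coord i).mul (expBdd_exp_l2 x))
      ((expBdd_exp_l2 x).add ((ExpBdd.const x).mul (ExpBdd.mul ?_ (expBdd_exp_l2 x)))) ?_
    · refine expBdd_l2.mono fun g => ?_
      rw [abs_of_nonneg (l2_nonneg g), abs_of_nonneg (div_nonneg (sq_nonneg _) (l2_nonneg g))]
      refine div_le_of_le_mul₀ (l2_nonneg g) (l2_nonneg g) ?_
      rw [← sq, l2_sq]
      exact Finset.single_le_sum (f := fun a => g a ^ 2) (fun _ _ => sq_nonneg _) (Finset.mem_univ i)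
    · intro g
      have hl : ∀ t, l2 (Function.update g i t) = √(t ^ 2 + ∑ a ∈ Finset.univ.erase i, g a ^ 2) := by
        intro t
        unfold l2
        rw [← Finset.add_sum_erase _ _ (Finset.mem_univ i)]
        congr 2
        · simp
        · exact Finset.sum_congr rfl fun a ha => by
            rw [Function.update_of_ne (Finset.ne_of_mem_erase ha)]
      have := hasDerivAt_mul_exp_sqrt x
        (Finset.sum_nonneg fun a _ => sq_nonneg (g a) : 0 ≤ ∑ a ∈ Finset.univ.erase i, g a ^ 2) (g i)
      simp_rw [← hl] at this
      simpa using this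
  have hint1 : ∀ i : N, Integrable (fun g => g i * (g i * Real.exp (x * l2 g))) (stdG N) := fun i =>
    ((ExpBdd.coord i).mul ((ExpBdd.coord i).mul (expBdd_exp_l2 x))).integrable (by fun_prop)
  have h0 : Integrable (fun g : N → ℝ => Real.exp (x * l2 g)) (stdG N) :=
    (expBdd_exp_l2 x).integrable (by fun_prop)
  have hint2 : ∀ i : N, Integrable (fun g => Real.exp (x * l2 g) +
      x * (g i ^ 2 / l2 g * Real.exp (x * l2 g))) (stdG N) := fun i => by
    refine ExpBdd.integrable ((expBdd_exp_l2 x).add ((ExpBdd.const x).mul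
      (ExpBdd.mul (expBdd_l2.mono fun g => ?_) (expBdd_exp_l2 x)))) (by fun_prop)
    rw [abs_of_nonneg (l2_nonneg g), abs_of_nonneg (div_nonneg (sq_nonneg _) (l2_nonneg g))]
    refine div_le_of_le_mul₀ (l2_nonneg g) (l2_nonneg g) ?_
    rw [← sq, l2_sq]
    exact Finset.single_le_sum (f := fun a => g a ^ 2) (fun _ _ => sq_nonneg _) (Finset.mem_univ i)
  have e1 : chiM N 2 x = ∑ i, ∫ g, g i * (g i * Real.exp (x * l2 g)) ∂(stdG N) := by
    rw [← integral_finsetSum _ fun i _ => hint1 i]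
    refine integral_congr_ae (Eventually.of_forall fun g => ?_)
    simp only
    rw [l2_sq, Finset.sum_mul]
    exact Finset.sum_congr rfl fun _ _ => by ring
  rw [e1, Finset.sum_congr rfl fun i _ => hibp i, ← integral_finsetSum _ fun i _ => hint2 i]
  have e2 : ∀ g : N → ℝ, ∑ i, (Real.exp (x * l2 g) + x * (g i ^ 2 / l2 g * Real.exp (x * l2 g))) =
      x * (l2 g ^ 1 * Real.exp (x * l2 g)) + Fintype.card N * (l2 g ^ 0 * Real.exp (x * l2 g)) := by
    intro g
    rw [Finset.sum_add_distrib, ← Finset.mul_sum, ← Finset.sum_mul, ← Finset.sum_div, ← l2_sq]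
    have : l2 g ^ 2 / l2 g = l2 g := by rw [sq, mul_self_div_self]
    rw [this]
    simp
    ring
  simp_rw [e2]
  rw [integral_add (((expBdd_l2_pow 1 x).integrable (by fun_prop)).const_mul _)
    (((expBdd_l2_pow 0 x).integrable (by fun_prop)).const_mul _), integral_const_mul,
    integral_const_mul]
  rfl

/-- `chiM N 1` solves the same type of equation as `chiM N 0`, with `n + 1` in place of `n`. -/
lemma chiM_ode' (x : ℝ) : chiM N 3 x = x * chiM N 2 x + (Fintype.card N + 1) * chiM N 1 x := by
  have h1 := hasDerivAt_chiM (N := N) 2 x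
  have h2 : HasDerivAt (chiM N 2) (1 * chiM N 1 x + x * chiM N 2 x + Fintype.card N * chiM N 1 x) x := by
    have : chiM N 2 = fun x => x * chiM N 1 x + Fintype.card N * chiM N 0 x := funext chiM_ode
    nth_rw 1 [this]
    exact ((hasDerivAt_id x).mul (hasDerivAt_chiM 1 x)).add ((hasDerivAt_chiM 0 x).const_mul _)
  have := h1.unique h2
  rw [this]; ring

lemma chiM_zero_zero : chiM N 0 0 = 1 := by simp [chiM]

/-- `E |g| ≤ n / √(n + 1/2)`. -/
lemma chiM_one_le : √(Fintype.card N + 1 / 2 : ℝ) * chiM N 1 0 ≤ Fintype.card N := by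
  have h := (ode_neg (c := Fintype.card N + 1 / 2) (ν := Fintype.card N + 1) (C := chiM N 1 0)
    (by positivity) (by ring) (f := chiM N 1) (f1 := chiM N 2) (hasDerivAt_chiM 1)
    (fun x => by have := hasDerivAt_chiM (N := N) 2 x; rwa [chiM_ode'] at this)
    (chiM_nonneg 1) (fun x hx => chiM_mono 1 hx) (fun x _ => chiM_nonneg 2 x)).1
  rwa [chiM_ode 0, chiM_zero_zero, zero_mul, zero_add, mul_one] at h

variable [Nonempty N]

/-- Bound for `E exp (-x |g|)`. -/
lemma mgf_neg_le {x : ℝ} (hx : 0 ≤ x) : ∫ g, Real.exp (-(x * l2 g)) ∂(stdG N) ≤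
    Real.exp (x ^ 2 / 4 - qInt (Fintype.card N - 1 / 2) x) := by
  have hn : (1 : ℝ) ≤ Fintype.card N := by exact_mod_cast (Fintype.card_pos : 0 < Fintype.card N)
  have h := (ode_neg (c := Fintype.card N - 1 / 2) (ν := Fintype.card N) (C := chiM N 0 0)
    (by linarith) (by ring) (f := chiM N 0) (f1 := chiM N 1) (hasDerivAt_chiM 0)
    (fun x => by have := hasDerivAt_chiM (N := N) 1 x; rwa [chiM_ode] at this)
    (chiM_nonneg 0) (fun x hx => chiM_mono 0 hx) (fun x _ => chiM_nonneg 1 x)).2 (-x) (by linarith)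
  rw [chiM_zero_zero, chiM_zero_eq, one_mul, qInt_neg] at h
  simpa [sub_eq_add_neg] using h

/-- Bound for `E exp (x |g|)`. -/
lemma mgf_pos_le {x : ℝ} (hx : 0 ≤ x) : ∫ g, Real.exp (x * l2 g) ∂(stdG N) ≤
    Real.exp (x ^ 2 / 4 + qInt ((Fintype.card N : ℝ) ^ 2 / (Fintype.card N + 1 / 2)) x) := by
  have hn : (1 : ℝ) ≤ Fintype.card N := by exact_mod_cast (Fintype.card_pos : 0 < Fintype.card N)
  set n : ℝ := (Fintype.card N : ℝ)
  have h := ode_pos (c := n ^ 2 / (n + 1 / 2)) (ν := n)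
    (by positivity) (by
      rw [← sub_le_iff_le_add, le_div_iff₀ (by positivity)]; nlinarith)
    (f := chiM N 0) (f1 := chiM N 1) (hasDerivAt_chiM 0)
    (fun x => by have := hasDerivAt_chiM (N := N) 1 x; rwa [chiM_ode] at this)
    (chiM_nonneg 0) (by
      have := chiM_one_le (N := N)
      rw [chiM_zero_zero, mul_one, Real.sqrt_div (by positivity), Real.sqrt_sq (by positivity),
        le_div_iff₀ (by positivity), mul_comm]
      exact this) x hx
  rwa [chiM_zero_zero, chiM_zero_eq, one_mul] at h

end MGF

/-! ### From exponential moments to the mean of a quotient -/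

section Combine

/-- Young's inequality with exponents `4` and `4/3`, with weights `a` and `w` to be optimised. -/
lemma exp_young (x y a w : ℝ) : Real.exp (x + y) ≤
    Real.exp (a / 4 - w) * (1 / 4 * Real.exp (4 * x - a) + 3 / 4 * Real.exp (4 / 3 * (y + w))) := by
  have h := convexOn_exp.2 (Set.mem_univ (4 * x - a)) (Set.mem_univ (4 / 3 * (y + w)))
    (by norm_num : (0 : ℝ) ≤ 1 / 4) (by norm_num : (0 : ℝ) ≤ 3 / 4) (by norm_num)
  simp only [smul_eq_mul] at h
  calc Real.exp (x + y) = Real.exp (a / 4 - w) *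
        Real.exp (1 / 4 * (4 * x - a) + 3 / 4 * (4 / 3 * (y + w))) := by
        rw [← Real.exp_add]; congr 1; ring
    _ ≤ _ := mul_le_mul_of_nonneg_left h (Real.exp_pos _).le

lemma lintegral_exp_neg_mul {σ : ℝ} (hσ : 0 < σ) :
    ∫⁻ l in Set.Ioi (0 : ℝ), ENNReal.ofReal (Real.exp (-(l * σ))) = ENNReal.ofReal (1 / σ) := by
  have h1 : IntegrableOn (fun l : ℝ => Real.exp (-(l * σ))) (Set.Ioi 0) := by
    have := exp_neg_integrableOn_Ioi 0 hσ
    refine this.congr_fun (fun l _ => ?_) measurableSet_Ioi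
    simp only; congr 1; ring
  rw [← ofReal_integral_eq_lintegral_ofReal h1 (Eventually.of_forall fun _ => (Real.exp_pos _).le)]
  congr 1
  have := integral_exp_mul_Ioi (a := -σ) (by linarith) 0
  simp only [mul_zero, Real.exp_zero] at this
  rw [show (1 : ℝ) / σ = -1 / -σ by rw [neg_div_neg_eq], ← this]
  refine integral_congr_ae (Eventually.of_forall fun l => ?_)
  simp only; congr 1; ring

/-- Bound for the expectation of a quotient `σ₁ / σ₀` in terms of bounds on the exponential
moments of `σ₁` and `-σ₀`. -/
lemma lintegral_div_le {α : Type*} [MeasurableSpace α] {μ : Measure α} [SFinite μ]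
    {σ₁ σ₀ : α → ℝ} {b a : ℝ} {w : ℝ → ℝ} (hb : 0 < b) (hw : Measurable w)
    {FA : α → ENNReal} {FB : ℝ → α → ENNReal} (hFA : Measurable FA)
    (hFB : Measurable fun z : α × ℝ => FB z.2 z.1)
    (h0 : ∀ x, 0 ≤ σ₀ x)
    (hA : ∀ x, ENNReal.ofReal (Real.exp (4 * (σ₁ x / b))) ≤ FA x)
    (hA' : ∫⁻ x, FA x ∂μ ≤ ENNReal.ofReal (Real.exp a))
    (hB : ∀ l > 0, ∀ x, ENNReal.ofReal (Real.exp (-(4 / 3 * l * σ₀ x))) ≤ FB l x)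
    (hB' : ∀ l > 0, ∫⁻ x, FB l x ∂μ ≤ ENNReal.ofReal (Real.exp (-(4 / 3 * w l)))) :
    ∫⁻ x, ENNReal.ofReal (σ₁ x / σ₀ x) ∂μ ≤ ENNReal.ofReal (b * Real.exp (a / 4 - 1)) *
      ∫⁻ l in Set.Ioi (0 : ℝ), ENNReal.ofReal (Real.exp (-w l)) := by
  -- the pointwise majorant in both variables
  let G : α → ℝ → ENNReal := fun x l =>
    ENNReal.ofReal (b * Real.exp (a / 4 - 1) * Real.exp (-w l)) *
      (ENNReal.ofReal (1 / 4 * Real.exp (-a)) * FA x +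
        ENNReal.ofReal (3 / 4 * Real.exp (4 / 3 * w l)) * FB l x)
  have hpt : ∀ x, ENNReal.ofReal (σ₁ x / σ₀ x) ≤ ∫⁻ l in Set.Ioi (0 : ℝ), G x l := by
    intro x
    rcases (h0 x).eq_or_lt with h | h
    · rw [← h]; simp
    have e1 : ENNReal.ofReal (σ₁ x / σ₀ x) ≤
        ENNReal.ofReal (b * Real.exp (σ₁ x / b - 1)) * ENNReal.ofReal (1 / σ₀ x) := by
      rw [← ENNReal.ofReal_mul (by positivity), div_eq_mul_one_div]
      refine ENNReal.ofReal_le_ofReal (mul_le_mul_of_nonneg_right ?_ (by positivity))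
      have := Real.add_one_le_exp (σ₁ x / b - 1)
      rw [sub_add_cancel, div_le_iff₀ hb] at this
      linarith
    refine e1.trans ?_
    rw [← lintegral_exp_neg_mul h, ← lintegral_const_mul' _ _ ENNReal.ofReal_ne_top]
    refine setLIntegral_mono' measurableSet_Ioi fun l hl => ?_
    have hl : 0 < l := hl
    simp only [G]
    calc ENNReal.ofReal (b * Real.exp (σ₁ x / b - 1)) * ENNReal.ofReal (Real.exp (-(l * σ₀ x)))
        = ENNReal.ofReal (b * Real.exp (-1) * Real.exp (σ₁ x / b + -(l * σ₀ x))) := by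
          rw [← ENNReal.ofReal_mul (by positivity), mul_assoc, mul_assoc, ← Real.exp_add,
            ← Real.exp_add]
          congr 3; ring
      _ ≤ ENNReal.ofReal (b * Real.exp (-1) * (Real.exp (a / 4 - w l) *
          (1 / 4 * Real.exp (4 * (σ₁ x / b) - a) +
            3 / 4 * Real.exp (4 / 3 * (-(l * σ₀ x) + w l))))) := by
          refine ENNReal.ofReal_le_ofReal (mul_le_mul_of_nonneg_left (exp_young _ _ _ _) ?_)
          positivity
      _ = ENNReal.ofReal (b * Real.exp (a / 4 - 1) * Real.exp (-w l)) *
          (ENNReal.ofReal (1 / 4 * Real.exp (-a)) * ENNReal.ofReal (Real.exp (4 * (σ₁ x / b))) +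
          ENNReal.ofReal (3 / 4 * Real.exp (4 / 3 * w l)) *
            ENNReal.ofReal (Real.exp (-(4 / 3 * l * σ₀ x)))) := by
          rw [← ENNReal.ofReal_mul (by positivity), ← ENNReal.ofReal_mul (by positivity),
            ← ENNReal.ofReal_add (by positivity) (by positivity),
            ← ENNReal.ofReal_mul (by positivity)]
          congr 1
          have e2 : Real.exp (4 * (σ₁ x / b) - a) =
            Real.exp (-a) * Real.exp (4 * (σ₁ x / b)) := by rw [← Real.exp_add]; congr 1; ring
          have e3 : Real.exp (4 / 3 * (-(l * σ₀ x) + w l)) =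
              Real.exp (4 / 3 * w l) * Real.exp (-(4 / 3 * l * σ₀ x)) := by
            rw [← Real.exp_add]; congr 1; ring
          have e4 : Real.exp (-1) * Real.exp (a / 4 - w l) =
              Real.exp (a / 4 - 1) * Real.exp (-w l) := by
            rw [← Real.exp_add, ← Real.exp_add]; congr 1; ring
          rw [e2, e3]
          linear_combination b * (1 / 4 * (Real.exp (-a) * Real.exp (4 * (σ₁ x / b))) +
            3 / 4 * (Real.exp (4 / 3 * w l) * Real.exp (-(4 / 3 * l * σ₀ x)))) * e4
      _ ≤ _ := by
          gcongr
          · exact hA x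
          · exact hB l hl x
  have hGm : Measurable (Function.uncurry G) := by
    simp only [G, Function.uncurry_def]
    exact Measurable.mul (by fun_prop) ((measurable_const.mul (hFA.comp measurable_fst)).add
      (Measurable.mul (by fun_prop) hFB))
  calc ∫⁻ x, ENNReal.ofReal (σ₁ x / σ₀ x) ∂μ ≤
      ∫⁻ x, (∫⁻ l in Set.Ioi (0 : ℝ), G x l) ∂μ :=
        lintegral_mono hpt
    _ = ∫⁻ l in Set.Ioi (0 : ℝ), ∫⁻ x, G x l ∂μ := lintegral_lintegral_swap hGm.aemeasurable
    _ ≤ ∫⁻ l in Set.Ioi (0 : ℝ), ENNReal.ofReal (b * Real.exp (a / 4 - 1)) *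
          ENNReal.ofReal (Real.exp (-w l)) := by
        refine setLIntegral_mono' measurableSet_Ioi fun l hl => ?_
        have hl : 0 < l := hl
        have hFBl : Measurable (FB l) :=
          hFB.comp (measurable_id.prodMk (measurable_const (a := l)))
        simp only [G]
        rw [lintegral_const_mul _ (by fun_prop), lintegral_add_left (by fun_prop),
          lintegral_const_mul _ hFA, lintegral_const_mul _ hFBl, ENNReal.ofReal_mul (by positivity)]
        refine mul_le_of_le_one_right' ?_
        calc _ ≤ ENNReal.ofReal (1 / 4 * Real.exp (-a)) * ENNReal.ofReal (Real.exp a) +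
              ENNReal.ofReal (3 / 4 * Real.exp (4 / 3 * w l)) *
                ENNReal.ofReal (Real.exp (-(4 / 3 * w l))) := by
              gcongr
              exact hB' l hl
          _ = 1 := by
              rw [← ENNReal.ofReal_mul (by positivity), ← ENNReal.ofReal_mul (by positivity),
                ← ENNReal.ofReal_add (by positivity) (by positivity), mul_assoc, mul_assoc,
                ← Real.exp_add, ← Real.exp_add]
              norm_num
    _ = _ := lintegral_const_mul' _ _ ENNReal.ofReal_ne_top

lemma hasDerivAt_arsinh_prim {k ρ : ℝ} (hk : 1 < k) (hρ : 0 < ρ) (x : ℝ) :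
    HasDerivAt (fun x => -(ρ / (k ^ 2 - 1)) * (Real.exp (-(k * Real.arsinh (x / ρ))) *
      (k * √(1 + (x / ρ) ^ 2) + x / ρ))) (Real.exp (-(k * Real.arsinh (x / ρ)))) x := by
  have hy : HasDerivAt (fun x : ℝ => x / ρ) (1 / ρ) x := (hasDerivAt_id x).div_const ρ
  have h1 : HasDerivAt (fun x : ℝ => Real.exp (-(k * Real.arsinh (x / ρ))))
      (Real.exp (-(k * Real.arsinh (x / ρ))) *
        (-(k * ((√(1 + (x / ρ) ^ 2))⁻¹ * (1 / ρ))))) x :=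
    ((hy.arsinh.const_mul k).neg).exp
  have h2 : HasDerivAt (fun x : ℝ => 1 + (x / ρ) ^ 2) (2 * (x / ρ) * (1 / ρ)) x := by
    simpa using (hy.pow 2).const_add 1
  have hpos : 0 < 1 + (x / ρ) ^ 2 := by positivity
  have h3 := h2.sqrt hpos.ne'
  refine ((h1.mul ((h3.const_mul k).add hy)).const_mul _).congr_deriv ?_
  have hs : 0 < √(1 + (x / ρ) ^ 2) := Real.sqrt_pos.2 hpos
  have hk2 : k ^ 2 - 1 ≠ 0 := by nlinarith
  simp only [Pi.add_apply]
  generalize √(1 + (x / ρ) ^ 2) = S at *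
  generalize Real.exp (-(k * Real.arsinh (x / ρ))) = E at *
  field_simp
  ring

lemma lintegral_exp_arsinh {k ρ : ℝ} (hk : 1 < k) (hρ : 0 < ρ) :
    ∫⁻ l in Set.Ioi (0 : ℝ), ENNReal.ofReal (Real.exp (-(k * Real.arsinh (l / ρ)))) =
      ENNReal.ofReal (ρ * k / (k ^ 2 - 1)) := by
  have hlim : Tendsto (fun x => -(ρ / (k ^ 2 - 1)) * (Real.exp (-(k * Real.arsinh (x / ρ))) *
      (k * √(1 + (x / ρ) ^ 2) + x / ρ))) atTop (𝓝 (-(ρ / (k ^ 2 - 1)) * 0)) := by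
    refine Tendsto.const_mul _ ?_
    have hy : Tendsto (fun x : ℝ => x / ρ) atTop atTop := tendsto_id.atTop_div_const hρ
    have h1 : Tendsto (fun y : ℝ => (k + 1) * y ^ (-(k - 1))) atTop (𝓝 ((k + 1) * 0)) :=
      (tendsto_rpow_neg_atTop (by linarith)).const_mul _
    rw [mul_zero] at h1
    refine squeeze_zero' (Eventually.of_forall fun x => ?_) ?_ (h1.comp hy)
    · have : |x / ρ| ≤ √(1 + (x / ρ) ^ 2) := by
        rw [← Real.sqrt_sq_eq_abs]; exact Real.sqrt_le_sqrt (by linarith)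
      have h2 := (abs_le.1 this).1
      have h3 := Real.sqrt_nonneg (1 + (x / ρ) ^ 2)
      refine mul_nonneg (Real.exp_pos _).le ?_
      nlinarith
    · filter_upwards [hy.eventually_gt_atTop 0] with x hx
      set y := x / ρ
      have hS := Real.sqrt_nonneg (1 + y ^ 2)
      have hE : Real.exp (-(k * Real.arsinh y)) = (y + √(1 + y ^ 2)) ^ (-k) := by
        rw [← Real.exp_arsinh, ← Real.exp_mul]; congr 1; ring
      have hpos : 0 < y + √(1 + y ^ 2) := by linarith
      rw [hE]
      calc (y + √(1 + y ^ 2)) ^ (-k) * (k * √(1 + y ^ 2) + y)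
          ≤ (y + √(1 + y ^ 2)) ^ (-k) * ((k + 1) * (y + √(1 + y ^ 2))) := by
            refine mul_le_mul_of_nonneg_left ?_ (Real.rpow_nonneg hpos.le _)
            nlinarith
        _ = (k + 1) * (y + √(1 + y ^ 2)) ^ (-(k - 1)) := by
            rw [show -(k - 1) = -k + 1 by ring, Real.rpow_add hpos, Real.rpow_one]; ring
        _ ≤ (k + 1) * y ^ (-(k - 1)) := by
            refine mul_le_mul_of_nonneg_left ?_ (by linarith)
            exact Real.rpow_le_rpow_of_nonpos hx (by linarith) (by linarith)
  rw [mul_zero] at hlim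
  have hd := fun x (_ : x ∈ Set.Ici (0 : ℝ)) => hasDerivAt_arsinh_prim hk hρ x
  have hi := integrableOn_Ioi_deriv_of_nonneg' hd (fun x _ => (Real.exp_pos _).le) hlim
  have hv := integral_Ioi_of_hasDerivAt_of_nonneg' hd (fun x _ => (Real.exp_pos _).le) hlim
  rw [← ofReal_integral_eq_lintegral_ofReal hi (Eventually.of_forall fun _ => (Real.exp_pos _).le),
    hv]
  congr 1
  simp
  ring

lemma sqrt_add_sqrt_le {α c x : ℝ} (hα : 0 < α) (hc : 0 < c) (hx : 0 ≤ x) :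
    √(α + x) + √(c + x) ≤ (√α + √c) * √(1 + x / √(α * c)) := by
  have hp : 0 < √α := Real.sqrt_pos.2 hα
  have hq : 0 < √c := Real.sqrt_pos.2 hc
  rw [Real.sqrt_mul hα.le]
  have hp2 := Real.sq_sqrt hα.le
  have hq2 := Real.sq_sqrt hc.le
  set p := √α
  set q := √c
  have h1 : √(α + x) * √(c + x) ≤ p * q + x * (p ^ 2 + q ^ 2) / (2 * (p * q)) := by
    rw [← Real.sqrt_mul (by positivity)]
    refine Real.sqrt_le_iff.2 ⟨by positivity, ?_⟩
    have : (p * q + x * (p ^ 2 + q ^ 2) / (2 * (p * q))) ^ 2 - (p ^ 2 + x) * (q ^ 2 + x) =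
        (x * (p ^ 2 - q ^ 2) / (2 * (p * q))) ^ 2 := by
      field_simp; ring
    rw [hp2, hq2] at this ⊢
    nlinarith [sq_nonneg (x * (α - c) / (2 * (p * q)))]
  refine abs_le_of_sq_le_sq' ?_ (by positivity) |>.2
  have h2 : (p + q) ^ 2 * (1 + x / (p * q)) =
      p ^ 2 + x + 2 * (p * q + x * (p ^ 2 + q ^ 2) / (2 * (p * q))) + (q ^ 2 + x) := by
    field_simp; ring
  have e1 := Real.sq_sqrt (by positivity : 0 ≤ α + x)
  have e2 := Real.sq_sqrt (by positivity : 0 ≤ c + x)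
  have e3 := Real.sq_sqrt (by positivity : 0 ≤ 1 + x / (p * q))
  rw [mul_pow, e3, h2, add_sq, e1, e2, hp2, hq2]
  rw [hp2, hq2] at h1
  linarith

/-- The rate obtained for `-sMin`: the difference of the primitives dominates a multiple of `arsinh`,
whose exponential has an explicit integral (`lintegral_exp_arsinh`). -/
lemma qInt_sub_ge {α c κ : ℝ} (hc : 0 < c) (hα : c ≤ α) (hκ : κ = 2 * √√(α * c)) {x : ℝ}
    (hx : 0 ≤ x) :
    (√α - √c) * κ * Real.arsinh (x / κ) ≤ qInt α x - qInt c x := by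
  have hα0 : 0 < α := hc.trans_le hα
  have hκ0 : 0 < κ := by
    rw [hκ]; have : 0 < α * c := by positivity
    positivity
  have hκ2 : κ ^ 2 = 4 * √(α * c) := by
    rw [hκ, mul_pow, Real.sq_sqrt (Real.sqrt_nonneg _)]; norm_num
  have hanti := anti_Ici (b := 0)
    (f := fun x => (√α - √c) * κ * Real.arsinh (x / κ) - (qInt α x - qInt c x))
    (fun x => (((hasDerivAt_id x).div_const κ).arsinh.const_mul _).sub
      ((hasDerivAt_qInt α x).sub (hasDerivAt_qInt c x))) (fun t ht => by
      have ht : 0 < t := ht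
      have hle := sqrt_add_sqrt_le hα0 hc (by positivity : 0 ≤ t ^ 2 / 4)
      have e : t ^ 2 / 4 / √(α * c) = (t / κ) ^ 2 := by
        rw [div_pow, hκ2]; field_simp
      rw [e] at hle
      set R := √(1 + (t / κ) ^ 2)
      have hR : 0 < R := Real.sqrt_pos.2 (by positivity)
      have h1 := Real.sq_sqrt hα0.le
      have h2 := Real.sq_sqrt hc.le
      have h3 := Real.sq_sqrt (by positivity : 0 ≤ α + t ^ 2 / 4)
      have h4 := Real.sq_sqrt (by positivity : 0 ≤ c + t ^ 2 / 4)
      have h5 : 0 < √(α + t ^ 2 / 4) := Real.sqrt_pos.2 (by positivity)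
      have h6 : 0 < √(c + t ^ 2 / 4) := Real.sqrt_pos.2 (by positivity)
      have h7 : √c ≤ √α := Real.sqrt_le_sqrt hα
      have h8 : √(c + t ^ 2 / 4) ≤ √(α + t ^ 2 / 4) := Real.sqrt_le_sqrt (by linarith)
      have h9 : 0 < √c := Real.sqrt_pos.2 hc
      simp only [smul_eq_mul, id]
      rw [sub_nonpos]
      have e2 : (√α - √c) * κ * (R⁻¹ * (1 / κ)) = (√α - √c) / R := by field_simp
      rw [e2, div_le_iff₀ hR]
      set A := √(α + t ^ 2 / 4)
      set C := √(c + t ^ 2 / 4)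
      -- both sides times `√α + √c` telescope to differences of squares
      have h10 : (√α - √c) * (√α + √c) = (A - C) * (A + C) := by nlinarith
      have h11 : (A - C) * (A + C) ≤ (A - C) * ((√α + √c) * R) :=
        mul_le_mul_of_nonneg_left hle (by linarith)
      have h12 : (√α - √c) * (√α + √c) ≤ ((A - C) * R) * (√α + √c) := by
        rw [h10]; linarith
      exact le_of_mul_le_mul_right h12 (by linarith))
  have := hanti (Set.mem_Ici.2 le_rfl) (Set.mem_Ici.2 hx) hx
  simp at this
  linarith

lemma qInt_add_le {c d : ℝ} (hc : 0 < c) (hd : 0 < d) {x : ℝ} (hx : 0 ≤ x) :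
    qInt d x + qInt c x ≤ (√d + √c) * (x + x ^ 3 / (24 * √(d * c))) := by
  have hP : 0 < √(d * c) := Real.sqrt_pos.2 (by positivity)
  have hanti := anti_Ici (b := 0)
    (f := fun x => qInt d x + qInt c x - (√d + √c) * (x + x ^ 3 / (24 * √(d * c))))
    (fun x => ((hasDerivAt_qInt d x).add (hasDerivAt_qInt c x)).sub
      (((hasDerivAt_id x).add ((hasDerivAt_pow 3 x).div_const _)).const_mul _)) (fun t ht => by
      have hle := sqrt_add_sqrt_le hd hc (by positivity : 0 ≤ t ^ 2 / 4)
      have h1 : √(1 + t ^ 2 / 4 / √(d * c)) ≤ 1 + t ^ 2 / (8 * √(d * c)) := by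
        refine Real.sqrt_le_iff.2 ⟨by positivity, ?_⟩
        have : (1 + t ^ 2 / (8 * √(d * c))) ^ 2 =
          1 + t ^ 2 / 4 / √(d * c) + (t ^ 2 / (8 * √(d * c))) ^ 2 := by field_simp; ring
        rw [this]; nlinarith [sq_nonneg (t ^ 2 / (8 * √(d * c)))]
      have h2 := hle.trans (mul_le_mul_of_nonneg_left h1 (by positivity))
      have h3 : 1 + (↑3 * t ^ (3 - 1) / (24 * √(d * c))) = 1 + t ^ 2 / (8 * √(d * c)) := by
        norm_num; field_simp; norm_num
      norm_num at h3 ⊢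
      rw [h3]
      exact h2)
  have := hanti (Set.mem_Ici.2 le_rfl) (Set.mem_Ici.2 hx) hx
  simp at this
  linarith

end Combine

/-! ### Numerical inequality for at least eight rows -/

section Numeric

lemma sqrt_upper {s : ℝ} (hs : 8 ≤ s) :
    √(s ^ 2 / (s + 1 / 2)) ≤ √s - 0.2375 / √s := by
  have h0 : 0 < √s := Real.sqrt_pos.2 (by linarith)
  have h2 : √s ^ 2 = s := Real.sq_sqrt (by linarith)
  set σ := √s
  have e : σ - 0.2375 / σ = (s - 0.2375) / σ := by rw [← h2]; field_simp
  rw [e]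
  refine Real.sqrt_le_iff.2 ⟨div_nonneg (by linarith) h0.le, ?_⟩
  rw [div_pow, h2, div_le_div_iff₀ (by linarith) (by linarith)]
  nlinarith

lemma sqrt_lower {s : ℝ} (hs : 8 ≤ s) :
    √s * (1 - 1 / (4 * s)) ≤ √(s ^ 2 / (s + 1 / 2)) := by
  have h2 : √s ^ 2 = s := Real.sq_sqrt (by linarith)
  refine Real.le_sqrt_of_sq_le ?_
  rw [mul_pow, h2, le_div_iff₀ (by linarith)]
  have : s * (1 - 1 / (4 * s)) ^ 2 * (s + 1 / 2) = (4 * s - 1) ^ 2 * (s + 1 / 2) / (16 * s) := by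
    field_simp; ring
  rw [this, div_le_iff₀ (by linarith)]
  nlinarith

lemma sqrt_lower' {n : ℝ} (hn : 16 ≤ n) : √n - 0.2525 / √n ≤ √(n - 1 / 2) := by
  have h0 : 0 < √n := Real.sqrt_pos.2 (by linarith)
  have h2 : √n ^ 2 = n := Real.sq_sqrt (by linarith)
  set σ := √n
  have e : σ - 0.2525 / σ = (n - 0.2525) / σ := by rw [← h2]; field_simp
  rw [e]
  refine Real.le_sqrt_of_sq_le ?_
  rw [div_pow, h2, div_le_iff₀ (by linarith)]
  nlinarith

lemma poly_aux {T : ℝ} (hT : 0 ≤ T) (hT1 : T ≤ 1 / 11) :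
    1 - 0.2375 * T ≤ (1 - 0.017 * T) * (1 + 0.2 * T) * (1 - 0.35 * T) := by
  nlinarith [mul_nonneg hT hT, mul_nonneg hT (mul_nonneg hT hT)]

set_option maxHeartbeats 1600000 in
/-- The numerical inequality which turns the bounds obtained from exponential moments into the
clean bound `(√n + √s) / (√n - √s)`. -/
lemma numeric_bound {s n B Δ κ k a : ℝ} (hs : 8 ≤ s) (hn : 2 * s ≤ n)
    (hB : B = √(n ^ 2 / (n + 1 / 2)) + √(s ^ 2 / (s + 1 / 2)))
    (hΔ : Δ = √(n - 1 / 2) - √(s ^ 2 / (s + 1 / 2)))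
    (hκ : κ = 2 * √√((n - 1 / 2) * (s ^ 2 / (s + 1 / 2))))
    (hk : k = 3 / 4 * (Δ * κ))
    (ha : a = B * (4 / B + (4 / B) ^ 3 /
      (24 * √(n ^ 2 / (n + 1 / 2) * (s ^ 2 / (s + 1 / 2)))))) :
    0 < Δ ∧ 1 < k ∧ B * Real.exp (a / 4 - 1) * (3 / 4 * κ * k / (k ^ 2 - 1)) ≤
      (√n + √s) / (√n - √s) := by
  have hσ : 0 < √s := Real.sqrt_pos.2 (by linarith)
  have hν : 0 < √n := Real.sqrt_pos.2 (by linarith)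
  have hs2 : √s ^ 2 = s := Real.sq_sqrt (by linarith)
  have hn2 : √n ^ 2 = n := Real.sq_sqrt (by linarith)
  have u1 := sqrt_upper hs
  have u2 := sqrt_upper (s := n) (by linarith)
  have l1 := sqrt_lower hs
  have l2 := sqrt_lower (s := n) (by linarith)
  have l3 := sqrt_lower' (n := n) (by linarith)
  have hcs : 0 ≤ s ^ 2 / (s + 1 / 2) := by positivity
  have hcn : 0 ≤ n ^ 2 / (n + 1 / 2) := div_nonneg (by positivity) (by linarith)
  rw [Real.sqrt_mul hcn] at ha
  have hκ2 : κ ^ 2 = 4 * (√(n - 1 / 2) * √(s ^ 2 / (s + 1 / 2))) := by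
    rw [hκ, mul_pow, Real.sq_sqrt (Real.sqrt_nonneg _), Real.sqrt_mul (by linarith)]; norm_num
  have hk0 : 0 ≤ κ := by rw [hκ]; positivity
  clear hκ
  generalize √(s ^ 2 / (s + 1 / 2)) = cs at *
  generalize √(n ^ 2 / (n + 1 / 2)) = cn at *
  generalize √(n - 1 / 2) = al at *
  generalize √s = σ at *
  generalize √n = ν at *
  have hx : 1.414 * σ ≤ ν := by
    refine abs_le_of_sq_le_sq' ?_ hν.le |>.2
    rw [mul_pow, hs2, hn2]; linarith
  have l1' : 31 / 32 * σ ≤ cs := by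
    refine le_trans ?_ l1
    have : 1 / (4 * s) ≤ 1 / 32 := by
      rw [div_le_div_iff₀ (by linarith) (by norm_num)]; linarith
    rw [mul_comm]
    exact mul_le_mul_of_nonneg_left (by linarith) (by positivity)
  have l2' : 63 / 64 * ν ≤ cn := by
    refine le_trans ?_ l2
    have : 1 / (4 * n) ≤ 1 / 64 := by
      rw [div_le_div_iff₀ (by linarith) (by norm_num)]; linarith
    rw [mul_comm]
    exact mul_le_mul_of_nonneg_left (by linarith) (by positivity)
  have l3' : 0.984 * ν ≤ al := by
    refine le_trans ?_ l3
    have : 0.2525 / ν ≤ 0.016 * ν := by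
      rw [div_le_iff₀ hν, mul_assoc, ← sq, hn2]; linarith
    linarith
  set p := σ * ν with hp
  have hp0 : 0 < p := mul_pos hσ hν
  have hp1 : 11 ≤ p := by
    have := mul_le_mul_of_nonneg_left hx hσ.le
    rw [hp]; linarith [hs2, show σ * (1.414 * σ) = 1.414 * σ ^ 2 by ring]
  have hBu : B ≤ (ν + σ) * (1 - 0.2375 / p) := by
    have : (ν + σ) * (1 - 0.2375 / p) = (ν - 0.2375 / ν) + (σ - 0.2375 / σ) := by
      rw [hp]; field_simp; ring
    rw [this, hB]; linarith
  have hΔl : (ν - σ) * (1 + 0.2 / p) ≤ Δ := by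
    have h1 : (ν - 0.2525 / ν) - (σ - 0.2375 / σ) - (ν - σ) * (1 + 0.2 / p) =
      (0.0375 * ν - 0.0525 * σ) / p := by
      rw [hp]; field_simp; ring
    have h2 : 0 ≤ (0.0375 * ν - 0.0525 * σ) / p := div_nonneg (by linarith) hp0.le
    rw [hΔ]; linarith
  have hνσ : 0.414 * σ ≤ ν - σ := by linarith
  have hΔl2 : ν - σ ≤ Δ := by
    refine le_trans ?_ hΔl
    have : 0 ≤ 0.2 / p := by positivity
    exact le_mul_of_one_le_right (by linarith) (by linarith)
  have hΔ0 : 0 < Δ := by linarith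
  have hB0 : 0 < B := by rw [hB]; linarith
  have hcs0 : 0 < cs := by linarith
  have hcn0 : 0 < cn := by linarith
  -- the two error terms
  have hk2 : k ^ 2 = 9 / 4 * (Δ ^ 2 * (al * cs)) := by
    rw [hk, mul_pow, mul_pow, hκ2]; ring
  have hkp : p / 0.35 ≤ k ^ 2 := by
    rw [hk2]
    have h1 : (0.414 * σ) ^ 2 ≤ Δ ^ 2 := by
      exact pow_le_pow_left₀ (by linarith) (by linarith) 2
    have h2 : 0.953 * p ≤ al * cs := by
      have := mul_le_mul l3' l1' (by positivity) (by linarith)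
      rw [hp]; linarith
    have h3 : 1.371 ≤ Δ ^ 2 := by rw [mul_pow, hs2] at h1; linarith
    have h4 := mul_le_mul h3 h2 (by positivity) (by positivity)
    rw [show p / 0.35 = 20 / 7 * p by ring]
    linarith
  have hk1 : 1 < k := by
    have h1 : 1 < k ^ 2 := by
      refine lt_of_lt_of_le ?_ hkp
      rw [lt_div_iff₀ (by norm_num)]; linarith
    have h2 : 0 ≤ k := by rw [hk]; positivity
    exact (one_lt_sq_iff₀ h2).1 h1
  have hk21 : 0 < k ^ 2 - 1 := sub_pos.2 ((one_lt_sq_iff₀ (by linarith)).2 hk1)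
  refine ⟨hΔ0, hk1, ?_⟩
  have ha' : a / 4 - 1 = 2 / 3 / (cn * cs * B ^ 2) := by
    rw [ha]; field_simp; ring
  have hcc : 0.953 * p ≤ cn * cs := by
    have := mul_le_mul l2' l1' (by positivity) (by linarith)
    rw [hp]; linarith
  have hBl : 43 ≤ B ^ 2 := by
    have h1 : 2.3385 * σ ≤ B := by rw [hB]; linarith
    have := pow_le_pow_left₀ (by positivity) h1 2
    rw [mul_pow, hs2] at this; linarith
  have ht : a / 4 - 1 ≤ 0.017 / p := by
    rw [ha', div_le_div_iff₀ (by positivity) hp0]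
    have := mul_le_mul hcc hBl (by norm_num) (by positivity)
    linarith
  have hexp : Real.exp (a / 4 - 1) ≤ 1 / (1 - 0.017 / p) := by
    have h1 : 0.017 / p ≤ 0.01 := by rw [div_le_iff₀ hp0]; linarith
    have h2 := Real.add_one_le_exp (-(0.017 / p))
    rw [Real.exp_neg] at h2
    calc Real.exp (a / 4 - 1) ≤ Real.exp (0.017 / p) := Real.exp_le_exp.2 ht
      _ ≤ _ := by
        rw [one_div]
        refine (le_inv_comm₀ (by linarith) (Real.exp_pos _)).1 (by linarith)
  have hfrac : 3 / 4 * κ * k / (k ^ 2 - 1) ≤ 1 / Δ * (1 / (1 - 0.35 / p)) := by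
    have h1 : 3 / 4 * κ * k / (k ^ 2 - 1) = 1 / Δ * (1 / (1 - 1 / k ^ 2)) := by
      have e1 : 3 / 4 * κ = k / Δ := by rw [hk]; field_simp
      have e2 : k ^ 2 - 1 ≠ 0 := hk21.ne'
      have e3 : k ≠ 0 := by linarith
      rw [e1]; field_simp
    rw [h1]
    refine mul_le_mul_of_nonneg_left (one_div_le_one_div_of_le ?_ ?_) (by positivity)
    · have : 0.35 / p ≤ 0.1 := by rw [div_le_iff₀ hp0]; linarith
      linarith
    · have : 1 / k ^ 2 ≤ 0.35 / p := by
        rw [div_le_div_iff₀ (by positivity) hp0]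
        rw [div_le_iff₀ (by norm_num)] at hkp; linarith
      linarith
  have hT : 0 ≤ 1 / p := by positivity
  have hT1 : 1 / p ≤ 1 / 11 := one_div_le_one_div_of_le (by norm_num) hp1
  have d1 : ∀ c : ℝ, c / p = c * (1 / p) := fun c => by ring
  rw [d1] at hBu hΔl hexp hfrac
  generalize 1 / p = T at *
  have q1 : 0 < 1 - 0.017 * T := by linarith
  have q2 : 0 < 1 - 0.35 * T := by linarith
  calc B * Real.exp (a / 4 - 1) * (3 / 4 * κ * k / (k ^ 2 - 1))
      ≤ ((ν + σ) * (1 - 0.2375 * T)) * (1 / (1 - 0.017 * T)) *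
        (1 / ((ν - σ) * (1 + 0.2 * T)) * (1 / (1 - 0.35 * T))) := by
        have h1 : 0 < (ν - σ) * (1 + 0.2 * T) := mul_pos (by linarith) (by linarith)
        have h2 : 1 / Δ ≤ 1 / ((ν - σ) * (1 + 0.2 * T)) := one_div_le_one_div_of_le h1 hΔl
        have h3 := hfrac.trans (mul_le_mul_of_nonneg_right h2 (one_div_pos.2 q2).le)
        have h4 : 0 ≤ (ν + σ) * (1 - 0.2375 * T) := hB0.le.trans hBu
        refine mul_le_mul (mul_le_mul hBu hexp (Real.exp_pos _).le h4) h3 ?_ ?_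
        · have : 0 < k := by linarith
          positivity
        · exact mul_nonneg h4 (one_div_pos.2 q1).le
    _ ≤ (ν + σ) / (ν - σ) := by
        have h1 : 0 < ν - σ := by linarith
        have h2 : 0 < 1 + 0.2 * T := by linarith
        have e : ((ν + σ) * (1 - 0.2375 * T)) * (1 / (1 - 0.017 * T)) *
          (1 / ((ν - σ) * (1 + 0.2 * T)) * (1 / (1 - 0.35 * T))) = (ν + σ) / (ν - σ) *
          ((1 - 0.2375 * T) / ((1 - 0.017 * T) * (1 + 0.2 * T) * (1 - 0.35 * T))) := by
          field_simp
        rw [e]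
        refine mul_le_of_le_one_right (div_nonneg (by linarith) h1.le) ?_
        rw [div_le_one (by positivity)]
        exact poly_aux hT hT1

end Numeric

/-! ### Singular values, and the case of at least eight rows -/

section Singular

variable {S N : Type*} [Fintype S] [Fintype N] [DecidableEq S]

/-- The matrix with the given entries. -/
def toM {S N : Type*} (X : S × N → ℝ) : Matrix S N ℝ := Matrix.of fun a b => X (a, b)

lemma sVals_nonneg (Y : Matrix S N ℝ) (i : S) : 0 ≤ sVals Y i := Real.sqrt_nonneg _

lemma sVals_sq (Y : Matrix S N ℝ) (i : S) :
    sVals Y i ^ 2 = (Matrix.isHermitian_mul_conjTranspose_self Y).eigenvalues i :=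
  Real.sq_sqrt ((Matrix.posSemidef_self_mul_conjTranspose Y).eigenvalues_nonneg i)

lemma exists_sMax [Nonempty S] (Y : Matrix S N ℝ) : ∃ i, sVals Y i = sMax Y :=
  Set.Nonempty.csSup_mem (Set.range_nonempty _) (Set.finite_range _)

lemma exists_sMin [Nonempty S] (Y : Matrix S N ℝ) : ∃ i, sVals Y i = sMin Y :=
  Set.Nonempty.csInf_mem (Set.range_nonempty _) (Set.finite_range _)

lemma le_sMax (Y : Matrix S N ℝ) (i : S) : sVals Y i ≤ sMax Y :=
  le_csSup (Set.finite_range _).bddAbove ⟨i, rfl⟩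

lemma sMin_le (Y : Matrix S N ℝ) (i : S) : sMin Y ≤ sVals Y i :=
  csInf_le (Set.finite_range _).bddBelow ⟨i, rfl⟩

lemma l2_tmul_sq (X : S × N → ℝ) (u : S → ℝ) :
    l2 (tmul X u) ^ 2 = u ⬝ᵥ ((toM X * (toM X)ᴴ) *ᵥ u) := by
  have ht : tmul X u = (toM X)ᴴ *ᵥ u := by
    ext b; simp [tmul, toM, Matrix.mulVec, dotProduct]
  rw [l2_sq, ht, ← Matrix.mulVec_mulVec, Matrix.dotProduct_mulVec]
  simp only [dotProduct, sq]
  refine Finset.sum_congr rfl fun b _ => ?_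
  congr 1
  simp [Matrix.vecMul, Matrix.mulVec, dotProduct, mul_comm]

/-- Each singular value is the length of the image of a unit vector. -/
lemma exists_unit_sVals (X : S × N → ℝ) (i : S) :
    ∃ u : S → ℝ, ∑ a, u a ^ 2 = 1 ∧ l2 (tmul X u) = sVals (toM X) i := by
  set hA := Matrix.isHermitian_mul_conjTranspose_self (toM X)
  have hu : ∑ a, (hA.eigenvectorBasis i : S → ℝ) a ^ 2 = 1 := by
    have := hA.eigenvectorBasis.orthonormal.1 i
    rw [EuclideanSpace.norm_eq, Real.sqrt_eq_one] at this
    simpa using this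
  refine ⟨(hA.eigenvectorBasis i).ofLp, hu, ?_⟩
  have hmul := hA.mulVec_eigenvectorBasis i
  set u : S → ℝ := (hA.eigenvectorBasis i).ofLp with hu'
  rw [← abs_of_nonneg (l2_nonneg _), ← abs_of_nonneg (sVals_nonneg (toM X) i), ← sq_eq_sq_iff_abs_eq_abs,
    l2_tmul_sq, sVals_sq, hmul, dotProduct_smul, smul_eq_mul]
  have : u ⬝ᵥ u = 1 := by simpa [dotProduct, sq] using hu
  rw [this, mul_one]

end Singular

section Large

variable {S N : Type*} [Fintype S] [Fintype N] [DecidableEq S] [Nonempty S] [Nonempty N]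

lemma sMax_le_iSup {c : ℝ} {u : ℕ → S → ℝ} {v : ℕ → N → ℝ}
    (hu : ∀ w : S → ℝ, ∑ a, w a ^ 2 = 1 → ∀ U : Set (S → ℝ), IsOpen U → w ∈ U → ∃ j, u j ∈ U)
    (hv : ∀ w : N → ℝ, ∑ a, w a ^ 2 = 1 → ∀ U : Set (N → ℝ), IsOpen U → w ∈ U → ∃ j, v j ∈ U)
    (X : S × N → ℝ) :
    ENNReal.ofReal (Real.exp (c * sMax (toM X))) ≤
      ⨆ i, ⨆ j, ENNReal.ofReal (Real.exp (c * bil u v X i j)) := by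
  refine le_of_forall_lt fun d hd => ?_
  obtain ⟨i₀, hi₀⟩ := exists_sMax (toM X)
  obtain ⟨u₀, hu₀, hX⟩ := exists_unit_sVals X i₀
  obtain ⟨v₀, hv₀, hv1⟩ := l2_eq_dot (tmul X u₀)
  rw [← hi₀, ← hX, ← hv1] at hd
  have c1 : Continuous fun w : S → ℝ =>
      ENNReal.ofReal (Real.exp (c * ∑ b, tmul X w b * v₀ b)) := by
    unfold tmul
    exact ENNReal.continuous_ofReal.comp (by fun_prop)
  obtain ⟨i, hi⟩ := hu u₀ hu₀ _ (isOpen_Ioi.preimage c1) hd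
  have c2 : Continuous fun w : N → ℝ =>
      ENNReal.ofReal (Real.exp (c * ∑ b, tmul X (u i) b * w b)) :=
    ENNReal.continuous_ofReal.comp (by fun_prop)
  obtain ⟨j, hj⟩ := hv v₀ hv₀ _ (isOpen_Ioi.preimage c2) hi
  refine lt_of_lt_of_le hj (le_iSup_of_le i (le_iSup_of_le j ?_))
  rw [bil_eq]

lemma sMin_le_iSup {c : ℝ} {u : ℕ → S → ℝ}
    (hu : ∀ w : S → ℝ, ∑ a, w a ^ 2 = 1 → ∀ U : Set (S → ℝ), IsOpen U → w ∈ U → ∃ j, u j ∈ U)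
    (X : S × N → ℝ) :
    ENNReal.ofReal (Real.exp (-(c * sMin (toM X)))) ≤
      ⨆ i, ENNReal.ofReal (Real.exp (-(c * l2 (tmul X (u i))))) := by
  refine le_of_forall_lt fun d hd => ?_
  obtain ⟨i₀, hi₀⟩ := exists_sMin (toM X)
  obtain ⟨u₀, hu₀, hX⟩ := exists_unit_sVals X i₀
  rw [← hi₀, ← hX] at hd
  have c1 : Continuous fun w : S → ℝ =>
      ENNReal.ofReal (Real.exp (-(c * l2 (tmul X w)))) := by
    unfold tmul
    exact ENNReal.continuous_ofReal.comp (by fun_prop)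
  obtain ⟨i, hi⟩ := hu u₀ hu₀ _ (isOpen_Ioi.preimage c1) hd
  exact lt_of_lt_of_le hi (le_iSup_of_le i le_rfl)

/-- The bound for at least eight rows. -/
lemma lintegral_condNum_large {s n : ℝ} (hS : (Fintype.card S : ℝ) = s)
    (hN : (Fintype.card N : ℝ) = n) (hs : 8 ≤ s) (hn : 2 * s ≤ n) :
    ∫⁻ X, ENNReal.ofReal (condNum (toM X)) ∂(stdG (S × N)) ≤
      ENNReal.ofReal ((√n + √s) / (√n - √s)) := by
  obtain ⟨u, hu, hud⟩ := exists_dense_sphere S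
  obtain ⟨v, hv, hvd⟩ := exists_dense_sphere N
  obtain ⟨B, hB⟩ : ∃ B, B = √(n ^ 2 / (n + 1 / 2)) + √(s ^ 2 / (s + 1 / 2)) := ⟨_, rfl⟩
  obtain ⟨Δ, hΔ⟩ : ∃ Δ, Δ = √(n - 1 / 2) - √(s ^ 2 / (s + 1 / 2)) := ⟨_, rfl⟩
  obtain ⟨κ, hκ⟩ : ∃ κ, κ = 2 * √√((n - 1 / 2) * (s ^ 2 / (s + 1 / 2))) := ⟨_, rfl⟩
  obtain ⟨k, hk⟩ : ∃ k, k = 3 / 4 * (Δ * κ) := ⟨_, rfl⟩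
  obtain ⟨a, ha⟩ : ∃ a, a = B * (4 / B + (4 / B) ^ 3 /
      (24 * √(n ^ 2 / (n + 1 / 2) * (s ^ 2 / (s + 1 / 2))))) := ⟨_, rfl⟩
  obtain ⟨hΔ0, hk1, hfin⟩ := numeric_bound hs hn hB hΔ hκ hk ha
  have hcs : 0 < s ^ 2 / (s + 1 / 2) := by positivity
  have hn0 : 0 < n := by linarith
  have hcn : 0 < n ^ 2 / (n + 1 / 2) := by positivity
  have hcsα : s ^ 2 / (s + 1 / 2) ≤ n - 1 / 2 := by
    rw [div_le_iff₀ (by linarith)]; nlinarith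
  have hκ0 : 0 < κ := by
    have : 0 < (n - 1 / 2) * (s ^ 2 / (s + 1 / 2)) := mul_pos (by linarith) hcs
    rw [hκ]; positivity
  have hB0 : 0 < B := by rw [hB]; positivity
  have hmB : Measurable fun z : (S × N → ℝ) × ℝ =>
      ⨆ i, ENNReal.ofReal (Real.exp (-(4 / 3 * z.2 * l2 (tmul z.1 (u i))))) := by
    refine Measurable.iSup fun i => ?_
    have : Continuous fun z : (S × N → ℝ) × ℝ => l2 (tmul z.1 (u i)) :=
      continuous_l2.comp ((continuous_tmul (u i)).comp continuous_fst)
    fun_prop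
  have hmA : Measurable fun X : S × N → ℝ =>
      ⨆ i, ⨆ j, ENNReal.ofReal (Real.exp (4 / B * bil u v X i j)) := by
    refine Measurable.iSup fun i => Measurable.iSup fun j => ?_
    unfold bil; fun_prop
  have key := lintegral_div_le (μ := stdG (S × N)) (σ₁ := fun X => sMax (toM X))
    (σ₀ := fun X => sMin (toM X)) (b := B) (a := a)
    (w := fun l => k * Real.arsinh (l / (3 / 4 * κ))) hB0
    ((Real.continuous_arsinh.comp (continuous_id.div_const _)).measurable.const_mul _)
    (FA := fun X => ⨆ i, ⨆ j, ENNReal.ofReal (Real.exp (4 / B * bil u v X i j)))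
    (FB := fun l X => ⨆ i, ENNReal.ofReal (Real.exp (-(4 / 3 * l * l2 (tmul X (u i))))))
    hmA hmB (fun X => ?_) (fun X => ?_) ?_ (fun l hl X => ?_) (fun l hl => ?_)
  · refine key.trans ?_
    rw [lintegral_exp_arsinh hk1 (by positivity), ← ENNReal.ofReal_mul (by positivity)]
    exact ENNReal.ofReal_le_ofReal hfin
  · obtain ⟨i, hi⟩ := exists_sMin (toM X)
    rw [← hi]; exact sVals_nonneg _ _
  · rw [show 4 * (sMax (toM X) / B) = 4 / B * sMax (toM X) by ring]
    exact sMax_le_iSup hud hvd X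
  · have hl : 0 < 4 / B := by positivity
    refine (gordon_max hl u v hu hv).trans (ENNReal.ofReal_le_ofReal ?_)
    have h1 := mgf_pos_le (N := N) hl.le
    have h2 := mgf_pos_le (N := S) hl.le
    rw [hS] at h2
    rw [hN] at h1
    have h3 := qInt_add_le hcs hcn hl.le
    rw [← hB, ← ha] at h3
    calc _ ≤ Real.exp (-((4 / B) ^ 2 / 2)) *
        (Real.exp ((4 / B) ^ 2 / 4 + qInt (n ^ 2 / (n + 1 / 2)) (4 / B)) *
          Real.exp ((4 / B) ^ 2 / 4 + qInt (s ^ 2 / (s + 1 / 2)) (4 / B))) := by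
          gcongr
      _ ≤ Real.exp a := by
          rw [← Real.exp_add, ← Real.exp_add]
          exact Real.exp_le_exp.2 (by linarith)
  · exact sMin_le_iSup hud X
  · have hl' : 0 < 4 / 3 * l := by positivity
    refine (gordon_min (N := N) hl' u hu).trans (ENNReal.ofReal_le_ofReal ?_)
    have h1 := mgf_neg_le (N := N) hl'.le
    have h2 := mgf_pos_le (N := S) hl'.le
    rw [hS] at h2
    rw [hN] at h1
    have h3 := qInt_sub_ge hcs hcsα hκ hl'.le
    rw [← hΔ] at h3
    have e : 4 / 3 * (k * Real.arsinh (l / (3 / 4 * κ))) =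
        Δ * κ * Real.arsinh (4 / 3 * l / κ) := by
      rw [hk, show l / (3 / 4 * κ) = 4 / 3 * l / κ by field_simp]; ring
    calc _ ≤ Real.exp (-((4 / 3 * l) ^ 2 / 2)) *
        (Real.exp ((4 / 3 * l) ^ 2 / 4 - qInt (n - 1 / 2) (4 / 3 * l)) *
          Real.exp ((4 / 3 * l) ^ 2 / 4 + qInt (s ^ 2 / (s + 1 / 2)) (4 / 3 * l))) := by
          gcongr
      _ ≤ Real.exp (-(4 / 3 * (k * Real.arsinh (l / (3 / 4 * κ))))) := by
          rw [← Real.exp_add, ← Real.exp_add, e]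
          exact Real.exp_le_exp.2 (by linarith)

end Large

/-! ### The resolvent of `X Xᵀ` -/

section Resolvent

variable {S N : Type*} [Fintype S] [Fintype N] [DecidableEq S]

/-- The resolvent `(X Xᵀ + ε)⁻¹`. -/
noncomputable def resol (ε : ℝ) (X : S × N → ℝ) : Matrix S S ℝ :=
  (toM X * (toM X)ᵀ + ε • (1 : Matrix S S ℝ))⁻¹

/-- The entries of `(X Xᵀ + ε)⁻¹ X`. -/
noncomputable def resX (ε : ℝ) (X : S × N → ℝ) (q : S × N) : ℝ :=
  ∑ k, resol ε X q.1 k * X (k, q.2)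

variable {ε : ℝ}

lemma posDef_reg (hε : 0 < ε) (X : S × N → ℝ) : (toM X * (toM X)ᵀ + ε • (1 : Matrix S S ℝ)).PosDef := by
  have h1 : (toM X * (toM X)ᵀ).PosSemidef := by
    simpa using Matrix.posSemidef_self_mul_conjTranspose (toM X)
  exact Matrix.PosDef.posSemidef_add h1 (Matrix.PosDef.one.smul hε)

lemma isUnit_reg (hε : 0 < ε) (X : S × N → ℝ) :
    IsUnit (toM X * (toM X)ᵀ + ε • (1 : Matrix S S ℝ)).det :=
  (posDef_reg hε X).det_pos.ne'.isUnit

lemma resol_mul (hε : 0 < ε) (X : S × N → ℝ) :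
    resol ε X * (toM X * (toM X)ᵀ + ε • (1 : Matrix S S ℝ)) = 1 :=
  Matrix.nonsing_inv_mul _ (isUnit_reg hε X)

lemma mul_resol (hε : 0 < ε) (X : S × N → ℝ) :
    (toM X * (toM X)ᵀ + ε • (1 : Matrix S S ℝ)) * resol ε X = 1 :=
  Matrix.mul_nonsing_inv _ (isUnit_reg hε X)

lemma resol_transpose (X : S × N → ℝ) : (resol ε X)ᵀ = resol ε X := by
  unfold resol
  rw [Matrix.transpose_nonsing_inv]
  congr 1
  simp [Matrix.transpose_mul]

lemma resX_eq (X : S × N → ℝ) (i : S) (a : N) : resX ε X (i, a) = (resol ε X * toM X) i a := by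
  simp [resX, Matrix.mul_apply, toM]

lemma resol_diag (hε : 0 < ε) (X : S × N → ℝ) (i : S) :
    resol ε X i i = ∑ a, resX ε X (i, a) ^ 2 + ε * ∑ j, resol ε X i j ^ 2 := by
  have h : resol ε X = (resol ε X * toM X) * (resol ε X * toM X)ᵀ +
      ε • (resol ε X * (resol ε X)ᵀ) := by
    rw [Matrix.transpose_mul, resol_transpose]
    calc resol ε X = resol ε X * (toM X * (toM X)ᵀ + ε • (1 : Matrix S S ℝ)) * resol ε X := by
          rw [resol_mul hε, one_mul]
      _ = _ := by
          rw [mul_add, add_mul]; simp [Matrix.mul_assoc]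
  have h2 := congrFun (congrFun h i) i
  rw [h2]
  simp only [Matrix.add_apply, Matrix.smul_apply, smul_eq_mul, Matrix.mul_apply (M := _ * _),
    Matrix.transpose_apply, ← resX_eq, ← sq]
  congr 2
  simp [Matrix.mul_apply, sq]

lemma resol_diag_nonneg (hε : 0 < ε) (X : S × N → ℝ) (i : S) : 0 ≤ resol ε X i i := by
  rw [resol_diag hε]; positivity

lemma abs_resol_le (hε : 0 < ε) (X : S × N → ℝ) (i j : S) : |resol ε X i j| ≤ 1 / ε := by
  have h := resol_diag hε X i
  have h0 : 0 ≤ ∑ a, resX ε X (i, a) ^ 2 := Finset.sum_nonneg fun _ _ => sq_nonneg _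
  have hle : ∀ j, resol ε X i j ^ 2 ≤ ∑ j, resol ε X i j ^ 2 := fun j =>
    Finset.single_le_sum (f := fun j => resol ε X i j ^ 2) (fun _ _ => sq_nonneg _)
      (Finset.mem_univ j)
  have h1 : ε * resol ε X i i ^ 2 ≤ resol ε X i i := by nlinarith [hle i]
  have h2 : resol ε X i i ≤ 1 / ε := by
    rw [le_div_iff₀ hε]
    rcases (resol_diag_nonneg hε X i).eq_or_lt with h3 | h3
    · rw [← h3]; simp
    · nlinarith
  refine abs_le_of_sq_le_sq ?_ (by positivity)
  have h3 : ε * resol ε X i j ^ 2 ≤ 1 / ε := by nlinarith [hle j]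
  rw [div_pow, one_pow, le_div_iff₀ (by positivity)]
  rw [le_div_iff₀ hε] at h3
  nlinarith

lemma continuous_resol (hε : 0 < ε) (i j : S) : Continuous fun X : S × N → ℝ => resol ε X i j := by
  have hA : Continuous fun X : S × N → ℝ => toM X :=
    continuous_matrix fun a b => by simp only [toM, Matrix.of_apply]; fun_prop
  have hW : Continuous fun X : S × N → ℝ =>
      toM X * (toM X)ᵀ + ε • (1 : Matrix S S ℝ) :=
    (hA.matrix_mul hA.matrix_transpose).add continuous_const
  have h1 : Continuous fun X : S × N → ℝ =>
      ((toM X * (toM X)ᵀ + ε • (1 : Matrix S S ℝ)).det)⁻¹ :=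
    hW.matrix_det.inv₀ fun X => (posDef_reg hε X).det_pos.ne'
  have h2 := hW.matrix_adjugate.matrix_elem i j
  refine (h1.mul h2).congr fun X => ?_
  simp [resol, Matrix.inv_def, Ring.inverse_eq_inv']

/-- The quantity `tr ((X Xᵀ + ε)⁻¹ X Xᵀ)` equals `s - ε tr (X Xᵀ + ε)⁻¹`. -/
lemma sum_resX_mul (hε : 0 < ε) (X : S × N → ℝ) :
    ∑ q, X q * resX ε X q = Fintype.card S - ε * ∑ i, resol ε X i i := by
  have h := congrArg Matrix.trace (resol_mul hε X)
  rw [mul_add, Matrix.trace_add, Matrix.trace_one, ← Matrix.mul_assoc] at h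
  have h1 : (resol ε X * toM X * (toM X)ᵀ).trace = ∑ q, X q * resX ε X q := by
    rw [Fintype.sum_prod_type]
    simp only [Matrix.trace, Matrix.diag, Matrix.mul_apply (M := _ * _), ← resX_eq]
    refine Finset.sum_congr rfl fun i _ => Finset.sum_congr rfl fun a _ => ?_
    simp [toM, mul_comm]
  rw [h1] at h
  simp [Matrix.trace, ← Finset.mul_sum] at h
  linarith

lemma sum_resX_mul_nonneg (hε : 0 < ε) (X : S × N → ℝ) : 0 ≤ ∑ q, X q * resX ε X q := by
  have h1 : (resol ε X).PosSemidef := (posDef_reg hε X).inv.posSemidef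
  have h2 := (h1.conjTranspose_mul_mul_same (toM X)).trace_nonneg
  have h3 : ((toM X)ᴴ * resol ε X * toM X).trace = ∑ q, X q * resX ε X q := by
    rw [Matrix.mul_assoc, Matrix.trace_mul_comm, Fintype.sum_prod_type]
    simp only [Matrix.trace, Matrix.diag, Matrix.mul_apply (M := _ * _), ← resX_eq]
    refine Finset.sum_congr rfl fun i _ => Finset.sum_congr rfl fun a _ => ?_
    simp [toM, mul_comm]
  rwa [h3] at h2

lemma resol_sub (hε : 0 < ε) (X Y : S × N → ℝ) :
    resol ε Y = resol ε X - resol ε Y * (toM Y * (toM Y)ᵀ - toM X * (toM X)ᵀ) * resol ε X := by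
  have h : toM Y * (toM Y)ᵀ - toM X * (toM X)ᵀ =
    (toM Y * (toM Y)ᵀ + ε • (1 : Matrix S S ℝ)) - (toM X * (toM X)ᵀ + ε • (1 : Matrix S S ℝ)) := by
    abel
  rw [h, mul_sub, sub_mul, resol_mul hε, mul_assoc (resol ε Y), mul_resol hε]
  simp

variable [DecidableEq N]

lemma hasDerivAt_resol (hε : 0 < ε) (X : S × N → ℝ) (i : S) (a : N) (j k : S) :
    HasDerivAt (fun t => resol ε (Function.update X (i, a) t) j k)
      (-(resol ε X j i * resX ε X (k, a) + resX ε X (j, a) * resol ε X i k)) (X (i, a)) := by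
  set E : Matrix S N ℝ := Matrix.single i a 1 with hE
  have hup : ∀ t, toM (Function.update X (i, a) t) = toM X + (t - X (i, a)) • E := by
    intro t
    ext p b
    by_cases h : (p, b) = (i, a)
    · obtain ⟨rfl, rfl⟩ := Prod.mk.inj h
      simp [toM, hE]
    · have h' : ¬ (i = p ∧ a = b) := by
        rintro ⟨rfl, rfl⟩; exact h rfl
      simp [toM, hE, Function.update_of_ne h, h']
  have hcont : Continuous fun t : ℝ => Function.update X (i, a) t :=
    continuous_const.update _ continuous_id
  -- `resol` along the line is its value plus `(t - x)` times a continuous function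
  let g : ℝ → ℝ := fun t => -(resol ε (Function.update X (i, a) t) *
    (E * (toM X)ᵀ + toM X * Eᵀ + (t - X (i, a)) • (E * Eᵀ)) * resol ε X) j k
  have hg : Continuous g := by
    have : Continuous fun t : ℝ => resol ε (Function.update X (i, a) t) :=
      continuous_matrix fun p b => (continuous_resol hε p b).comp hcont
    have h2 : Continuous fun t : ℝ =>
        E * (toM X)ᵀ + toM X * Eᵀ + (t - X (i, a)) • (E * Eᵀ) := by fun_prop
    exact (((this.matrix_mul h2).matrix_mul continuous_const).matrix_elem j k).neg
  have hfg : ∀ t, resol ε (Function.update X (i, a) t) j k =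
      resol ε X j k + (t - X (i, a)) * g t := by
    intro t
    have h := congrFun (congrFun (resol_sub hε X (Function.update X (i, a) t)) j) k
    rw [h, Matrix.sub_apply, hup]
    have e : (toM X + (t - X (i, a)) • E) * (toM X + (t - X (i, a)) • E)ᵀ - toM X * (toM X)ᵀ =
        (t - X (i, a)) • (E * (toM X)ᵀ + toM X * Eᵀ + (t - X (i, a)) • (E * Eᵀ)) := by
      rw [Matrix.transpose_add, Matrix.transpose_smul, Matrix.add_mul, Matrix.mul_add,
        Matrix.mul_add]
      simp only [Matrix.smul_mul, Matrix.mul_smul, smul_add]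
      abel
    rw [e]
    simp only [mul_smul_comm, smul_mul_assoc, Matrix.smul_apply, smul_eq_mul, g]
    ring
  have hx : Function.update X (i, a) (X (i, a)) = X := Function.update_eq_self _ _
  have hval : g (X (i, a)) =
      -(resol ε X j i * resX ε X (k, a) + resX ε X (j, a) * resol ε X i k) := by
    simp only [g, hx, sub_self, zero_smul, add_zero]
    rw [mul_add, add_mul, Matrix.add_apply]
    congr 2
    · have : resol ε X * (E * (toM X)ᵀ) * resol ε X =
        (resol ε X * E) * (resol ε X * toM X)ᵀ := by
        rw [Matrix.transpose_mul, resol_transpose]; simp only [Matrix.mul_assoc]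
      rw [this, Matrix.mul_apply, resX_eq, Finset.sum_eq_single a]
      · simp [hE, Matrix.mul_single_apply_same]
      · intro b _ hb
        simp [hE, Matrix.mul_single_apply_of_ne _ _ _ _ _ hb]
      · simp
    · have : resol ε X * (toM X * Eᵀ) * resol ε X =
        (resol ε X * toM X) * (Eᵀ * resol ε X) := by
        simp only [Matrix.mul_assoc]
      rw [this, Matrix.mul_apply, resX_eq, Finset.sum_eq_single a]
      · simp [hE, Matrix.transpose_single]
      · intro b _ hb
        simp [hE, Matrix.transpose_single, hb]
      · simp
  rw [hasDerivAt_iff_tendsto_slope, ← hval]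
  refine ((hg.tendsto (X (i, a))).mono_left nhdsWithin_le_nhds).congr' ?_
  filter_upwards [self_mem_nhdsWithin] with t ht
  have ht' : t - X (i, a) ≠ 0 := sub_ne_zero.2 ht
  rw [slope_def_field, hx, hfg t]
  field_simp
  ring

end Resolvent

/-! ### Stein's identity for the resolvent -/

section Stein

variable {S N : Type*} [Fintype S] [Fintype N] [DecidableEq S] [DecidableEq N] {ε : ℝ}

lemma expBdd_resol (hε : 0 < ε) (i j : S) : ExpBdd fun X : S × N → ℝ => resol ε X i j :=
  (ExpBdd.const (1 / ε)).mono fun X => by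
    rw [abs_of_pos (by positivity : 0 < 1 / ε)]; exact abs_resol_le hε X i j

lemma expBdd_resX (hε : 0 < ε) (q : S × N) : ExpBdd fun X : S × N → ℝ => resX ε X q :=
  ExpBdd.sum _ fun _ _ => (expBdd_resol hε _ _).mul (ExpBdd.coord _)

lemma continuous_resX (hε : 0 < ε) (q : S × N) : Continuous fun X : S × N → ℝ => resX ε X q :=
  continuous_finsetSum _ fun _ _ => (continuous_resol hε _ _).mul (continuous_apply _)

lemma expBdd_sumsq : ExpBdd fun X : S × N → ℝ => ∑ q, X q ^ 2 :=
  ExpBdd.sum _ fun q _ => by simpa only [sq] using (ExpBdd.coord q).mul (ExpBdd.coord q)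

lemma hasDerivAt_update_apply {ι : Type*} [DecidableEq ι] (x : ι → ℝ) (a b : ι) :
    HasDerivAt (fun t => Function.update x a t b) (if b = a then 1 else 0) (x a) := by
  by_cases h : b = a
  · subst h; simpa using hasDerivAt_id' (x b)
  · simpa [h, Function.update_of_ne h] using hasDerivAt_const (x a) (x b)

/-- The diagonal partial derivatives of `X ↦ (X Xᵀ + ε)⁻¹ X`. -/
lemma hasDerivAt_resX (hε : 0 < ε) (X : S × N → ℝ) (i : S) (a : N) :
    HasDerivAt (fun t => resX ε (Function.update X (i, a) t) (i, a))
      (resol ε X i i - resol ε X i i * (∑ k, X (k, a) * resX ε X (k, a)) - resX ε X (i, a) ^ 2)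
      (X (i, a)) := by
  have hx : Function.update X (i, a) (X (i, a)) = X := Function.update_eq_self _ _
  have h := HasDerivAt.fun_sum (u := Finset.univ) fun k (_ : k ∈ Finset.univ) =>
    (hasDerivAt_resol hε X i a i k).fun_mul (hasDerivAt_update_apply X (i, a) (k, a))
  refine h.congr_deriv ?_
  simp only [hx]
  rw [Finset.sum_add_distrib]
  have e1 : ∑ k, resol ε X i k * (if (k, a) = (i, a) then (1 : ℝ) else 0) = resol ε X i i := by
    simp
  have e2 : ∑ k, -(resol ε X i i * resX ε X (k, a) + resX ε X (i, a) * resol ε X i k) * X (k, a) =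
      -(resol ε X i i * (∑ k, X (k, a) * resX ε X (k, a))) - resX ε X (i, a) ^ 2 := by
    have e3 : resX ε X (i, a) ^ 2 = resX ε X (i, a) * ∑ k, resol ε X i k * X (k, a) := by
      rw [sq]; rfl
    rw [e3, Finset.mul_sum, Finset.mul_sum, ← Finset.sum_neg_distrib, ← Finset.sum_sub_distrib]
    exact Finset.sum_congr rfl fun k _ => by ring
  rw [e1, e2]; ring

lemma hasDerivAt_sumsq (X : S × N → ℝ) (q : S × N) :
    HasDerivAt (fun t => ∑ p, Function.update X q t p ^ 2) (2 * X q) (X q) := by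
  have h := HasDerivAt.fun_sum (u := Finset.univ) fun p (_ : p ∈ Finset.univ) =>
    (hasDerivAt_update_apply X q p).fun_pow 2
  refine h.congr_deriv ?_
  simp

/-- The mean of `tr (X Xᵀ)`. -/
lemma integral_sumsq :
    ∫ X, ∑ q, X q ^ 2 ∂(stdG (S × N)) = Fintype.card S * Fintype.card N := by
  have h1 : ∀ q : S × N, ∫ X, X q ^ 2 ∂(stdG (S × N)) = 1 := by
    intro q
    have := gaussian_ibp q (f := fun X : S × N → ℝ => X q) (f' := fun _ => 1) (by fun_prop)
      (by fun_prop) (ExpBdd.coord q) (ExpBdd.const 1) fun x => by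
        simpa using hasDerivAt_update_apply x q q
    simpa [sq] using this
  rw [integral_finsetSum _ fun q _ => ?_]
  · simp [h1]
  · have : ExpBdd fun X : S × N → ℝ => X q ^ 2 := by
      simpa only [sq] using (ExpBdd.coord q).mul (ExpBdd.coord q)
    exact this.integrable (by fun_prop)

/-- Stein's identity for the vector field `tr(X Xᵀ) (X Xᵀ + ε)⁻¹ X` bounds the expectation of
`tr(X Xᵀ) tr (X Xᵀ + ε)⁻¹`. -/
lemma integral_trace_resol_le (hε : 0 < ε) :
    ((Fintype.card N : ℝ) - Fintype.card S - 1) *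
      ∫ X, (∑ q, X q ^ 2) * ∑ i, resol ε X i i ∂(stdG (S × N)) ≤
      Fintype.card S * (Fintype.card S * Fintype.card N) := by
  set n : ℝ := (Fintype.card N : ℝ) with hn
  set s : ℝ := (Fintype.card S : ℝ) with hs
  let f : S × N → (S × N → ℝ) → ℝ := fun q X => (∑ p, X p ^ 2) * resX ε X q
  let f' : S × N → (S × N → ℝ) → ℝ := fun q X => 2 * X q * resX ε X q +
    (∑ p, X p ^ 2) * (resol ε X q.1 q.1 -
      resol ε X q.1 q.1 * (∑ k, X (k, q.2) * resX ε X (k, q.2)) - resX ε X q ^ 2)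
  have cX := fun q => continuous_resX (S := S) (N := N) hε q
  have cR := fun i j => continuous_resol (S := S) (N := N) hε i j
  have bX := fun q => expBdd_resX (S := S) (N := N) hε q
  have bR := fun i j => expBdd_resol (S := S) (N := N) hε i j
  have hfm : ∀ q, Measurable (f q) := fun q => by
    have := cX q
    exact Continuous.measurable (by fun_prop)
  have hfm' : ∀ q, Measurable (f' q) := fun q => by
    have := cX q
    have := cR q.1 q.1
    have : Continuous fun X : S × N → ℝ => ∑ k, X (k, q.2) * resX ε X (k, q.2) :=
      continuous_finsetSum _ fun k _ => (continuous_apply _).mul (cX _)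
    exact Continuous.measurable (by fun_prop)
  have hfb : ∀ q, ExpBdd (f q) := fun q => expBdd_sumsq.mul (bX q)
  have hfb' : ∀ q, ExpBdd (f' q) := fun q => by
    refine (((ExpBdd.const 2).mul (ExpBdd.coord q)).mul (bX q)).add (expBdd_sumsq.mul
      (((bR _ _).sub ((bR _ _).mul (ExpBdd.sum _ fun k _ => (ExpBdd.coord _).mul (bX _)))).sub ?_))
    simpa only [sq] using (bX q).mul (bX q)
  have hibp : ∀ q, ∫ X, X q * f q X ∂(stdG (S × N)) = ∫ X, f' q X ∂(stdG (S × N)) := by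
    intro q
    refine gaussian_ibp q (hfm q) (hfm' q) (hfb q) (hfb' q) fun X => ?_
    have hx : Function.update X q (X q) = X := Function.update_eq_self _ _
    have := (hasDerivAt_sumsq X q).fun_mul (hasDerivAt_resX hε X q.1 q.2)
    simp only [Prod.mk.eta] at this
    rw [hx] at this
    exact this
  have hTm : Measurable fun X : S × N → ℝ => (∑ p, X p ^ 2) * ∑ i, resol ε X i i := by
    have : Continuous fun X : S × N → ℝ => ∑ i, resol ε X i i :=
      continuous_finsetSum _ fun i _ => cR i i
    exact Continuous.measurable (by fun_prop)
  have hTi : Integrable (fun X : S × N → ℝ => (∑ p, X p ^ 2) * ∑ i, resol ε X i i)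
      (stdG (S × N)) :=
    (expBdd_sumsq.mul (ExpBdd.sum _ fun i _ => bR i i)).integrable hTm
  have hfi' : ∀ q, Integrable (f' q) (stdG (S × N)) := fun q => (hfb' q).integrable (hfm' q)
  have hfi : ∀ q, Integrable (fun X => X q * f q X) (stdG (S × N)) := fun q =>
    ((ExpBdd.coord q).mul (hfb q)).integrable ((measurable_pi_apply q).mul (hfm q))
  have hSi : Integrable (fun X : S × N → ℝ => ∑ p, X p ^ 2) (stdG (S × N)) :=
    expBdd_sumsq.integrable (by fun_prop)
  -- pointwise lower bound for the divergence
  have hdiv : ∀ X : S × N → ℝ, (n - s - 1) * ((∑ p, X p ^ 2) * ∑ i, resol ε X i i) ≤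
      ∑ q, f' q X := by
    intro X
    have hT1 := sum_resX_mul hε X
    have hT0 := sum_resX_mul_nonneg hε X
    have hR0 : 0 ≤ ∑ i, resol ε X i i := Finset.sum_nonneg fun i _ => resol_diag_nonneg hε X i
    have hQ : ∑ q, resX ε X q ^ 2 ≤ ∑ i, resol ε X i i := by
      rw [Fintype.sum_prod_type]
      refine Finset.sum_le_sum fun i _ => ?_
      rw [resol_diag hε X i]
      have : 0 ≤ ε * ∑ j, resol ε X i j ^ 2 := by positivity
      linarith
    have hT2 : ∑ q : S × N, resol ε X q.1 q.1 * (∑ k, X (k, q.2) * resX ε X (k, q.2)) =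
        (∑ i, resol ε X i i) * ∑ q, X q * resX ε X q := by
      rw [Fintype.sum_prod_type, Fintype.sum_prod_type_right, Finset.sum_mul]
      exact Finset.sum_congr rfl fun i _ => by rw [Finset.mul_sum]
    have hT3 : ∑ q : S × N, resol ε X q.1 q.1 = n * ∑ i, resol ε X i i := by
      rw [Fintype.sum_prod_type]; simp [Finset.mul_sum, hn]
    have hsum : ∑ q, f' q X = 2 * ∑ q, X q * resX ε X q + (∑ p, X p ^ 2) *
        (n * ∑ i, resol ε X i i - (∑ i, resol ε X i i) * ∑ q, X q * resX ε X q -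
          ∑ q, resX ε X q ^ 2) := by
      simp only [f']
      rw [Finset.sum_add_distrib, ← Finset.mul_sum, Finset.sum_sub_distrib,
        Finset.sum_sub_distrib, hT2, hT3, Finset.mul_sum (a := (2 : ℝ))]
      congr 1
      exact Finset.sum_congr rfl fun q _ => by ring
    rw [hsum]
    have hW : 0 ≤ ∑ p, X p ^ 2 := Finset.sum_nonneg fun _ _ => sq_nonneg _
    rw [hT1] at hT0 ⊢
    rw [← hs] at hT0 ⊢
    generalize ∑ i, resol ε X i i = R at *
    have h1 : (n - s - 1) * R ≤ n * R - R * (s - ε * R) - ∑ q, resX ε X q ^ 2 := by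
      nlinarith [mul_nonneg hε.le (mul_nonneg hR0 hR0)]
    nlinarith [mul_le_mul_of_nonneg_left h1 hW]
  calc _ = ∫ X, (n - s - 1) * ((∑ p, X p ^ 2) * ∑ i, resol ε X i i) ∂(stdG (S × N)) := by
        rw [integral_const_mul]
    _ ≤ ∫ X, ∑ q, f' q X ∂(stdG (S × N)) :=
        integral_mono (hTi.const_mul _) (integrable_finsetSum _ fun q _ => hfi' q) hdiv
    _ = ∫ X, ∑ q, X q * f q X ∂(stdG (S × N)) := by
        rw [integral_finsetSum _ fun q _ => hfi' q, integral_finsetSum _ fun q _ => hfi q]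
        exact Finset.sum_congr rfl fun q _ => (hibp q).symm
    _ ≤ ∫ X, s * ∑ p, X p ^ 2 ∂(stdG (S × N)) := by
        refine integral_mono (integrable_finsetSum _ fun q _ => hfi q) (hSi.const_mul _) fun X => ?_
        have hW : 0 ≤ ∑ p, X p ^ 2 := Finset.sum_nonneg fun _ _ => sq_nonneg _
        have hR0 : 0 ≤ ∑ i, resol ε X i i := Finset.sum_nonneg fun i _ => resol_diag_nonneg hε X i
        have e : ∑ q, X q * f q X = (∑ p, X p ^ 2) * ∑ q, X q * resX ε X q := by
          rw [Finset.mul_sum]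
          exact Finset.sum_congr rfl fun q _ => by simp only [f]; ring
        simp only
        rw [e, sum_resX_mul hε X, ← hs, mul_comm s]
        refine mul_le_mul_of_nonneg_left ?_ hW
        have := mul_nonneg hε.le hR0
        linarith
    _ = s * (s * n) := by rw [integral_const_mul, integral_sumsq]

end Stein

/-! ### The case of two to seven rows -/

section Small

variable {S N : Type*} [Fintype S] [Fintype N] [DecidableEq S] [DecidableEq N] {ε : ℝ}

lemma sumsq_eq (X : S × N → ℝ) : ∑ q, X q ^ 2 = ∑ i, sVals (toM X) i ^ 2 := by
  have h := (Matrix.isHermitian_mul_conjTranspose_self (toM X)).trace_eq_sum_eigenvalues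
  simp only [sVals_sq]
  simp only [RCLike.ofReal_real_eq_id, id] at h
  rw [← h, Fintype.sum_prod_type]
  simp [Matrix.trace, Matrix.mul_apply, toM, sq]

lemma trace_resol (hε : 0 < ε) (X : S × N → ℝ) :
    ∑ i, resol ε X i i = ∑ i, 1 / (sVals (toM X) i ^ 2 + ε) := by
  have hA := Matrix.isHermitian_mul_conjTranspose_self (toM X)
  have hspec := hA.spectral_theorem
  simp only [Unitary.conjStarAlgAut_apply] at hspec
  have hpos : ∀ i, hA.eigenvalues i + ε ≠ 0 := fun i => by
    rw [← sVals_sq]; positivity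
  set U : Matrix S S ℝ := (hA.eigenvectorUnitary : Matrix S S ℝ) with hU
  have hUU : U * star U = 1 := Unitary.coe_mul_star_self _
  have hUU' : star U * U = 1 := Unitary.coe_star_mul_self _
  have hres : resol ε X = U * Matrix.diagonal (fun i => 1 / (hA.eigenvalues i + ε)) * star U := by
    refine Matrix.inv_eq_right_inv ?_
    have h1 : toM X * (toM X)ᵀ + ε • (1 : Matrix S S ℝ) =
        U * Matrix.diagonal (fun i => hA.eigenvalues i + ε) * star U := by
      have h2 : Matrix.diagonal (fun i => hA.eigenvalues i + ε) =
          Matrix.diagonal (RCLike.ofReal ∘ hA.eigenvalues) + ε • (1 : Matrix S S ℝ) := by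
        rw [← Matrix.diagonal_one, ← Matrix.diagonal_smul, Matrix.diagonal_add]
        congr 1; ext i; simp
      rw [h2, mul_add, add_mul, ← hspec, Matrix.mul_smul, Matrix.smul_mul, mul_one, hUU,
        Matrix.conjTranspose_eq_transpose_of_trivial]
    rw [h1]
    calc _ = U * (Matrix.diagonal (fun i => hA.eigenvalues i + ε) * (star U * U) *
          Matrix.diagonal (fun i => 1 / (hA.eigenvalues i + ε))) * star U := by
          simp only [Matrix.mul_assoc]
      _ = 1 := by
          rw [hUU', mul_one, Matrix.diagonal_mul_diagonal]
          have : (fun i => (hA.eigenvalues i + ε) * (1 / (hA.eigenvalues i + ε))) =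
            fun _ => (1 : ℝ) := by
            ext i; rw [mul_one_div_cancel (hpos i)]
          rw [this, Matrix.diagonal_one, mul_one, hUU]
  have htr : ∑ i, resol ε X i i = (resol ε X).trace := rfl
  rw [htr, hres, Matrix.trace_mul_comm, ← Matrix.mul_assoc, hUU', one_mul, Matrix.trace_diagonal]
  exact Finset.sum_congr rfl fun i _ => by rw [sVals_sq]

/-- By the Cauchy–Schwarz inequality, `tr W tr W⁻¹` controls the condition number. -/
lemma cond_sq_le [Nonempty S] (Y : Matrix S N ℝ) (h0 : 0 < sMin Y) :
    (condNum Y + 1 / condNum Y + Fintype.card S - 2) ^ 2 ≤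
      (∑ i, sVals Y i ^ 2) * ∑ i, 1 / sVals Y i ^ 2 := by
  obtain ⟨i, hi⟩ := exists_sMax Y
  obtain ⟨j, hj⟩ := exists_sMin Y
  have hpos : ∀ k, 0 < sVals Y k := fun k => h0.trans_le (sMin_le Y k)
  have hcs := Finset.sum_mul_sq_le_sq_mul_sq Finset.univ (sVals Y)
    (fun k => 1 / sVals Y (Equiv.swap i j k))
  have h1 : ∑ k, (1 / sVals Y (Equiv.swap i j k)) ^ 2 = ∑ k, 1 / sVals Y k ^ 2 := by
    rw [← Equiv.sum_comp (Equiv.swap i j) (fun k => 1 / sVals Y k ^ 2)]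
    exact Finset.sum_congr rfl fun k _ => by rw [div_pow, one_pow]
  rw [h1] at hcs
  have h2 : ∑ k, sVals Y k * (1 / sVals Y (Equiv.swap i j k)) =
      condNum Y + 1 / condNum Y + Fintype.card S - 2 := by
    have hc : condNum Y = sVals Y i / sVals Y j := by rw [hi, hj]; rfl
    have h3 : ∑ k, (sVals Y k * (1 / sVals Y (Equiv.swap i j k)) - 1) =
        condNum Y + 1 / condNum Y - 2 := by
      by_cases hij : i = j
      · subst hij
        have : ∀ k, sVals Y k * (1 / sVals Y k) = 1 := fun k => by
          have := hpos k; field_simp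
        rw [hc, div_self (hpos i).ne']
        simp only [Equiv.swap_self, Equiv.refl_apply, this]
        norm_num
      · rw [← Finset.sum_subset (Finset.subset_univ {i, j}), Finset.sum_pair hij]
        · simp only [Equiv.swap_apply_left, Equiv.swap_apply_right]
          rw [hc]
          have := hpos i
          have := hpos j
          field_simp
          ring
        · intro k _ hk
          simp only [Finset.mem_insert, Finset.mem_singleton, not_or] at hk
          rw [Equiv.swap_apply_of_ne_of_ne hk.1 hk.2]
          have := hpos k
          field_simp
          ring
    rw [Finset.sum_sub_distrib] at h3
    simp at h3 ⊢
    linarith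
  rw [h2] at hcs
  exact hcs

/-- Tangent line bound for the square of `x + 1 / x + t` at `x = r`. -/
lemma tangent_bound {κ r t : ℝ} (hκ : 0 < κ) (hr : 1 < r) (ht : 0 ≤ t) :
    2 * (r + 1 / r + t) * (1 - 1 / r ^ 2) * κ + (r + 1 / r + t) ^ 2 ≤
      (κ + 1 / κ + t) ^ 2 + 2 * (r + 1 / r + t) * (1 - 1 / r ^ 2) * r := by
  have hr0 : 0 < r := by linarith
  have h1 : 0 ≤ (κ + 1 / κ) - (r + 1 / r) - (1 - 1 / r ^ 2) * (κ - r) := by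
    have : (κ + 1 / κ) - (r + 1 / r) - (1 - 1 / r ^ 2) * (κ - r) = (κ - r) ^ 2 / (κ * r ^ 2) := by
      field_simp; ring
    rw [this]; positivity
  have hc : 0 < r + 1 / r + t := by positivity
  generalize 1 / r ^ 2 = z at *
  generalize 1 / r = w at *
  generalize 1 / κ = y at *
  nlinarith [mul_nonneg hc.le h1, sq_nonneg ((κ + y + t) - (r + w + t))]

/-- The numerical inequality behind the case of at most seven rows; with `m = M - 1` the quantity
`s + 4 / m` is `r + 1 / r + s - 2` for `r = (√M + 1) / (√M - 1)`. -/
lemma small_numeric {s m : ℝ} (hs : 2 ≤ s) (hs7 : s ≤ 7) (hm : 1 ≤ m) :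
    s * (s * ((m + 1) * s)) ≤ ((m + 1) * s - s - 1) * (s + 4 / m) ^ 2 := by
  have hm0 : 0 < m := by linarith
  have h : ((m + 1) * s - s - 1) * (s + 4 / m) ^ 2 - s * (s * ((m + 1) * s)) =
      (m ^ 2 * s ^ 2 * (7 - s) + 8 * (m * s) - 16) / m ^ 2 := by
    field_simp; ring
  have h2 : 2 ≤ m * s := by nlinarith
  have h3 : 0 ≤ m ^ 2 * s ^ 2 * (7 - s) := by
    have : 0 ≤ 7 - s := by linarith
    positivity
  have : 0 ≤ (m ^ 2 * s ^ 2 * (7 - s) + 8 * (m * s) - 16) / m ^ 2 :=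
    div_nonneg (by linarith) (by positivity)
  linarith

lemma ae_sumsq_pos [Nonempty S] [Nonempty N] :
    ∀ᵐ X ∂(stdG (S × N)), 0 < ∑ q, X q ^ 2 := by
  let q : S × N := Classical.arbitrary _
  have : ∀ᵐ X ∂(stdG (S × N)), X q ≠ 0 := by
    rw [ae_iff]
    simp only [not_not]
    have : NullSingletonClass (gaussianReal 0 1) := nullSingletonClass_gaussianReal one_ne_zero
    exact Measure.pi_hyperplane (fun _ : S × N => gaussianReal 0 1) q 0
  filter_upwards [this] with X hX
  exact Finset.sum_pos' (fun _ _ => sq_nonneg _) ⟨q, Finset.mem_univ _, by positivity⟩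

/-- The bound for between two and seven rows. -/
lemma lintegral_condNum_small [Nonempty S] [Nonempty N] {s M : ℝ}
    (hS : (Fintype.card S : ℝ) = s) (hN : (Fintype.card N : ℝ) = M * s) (hs : 2 ≤ s)
    (hs7 : s ≤ 7) (hM : 2 ≤ M) :
    ∫⁻ X, ENNReal.ofReal (condNum (toM X)) ∂(stdG (S × N)) ≤
      ENNReal.ofReal ((√M + 1) / (√M - 1)) := by
  have hx : 1 < √M := by rw [Real.lt_sqrt (by norm_num)]; linarith
  have hx2 : √M ^ 2 = M := Real.sq_sqrt (by linarith)
  set r := (√M + 1) / (√M - 1) with hr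
  have hr1 : 1 < r := by rw [hr, lt_div_iff₀ (by linarith)]; linarith
  have hr0 : 0 < r := by linarith
  set c := r + 1 / r + (s - 2) with hc
  have hcM : c = s + 4 / (M - 1) := by
    have h1 : √M - 1 ≠ 0 := by linarith
    have h2 : √M + 1 ≠ 0 := by linarith
    have h3 : M - 1 = (√M - 1) * (√M + 1) := by linear_combination -hx2
    rw [hc, hr, h3]; field_simp; ring
  have hc0 : 0 < c := by rw [hc]; have : 0 ≤ s - 2 := by linarith
                         positivity
  set D := 2 * c * (1 - 1 / r ^ 2) with hD
  have hD0 : 0 < D := by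
    have : 1 / r ^ 2 < 1 := by rw [div_lt_one (by positivity)]; nlinarith
    exact mul_pos (by positivity) (by linarith)
  -- regularised versions of `tr W tr W⁻¹`
  let ε : ℕ → ℝ := fun m => 1 / ((m : ℝ) + 1)
  have hε : ∀ m, 0 < ε m := fun m => by positivity
  let T : ℕ → (S × N → ℝ) → ENNReal := fun m X =>
    ENNReal.ofReal ((∑ q, X q ^ 2) * ∑ i, resol (ε m) X i i)
  have hTm : ∀ m, Measurable (T m) := fun m => by
    have : Continuous fun X : S × N → ℝ => ∑ i, resol (ε m) X i i :=
      continuous_finsetSum _ fun i _ => continuous_resol (hε m) i i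
    exact ENNReal.measurable_ofReal.comp (Continuous.measurable (by fun_prop))
  have hTmono : Monotone T := by
    refine monotone_nat_of_le_succ fun m X => ENNReal.ofReal_le_ofReal ?_
    rw [trace_resol (hε _), trace_resol (hε _)]
    refine mul_le_mul_of_nonneg_left (Finset.sum_le_sum fun i _ => ?_)
      (Finset.sum_nonneg fun _ _ => sq_nonneg _)
    refine one_div_le_one_div_of_le (by have := hε (m + 1); positivity) ?_
    have : ε (m + 1) ≤ ε m := one_div_le_one_div_of_le (by positivity) (by push_cast; linarith)
    linarith
  have hTint : ∫⁻ X, ⨆ m, T m X ∂(stdG (S × N)) ≤ ENNReal.ofReal (c ^ 2) := by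
    rw [lintegral_iSup hTm hTmono]
    refine iSup_le fun m => ?_
    have h1 := integral_trace_resol_le (S := S) (N := N) (hε m)
    have hi : Integrable (fun X : S × N → ℝ => (∑ q, X q ^ 2) * ∑ i, resol (ε m) X i i)
        (stdG (S × N)) := by
      have : Continuous fun X : S × N → ℝ => ∑ i, resol (ε m) X i i :=
        continuous_finsetSum _ fun i _ => continuous_resol (hε m) i i
      exact (expBdd_sumsq.mul (ExpBdd.sum _ fun i _ => expBdd_resol (hε m) i i)).integrable
        (Continuous.measurable (by fun_prop))
    simp only [T]
    rw [← ofReal_integral_eq_lintegral_ofReal hi (Eventually.of_forall fun X =>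
      mul_nonneg (Finset.sum_nonneg fun _ _ => sq_nonneg _)
        (Finset.sum_nonneg fun i _ => resol_diag_nonneg (hε m) X i))]
    refine ENNReal.ofReal_le_ofReal ?_
    have h2 := small_numeric hs hs7 (m := M - 1) (by linarith)
    rw [sub_add_cancel, ← hcM] at h2
    rw [hS, hN] at h1
    exact le_of_mul_le_mul_left (h1.trans h2) (by nlinarith)
  -- the pointwise inequality
  have hpt : ∀ᵐ X ∂(stdG (S × N)),
      ENNReal.ofReal D * ENNReal.ofReal (condNum (toM X)) + ENNReal.ofReal (c ^ 2) ≤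
        (⨆ m, T m X) + ENNReal.ofReal (D * r) := by
    filter_upwards [ae_sumsq_pos] with X hX
    obtain ⟨j, hj⟩ := exists_sMin (toM X)
    have hmin0 : 0 ≤ sMin (toM X) := by rw [← hj]; exact sVals_nonneg _ _
    rcases hmin0.eq_or_lt with h0 | h0
    · -- a singular matrix: the condition number takes the junk value `0`, but `T` blows up
      have : condNum (toM X) = 0 := by unfold condNum; rw [← h0, div_zero]
      rw [this, ENNReal.ofReal_zero, mul_zero, zero_add]
      refine le_add_right ?_
      obtain ⟨m, hm⟩ := exists_nat_gt (c ^ 2 / ∑ q, X q ^ 2)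
      refine le_iSup_of_le m (ENNReal.ofReal_le_ofReal ?_)
      rw [trace_resol (hε m)]
      have h1 : 1 / (sVals (toM X) j ^ 2 + ε m) ≤ ∑ i, 1 / (sVals (toM X) i ^ 2 + ε m) :=
        Finset.single_le_sum (f := fun i => 1 / (sVals (toM X) i ^ 2 + ε m))
          (fun i _ => by have := hε m; positivity) (Finset.mem_univ j)
      rw [hj, ← h0] at h1
      have h2 : 1 / ((0 : ℝ) ^ 2 + ε m) = m + 1 := by simp [ε]
      rw [h2] at h1
      rw [div_lt_iff₀ hX] at hm
      nlinarith
    · have hpos : ∀ k, 0 < sVals (toM X) k := fun k => h0.trans_le (sMin_le _ k)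
      have hlim : Tendsto (fun m => T m X) atTop (𝓝 (ENNReal.ofReal
          ((∑ q, X q ^ 2) * ∑ i, 1 / (sVals (toM X) i ^ 2 + 0)))) := by
        have hε0 : Tendsto ε atTop (𝓝 0) := tendsto_one_div_add_atTop_nhds_zero_nat
        simp only [T, fun m => trace_resol (hε m) X]
        refine ENNReal.tendsto_ofReal (Tendsto.const_mul _ (tendsto_finsetSum _ fun i _ => ?_))
        refine Tendsto.div tendsto_const_nhds (tendsto_const_nhds.add hε0) ?_
        have := hpos i; positivity
      have hle := le_of_tendsto' hlim fun m => le_iSup (fun m => T m X) m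
      simp only [add_zero] at hle
      have hκ : 0 < condNum (toM X) := by
        refine div_pos ?_ h0
        exact (hpos j).trans_le (le_sMax _ j)
      have hcs := cond_sq_le (toM X) h0
      rw [← sumsq_eq, hS, add_sub_assoc] at hcs
      have htan := tangent_bound hκ hr1 (by linarith : 0 ≤ s - 2)
      rw [← hc, ← hD] at htan
      rw [← ENNReal.ofReal_mul hD0.le, ← ENNReal.ofReal_add (by positivity) (by positivity)]
      calc _ ≤ ENNReal.ofReal ((∑ q, X q ^ 2) * ∑ i, 1 / sVals (toM X) i ^ 2 + D * r) :=
            ENNReal.ofReal_le_ofReal (by linarith)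
        _ ≤ _ := by
            rw [ENNReal.ofReal_add (by positivity) (by positivity)]
            gcongr
  have hintegral := lintegral_mono_ae hpt
  rw [lintegral_add_right _ measurable_const, lintegral_add_right _ measurable_const,
    lintegral_const_mul' _ _ ENNReal.ofReal_ne_top] at hintegral
  simp only [lintegral_const, measure_univ, mul_one] at hintegral
  have h3 := hintegral.trans (add_le_add_left hTint _)
  rw [add_comm (ENNReal.ofReal (c ^ 2))] at h3
  have h4 := (ENNReal.add_le_add_iff_right ENNReal.ofReal_ne_top).1 h3
  rw [ENNReal.ofReal_mul hD0.le] at h4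
  exact (ENNReal.mul_le_mul_iff_right (by simpa using hD0) ENNReal.ofReal_ne_top).1 h4

end Small

/-! ### Measurability and transfer to the probability space -/

section Measurability

variable {S N : Type*} [Fintype S] [Fintype N] [DecidableEq S]

/-- Expansion of `‖Xᵀ u‖²` in an eigenbasis of `X Xᵀ`: a convex combination of the squared
singular values when `u` is a unit vector. -/
lemma l2_tmul_sq_expand (X : S × N → ℝ) (u : S → ℝ) (hu : ∑ a, u a ^ 2 = 1) :
    ∃ c : S → ℝ, ∑ i, c i ^ 2 = 1 ∧
      l2 (tmul X u) ^ 2 = ∑ i, sVals (toM X) i ^ 2 * c i ^ 2 := by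
  set hA := Matrix.isHermitian_mul_conjTranspose_self (toM X) with hAdef
  set b := hA.eigenvectorBasis with hb
  let u' : EuclideanSpace ℝ S := WithLp.toLp 2 u
  refine ⟨fun i => inner ℝ (b i) u', ?_, ?_⟩
  · rw [b.sum_sq_inner_right, EuclideanSpace.norm_sq_eq]
    simpa [u'] using hu
  · have h2 : u ⬝ᵥ ((toM X * (toM X)ᴴ) *ᵥ u) =
        inner ℝ u' (WithLp.toLp 2 ((toM X * (toM X)ᴴ) *ᵥ u) : EuclideanSpace ℝ S) := by
      rw [EuclideanSpace.inner_eq_star_dotProduct, dotProduct_comm]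
      simp [u']
    rw [l2_tmul_sq, h2, ← b.sum_inner_mul_inner]
    refine Finset.sum_congr rfl fun i _ => ?_
    have h3 : inner ℝ (b i) (WithLp.toLp 2 ((toM X * (toM X)ᴴ) *ᵥ u) : EuclideanSpace ℝ S) =
        hA.eigenvalues i * inner ℝ (b i) u' := by
      have hmul := hA.mulVec_eigenvectorBasis i
      have hT : (toM X * (toM X)ᴴ)ᵀ = toM X * (toM X)ᴴ := by simp
      rw [EuclideanSpace.inner_eq_star_dotProduct, EuclideanSpace.inner_eq_star_dotProduct]
      simp only [star_trivial, u']
      rw [dotProduct_comm, Matrix.dotProduct_mulVec, ← Matrix.mulVec_transpose, hT, hmul,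
        smul_dotProduct, smul_eq_mul, dotProduct_comm]
    rw [h3, sVals_sq, real_inner_comm]
    ring

lemma l2_tmul_le_sMax (X : S × N → ℝ) (u : S → ℝ) (hu : ∑ a, u a ^ 2 = 1) :
    l2 (tmul X u) ≤ sMax (toM X) := by
  obtain ⟨c, hc, h⟩ := l2_tmul_sq_expand X u hu
  have : Nonempty S := by
    by_contra hS
    rw [not_nonempty_iff] at hS
    simp at hu
  obtain ⟨i, hi⟩ := exists_sMax (toM X)
  have h0 : 0 ≤ sMax (toM X) := hi ▸ sVals_nonneg _ _
  refine le_of_sq_le_sq ?_ h0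
  rw [h]
  calc _ ≤ ∑ i, sMax (toM X) ^ 2 * c i ^ 2 := by
        gcongr with i
        · exact sVals_nonneg _ _
        · exact le_sMax _ i
    _ = _ := by rw [← Finset.mul_sum, hc, mul_one]

lemma sMin_le_l2_tmul (X : S × N → ℝ) (u : S → ℝ) (hu : ∑ a, u a ^ 2 = 1) :
    sMin (toM X) ≤ l2 (tmul X u) := by
  obtain ⟨c, hc, h⟩ := l2_tmul_sq_expand X u hu
  have : Nonempty S := by
    by_contra hS
    rw [not_nonempty_iff] at hS
    simp at hu
  obtain ⟨i, hi⟩ := exists_sMin (toM X)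
  have h0 : 0 ≤ sMin (toM X) := hi ▸ sVals_nonneg _ _
  refine le_of_sq_le_sq ?_ (l2_nonneg _)
  rw [h]
  calc _ = ∑ i, sMin (toM X) ^ 2 * c i ^ 2 := by rw [← Finset.mul_sum, hc, mul_one]
    _ ≤ _ := by
        gcongr with i
        exact sMin_le _ i

/-- The extreme singular values are the supremum and the infimum of `|Xᵀ u|` over a dense sequence of
unit vectors `u`, hence measurable. -/
lemma measurable_condNum [Nonempty S] :
    Measurable fun X : S × N → ℝ => condNum (toM X) := by
  obtain ⟨u, hu, hud⟩ := exists_dense_sphere S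
  have hcu : ∀ X : S × N → ℝ, Continuous fun w : S → ℝ => l2 (tmul X w) := fun X => by
    refine continuous_l2.comp ?_
    unfold tmul; fun_prop
  have hcX : ∀ i, Measurable fun X : S × N → ℝ => l2 (tmul X (u i)) := fun i =>
    (continuous_l2.comp (continuous_tmul (u i))).measurable
  refine Measurable.div (measurable_of_Iic fun c => ?_) (measurable_of_Ici fun c => ?_)
  · have : (fun X : S × N → ℝ => sMax (toM X)) ⁻¹' Set.Iic c =
        ⋂ i, (fun X : S × N → ℝ => l2 (tmul X (u i))) ⁻¹' Set.Iic c := by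
      ext X
      simp only [Set.mem_preimage, Set.mem_Iic, Set.mem_iInter]
      refine ⟨fun h i => (l2_tmul_le_sMax X _ (hu i)).trans h, fun h => ?_⟩
      by_contra! hlt
      obtain ⟨i₀, hi₀⟩ := exists_sMax (toM X)
      obtain ⟨u₀, hu₀, hX⟩ := exists_unit_sVals X i₀
      rw [← hi₀, ← hX] at hlt
      obtain ⟨i, hi⟩ := hud u₀ hu₀ _ (isOpen_Ioi.preimage (hcu X)) hlt
      exact (h i).not_gt hi
    rw [this]
    exact MeasurableSet.iInter fun i => hcX i measurableSet_Iic
  · have : (fun X : S × N → ℝ => sMin (toM X)) ⁻¹' Set.Ici c =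
        ⋂ i, (fun X : S × N → ℝ => l2 (tmul X (u i))) ⁻¹' Set.Ici c := by
      ext X
      simp only [Set.mem_preimage, Set.mem_Ici, Set.mem_iInter]
      refine ⟨fun h i => h.trans (sMin_le_l2_tmul X _ (hu i)), fun h => ?_⟩
      by_contra! hlt
      obtain ⟨i₀, hi₀⟩ := exists_sMin (toM X)
      obtain ⟨u₀, hu₀, hX⟩ := exists_unit_sVals X i₀
      rw [← hi₀, ← hX] at hlt
      obtain ⟨i, hi⟩ := hud u₀ hu₀ _ (isOpen_Iio.preimage (hcu X)) hlt
      exact (h i).not_gt hi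
    rw [this]
    exact MeasurableSet.iInter fun i => hcX i measurableSet_Ici

lemma condNum_nonneg [Nonempty S] (Y : Matrix S N ℝ) : 0 ≤ condNum Y := by
  obtain ⟨i, hi⟩ := exists_sMax Y
  obtain ⟨j, hj⟩ := exists_sMin Y
  exact div_nonneg (hi ▸ sVals_nonneg _ _) (hj ▸ sVals_nonneg _ _)

lemma condNum_le_one [Unique S] (Y : Matrix S N ℝ) : condNum Y ≤ 1 := by
  obtain ⟨i, hi⟩ := exists_sMax Y
  obtain ⟨j, hj⟩ := exists_sMin Y
  unfold condNum
  rw [← hi, ← hj, Subsingleton.elim i j]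
  exact div_self_le_one _

end Measurability

section Transfer

/-- A standard Gaussian vector stays standard Gaussian after relabelling its coordinates. -/
lemma map_reindex {ι κ Ω : Type*} [Fintype ι] [Fintype κ] [MeasurableSpace Ω] {μ : Measure Ω}
    (e : κ ≃ ι) {f : Ω → ι → ℝ} (hf : Measurable f)
    (h : μ.map f = Measure.pi fun _ : ι => gaussianReal 0 1) :
    μ.map (fun ω k => f ω (e k)) = stdG κ := by
  have h1 := (measurePreserving_piCongrLeft (fun _ : κ => gaussianReal 0 1) e.symm).map_eq
  have h2 : (fun ω k => f ω (e k)) =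
      (MeasurableEquiv.piCongrLeft (fun _ : κ => ℝ) e.symm) ∘ f := by
    funext ω k
    have := MeasurableEquiv.piCongrLeft_apply_apply (β := fun _ : κ => ℝ) e.symm (f ω) (e k)
    simpa using this.symm
  rw [h2, ← Measure.map_map (MeasurableEquiv.measurable _) hf, h]
  exact h1

end Transfer

/-- For mutually independent random `s × s` matrices `H₁, …, H_M`, each
with i.i.d. standard Gaussian entries, and `M ≥ 2`,
`E[cond((H₁ | … | H_M))] ≤ (√(Ms) + √s)/(√(Ms) − √s)`. -/
theorem expected_cond_blockRow_gaussian_square {s : ℕ} (hs : 0 < s) {M : ℕ} (hM : 2 ≤ M)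
    {Ω : Type*} [MeasureSpace Ω] [IsProbabilityMeasure (ℙ : Measure Ω)]
    (H : Ω → Fin M → Fin s → Fin s → ℝ) (hHmeas : Measurable H)
    (hHlaw : Measure.map (fun ω (q : Fin M × Fin s × Fin s) => H ω q.1 q.2.1 q.2.2) ℙ =
      Measure.pi fun _ : Fin M × Fin s × Fin s => gaussianReal 0 1) :
    ∫ ω, condNum (blockRow M fun m => Matrix.of (H ω m)) ∂ℙ
      ≤ (Real.sqrt ((M : ℝ) * s) + Real.sqrt s) /
        (Real.sqrt ((M : ℝ) * s) - Real.sqrt s) := by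
  have hs0 : (0 : ℝ) < s := by exact_mod_cast hs
  have hM2 : (2 : ℝ) ≤ M := by exact_mod_cast hM
  have : Nonempty (Fin s) := ⟨⟨0, hs⟩⟩
  have : Nonempty (Fin M × Fin s) := ⟨⟨⟨0, by omega⟩, ⟨0, hs⟩⟩⟩
  have hx : 1 < √(M : ℝ) := by rw [Real.lt_sqrt (by norm_num)]; linarith
  have hss : 0 < √(s : ℝ) := Real.sqrt_pos.2 hs0
  have hr : (√((M : ℝ) * s) + √s) / (√((M : ℝ) * s) - √s) = (√M + 1) / (√M - 1) := by
    rw [Real.sqrt_mul (by positivity)]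
    rw [show √(M : ℝ) * √(s : ℝ) + √s = (√M + 1) * √s by ring,
      show √(M : ℝ) * √(s : ℝ) - √s = (√M - 1) * √s by ring,
      mul_div_mul_right _ _ hss.ne']
  have hr1 : 1 ≤ (√(M : ℝ) + 1) / (√M - 1) := by
    rw [le_div_iff₀ (by linarith)]; linarith
  -- the block matrix is `toM` of a standard Gaussian vector
  let e : Fin s × (Fin M × Fin s) ≃ Fin M × Fin s × Fin s :=
    { toFun := fun q => (q.2.1, q.1, q.2.2)
      invFun := fun q => (q.2.1, q.1, q.2.2)
      left_inv := fun _ => rfl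
      right_inv := fun _ => rfl }
  let F : Ω → Fin M × Fin s × Fin s → ℝ := fun ω q => H ω q.1 q.2.1 q.2.2
  have hF : Measurable F := by
    refine measurable_pi_lambda _ fun q => ?_
    exact (measurable_pi_apply q.2.2).comp ((measurable_pi_apply q.2.1).comp
      ((measurable_pi_apply q.1).comp hHmeas))
  have hG : Measurable fun ω k => F ω (e k) :=
    measurable_pi_lambda _ fun k => (measurable_pi_apply (e k)).comp hF
  have hmap := map_reindex e hF hHlaw
  have hcond : ∀ ω, condNum (blockRow M fun m => Matrix.of (H ω m)) =
      condNum (toM fun k => F ω (e k)) := fun ω => rfl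
  have hbound : ∫⁻ X, ENNReal.ofReal (condNum (toM X)) ∂(stdG (Fin s × (Fin M × Fin s))) ≤
      ENNReal.ofReal ((√(M : ℝ) + 1) / (√M - 1)) := by
    rcases Nat.lt_or_ge s 2 with h1 | h2
    · obtain rfl : s = 1 := by omega
      calc _ ≤ ∫⁻ X, 1 ∂(stdG (Fin 1 × (Fin M × Fin 1))) :=
            lintegral_mono fun X => by
              rw [ENNReal.ofReal_le_one]; exact condNum_le_one _
        _ ≤ _ := by
            rw [lintegral_const, measure_univ, mul_one, ENNReal.one_le_ofReal]
            exact hr1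
    rcases Nat.lt_or_ge s 8 with h7 | h8
    · exact lintegral_condNum_small (s := s) (by simp) (by simp) (by exact_mod_cast h2)
        (by exact_mod_cast (by omega : s ≤ 7)) hM2
    · rw [← hr]
      exact lintegral_condNum_large (by simp) (by simp) (by exact_mod_cast h8) (by gcongr)
  rw [hr]
  simp only [hcond]
  have hmeas : Measurable fun ω => condNum (toM fun k => F ω (e k)) :=
    measurable_condNum.comp hG
  rw [integral_eq_lintegral_of_nonneg_ae (Eventually.of_forall fun ω => condNum_nonneg _)
    hmeas.aestronglyMeasurable]
  refine ENNReal.toReal_le_of_le_ofReal (by linarith) ?_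
  rw [← hmap, lintegral_map measurable_condNum.ennreal_ofReal hG] at hbound
  exact hbound
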